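/- arXiv:1905.06459 — 3 statements merged into one kernel-verified Lean document; each statement's English description precedes it below -/
import Mathlib

section
/- Let H be a triple system TS(n, λ) with n ≥ 3 and λ ≥ 1. Then H is eulerian if and only if H is not a TS(3, 1) (equivalently, if and only if (n, λ) ≠ (3, 1)). -/
/-- A closed walk of length `k` in a hypergraph on vertex type `V` whose edges are
finite sets of vertices: an alternating sequence of vertices and edges such that
consecutive vertices are distinct and both lie in the interposed edge, and the
first vertex equals the last. -/
def IsClosedWalk {V : Type} (k : ℕ) (v : Fin (k + 1) → V) (e : Fin k → Finset V) : Prop :=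
  v 0 = v (Fin.last k) ∧
    ∀ i : Fin k, v i.castSucc ≠ v i.succ ∧ v i.castSucc ∈ e i ∧ v i.succ ∈ e i

/-- The multiset of edges traversed by a walk (with multiplicity). -/
def walkEdges {V : Type} {k : ℕ} (e : Fin k → Finset V) : Multiset (Finset V) :=
  Multiset.ofList (List.ofFn e)

/-- A hypergraph, given by its edge multiset `E` over vertex type `V`, is eulerian if it
admits a closed walk whose multiset of traversed edges is exactly `E`, i.e. a closed
strict trail traversing every edge exactly once (a trivial walk works iff `E = 0`,
matching the convention that a trivial walk is an Euler tour of an edgeless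
hypergraph). -/
def IsEulerian {V : Type} (E : Multiset (Finset V)) : Prop :=
  ∃ (k : ℕ) (v : Fin (k + 1) → V) (e : Fin k → Finset V),
    IsClosedWalk k v e ∧ walkEdges e = E

/-- A triple system `TS(n, λ)` on vertex type `V` (of order `n = |V|`): a nonempty
3-uniform edge multiset in which every pair of distinct vertices lies together in
exactly `lam` edges (counted with multiplicity). -/
def IsTripleSystem {V : Type} [DecidableEq V] (E : Multiset (Finset V)) (lam : ℕ) : Prop :=
  E ≠ 0 ∧ (∀ f ∈ E, f.card = 3) ∧
    ∀ u w : V, u ≠ w → Multiset.card (E.filter fun f => u ∈ f ∧ w ∈ f) = lam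

/-!
An Euler tour selects two vertices of every triple, that is, omits one. It therefore exists as soon
as the omitted vertices can be chosen so that the remaining pairs form a connected multigraph with
even degrees. An even choice exists because flips, which move the omission inside a triple from one
vertex to another, change exactly two parities and can be routed independently by Hall's theorem.
Flips along a closed walk preserve all parities. Take an even choice with a component whose edge set
is maximal. If some edge lies outside this component, a flip along a closed walk of length at most 4,
chosen through a non-cut vertex or so that the lost pairs are replaced by detours, enlarges it.
-/

namespace TripleSystem

open Finset

variable {V ι : Type*}

section EulerTrail

/-- The 2-section of a family of vertex sets: two vertices are adjacent when some member of the
family contains both. For a family of pairs this is the underlying simple graph of a multigraph. -/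
def twoSection (P : ι → Finset V) : SimpleGraph V where
  Adj u v := u ≠ v ∧ ∃ i, u ∈ P i ∧ v ∈ P i
  symm := ⟨fun _ _ ⟨hne, i, hu, hv⟩ ↦ ⟨hne.symm, i, hv, hu⟩⟩
  loopless := ⟨fun _ h ↦ h.1 rfl⟩

/-- `IsTrail P x l y`: the indices in `l` name, in this order, the edges of a walk from `x` to `y`.
Distinctness of the edges is expressed separately, by `l.Nodup`. -/
def IsTrail (P : ι → Finset V) : V → List ι → V → Prop
  | x, [], y => x = y
  | x, i :: l, y => ∃ z, x ≠ z ∧ x ∈ P i ∧ z ∈ P i ∧ IsTrail P z l y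

variable {P : ι → Finset V} {x y z : V} {l l' : List ι} {i : ι}

lemma IsTrail.singleton (hne : x ≠ y) (hx : x ∈ P i) (hy : y ∈ P i) : IsTrail P x [i] y :=
  ⟨y, hne, hx, hy, rfl⟩

lemma isTrail_append : IsTrail P x (l ++ l') z ↔ ∃ y, IsTrail P x l y ∧ IsTrail P y l' z := by
  induction l generalizing x with
  | nil => simp [IsTrail]
  | cons i l ih =>
    simp only [List.cons_append, IsTrail, ih]
    grind

lemma IsTrail.append (h : IsTrail P x l y) (h' : IsTrail P y l' z) : IsTrail P x (l ++ l') z :=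
  isTrail_append.2 ⟨y, h, h'⟩

lemma IsTrail.mono {Q : ι → Finset V} (hPQ : ∀ i, P i ⊆ Q i) (h : IsTrail P x l y) :
    IsTrail Q x l y := by
  induction l generalizing x with
  | nil => exact h
  | cons i l ih =>
    obtain ⟨z, hne, hx, hz, htail⟩ := h
    exact ⟨z, hne, hPQ i hx, hPQ i hz, ih htail⟩

lemma IsTrail.exists_walk (h : IsTrail P x l y) :
    ∃ v : Fin (l.length + 1) → V, v 0 = x ∧ v (Fin.last _) = y ∧ ∀ k : Fin l.length,
      v k.castSucc ≠ v k.succ ∧ v k.castSucc ∈ P (l.get k) ∧ v k.succ ∈ P (l.get k) := by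
  induction l generalizing x with
  | nil => exact ⟨fun _ ↦ x, rfl, h, fun k ↦ k.elim0⟩
  | cons i l ih =>
    obtain ⟨z, hne, hx, hz, htail⟩ := h
    obtain ⟨v, rfl, hlast, hv⟩ := ih htail
    exact ⟨Fin.cons x v, rfl, hlast, Fin.cases ⟨hne, hx, hz⟩ hv⟩

lemma mem_of_reachable {G : SimpleGraph V} {Z : Set V} (hZ : ∀ a b, G.Adj a b → a ∈ Z → b ∈ Z)
    (h : G.Reachable x y) (hx : x ∈ Z) : y ∈ Z := by
  obtain ⟨walk⟩ := h
  induction walk with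
  | nil => exact hx
  | cons hadj _ ih => exact ih (hZ _ _ hadj hx)

lemma eq_or_eq_of_card_eq_two {s : Finset V} (hs : #s = 2) (hx : x ∈ s) (hy : y ∈ s) (hne : x ≠ y)
    (hz : z ∈ s) : z = x ∨ z = y := by
  classical
  obtain ⟨a, b, -, rfl⟩ := card_eq_two.1 hs
  grind

lemma IsTrail.exists_perm_rotate (hP : ∀ i, #(P i) = 2) (h : IsTrail P x l x) (hi : i ∈ l)
    (hy : y ∈ P i) : ∃ l', l'.Perm l ∧ IsTrail P y l' y := by
  obtain ⟨l₁, l₂, rfl⟩ := List.append_of_mem hi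
  obtain ⟨a, h₁, b, hne, ha, hb, h₂⟩ := isTrail_append.1 h
  obtain rfl | rfl := eq_or_eq_of_card_eq_two (hP i) ha hb hne hy
  · exact ⟨i :: l₂ ++ l₁, List.perm_append_comm, IsTrail.append ⟨b, hne, ha, hb, h₂⟩ h₁⟩
  · refine ⟨l₂ ++ l₁ ++ [i], ?_, (h₂.append h₁).append (.singleton hne ha hb)⟩
    exact List.perm_append_comm.trans (List.perm_append_comm (l₁ := i :: l₂))

lemma exists_longest_nodup_trail [Finite ι] [Nonempty V] (P : ι → Finset V) :
    ∃ x l y, IsTrail P x l y ∧ l.Nodup ∧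
      ∀ x' l' y', IsTrail P x' l' y' → l'.Nodup → l'.length ≤ l.length := by
  have := Fintype.ofFinite ι
  let lengths : Set ℕ := {m | ∃ x l y, IsTrail P x l y ∧ l.Nodup ∧ l.length = m}
  have hbdd : BddAbove lengths :=
    ⟨Fintype.card ι, by rintro _ ⟨x, l, y, -, hl, rfl⟩; exact hl.length_le_card⟩
  have hne : lengths.Nonempty := ⟨0, Classical.arbitrary V, [], _, rfl, List.nodup_nil, rfl⟩
  obtain ⟨x, l, y, h, hl, hlen⟩ := Nat.sSup_mem hne hbdd
  exact ⟨x, l, y, h, hl, fun x' l' y' h' hl' ↦ hlen ▸ le_csSup hbdd ⟨x', l', y', h', hl', rfl⟩⟩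

variable [DecidableEq V]

lemma IsTrail.even_countP_mem_iff (hP : ∀ i, #(P i) = 2) (h : IsTrail P x l y) (v : V) :
    Even (l.countP (v ∈ P ·)) ↔ (v = x ↔ v = y) := by
  induction l generalizing x with
  | nil => obtain rfl : x = y := h; simp
  | cons i l ih =>
    obtain ⟨z, hne, hx, hz, htail⟩ := h
    have hmem : v ∈ P i ↔ v = x ∨ v = z :=
      ⟨eq_or_eq_of_card_eq_two (hP i) hx hz hne, by rintro (rfl | rfl) <;> assumption⟩
    have hiff := ih htail
    rw [List.countP_cons]
    by_cases hv : v ∈ P i <;> simp only [hv, decide_true, decide_false, if_true, Bool.false_eq_true,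
      if_false, add_zero, Nat.even_add_one] <;> grind

variable [Fintype ι]

theorem exists_euler_trail (hP : ∀ i, #(P i) = 2) (heven : ∀ v, Even #{i | v ∈ P i})
    (hconn : ∀ i j, ∀ u ∈ P i, ∀ v ∈ P j, (twoSection P).Reachable u v) [Nonempty V] :
    ∃ x l, IsTrail P x l x ∧ l.Nodup ∧ ∀ i, i ∈ l := by
  classical
  obtain ⟨x, l, y, h, hl, hmax⟩ := exists_longest_nodup_trail P
  have hmaximal : ∀ x' l' y' i, l'.Perm l → IsTrail P x' l' y' → y' ∈ P i → i ∈ l := by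
    intro x' l' y' i hperm h' hy'
    by_contra hi
    obtain ⟨w, hw, hne⟩ := exists_mem_ne (by simp [hP i] : 1 < #(P i)) y'
    have := hmax _ _ _ (h'.append (.singleton hne.symm hy' hw))
      (by simpa [List.nodup_append, hperm.mem_iff, hperm.nodup_iff, hl] using fun a ha ↦ by grind)
    simp [hperm.length_eq] at this
  obtain rfl : y = x := by
    have hcount : #{i | y ∈ P i} = l.countP (y ∈ P ·) := by
      rw [List.countP_eq_length_filter, ← List.toFinset_card_of_nodup (hl.filter _)]
      congr 1
      ext i
      simpa using fun hi ↦ hmaximal x l y i (.refl _) h hi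
    simpa using (h.even_countP_mem_iff hP y).1 (hcount ▸ heven y)
  refine ⟨y, l, h, hl, fun i ↦ ?_⟩
  obtain ⟨v, hv⟩ := card_pos.1 (by simp [hP i] : 0 < #(P i))
  obtain rfl | hne := eq_or_ne l []
  · exact hmaximal v [] v i (.refl _) rfl hv
  · obtain ⟨k, hk⟩ := List.exists_mem_of_ne_nil l hne
    obtain ⟨u, hu⟩ := card_pos.1 (by simp [hP k] : 0 < #(P k))
    let Z : Set V := {a | ∃ k ∈ l, a ∈ P k}
    have habsorb : ∀ a ∈ Z, ∀ j, a ∈ P j → j ∈ l := by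
      rintro a ⟨k, hk, hak⟩ j haj
      obtain ⟨l', hperm, h'⟩ := h.exists_perm_rotate hP hk hak
      exact hmaximal a l' a j hperm h' haj
    have hclosed : ∀ a b, (twoSection P).Adj a b → a ∈ Z → b ∈ Z :=
      fun a b ⟨_, j, ha, hb⟩ haZ ↦ ⟨j, habsorb a haZ j ha, hb⟩
    exact habsorb v (mem_of_reachable hclosed (hconn k i u hu v hv) ⟨k, hk, hu⟩) i hv

end EulerTrail

section Selection

variable {T : ι → Finset V} {d : ι → V} {i : ι}

/-- The sets `T (e k)` are distinct and each of them contains the vertices `u k` and `w k`, one of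
which is the omitted vertex, so that the omission can be moved to the other. -/
structure IsFlippable {κ : Type*} (T : ι → Finset V) (d : ι → V) (e : κ → ι) (u w : κ → V) :
    Prop where
  injective : Function.Injective e
  left_mem : ∀ k, u k ∈ T (e k)
  right_mem : ∀ k, w k ∈ T (e k)
  omits : ∀ k, d (e k) = u k ∨ d (e k) = w k

lemma isFlippable_fin_zero (e : Fin 0 → ι) (u w : Fin 0 → V) : IsFlippable T d e u w :=
  ⟨Function.injective_of_subsingleton e, finZeroElim, finZeroElim, finZeroElim⟩

lemma isFlippable_vecCons {k : ℕ} {a b : V} {e : Fin k → ι} {u w : Fin k → V} :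
    IsFlippable T d (Matrix.vecCons i e) (Matrix.vecCons a u) (Matrix.vecCons b w) ↔
      i ∉ Set.range e ∧ (a ∈ T i ∧ b ∈ T i ∧ (d i = a ∨ d i = b)) ∧ IsFlippable T d e u w where
  mp h := by
    obtain ⟨hi, he⟩ := Fin.cons_injective_iff.1 h.injective
    exact ⟨hi, ⟨h.left_mem 0, h.right_mem 0, h.omits 0⟩,
      ⟨he, fun k ↦ h.left_mem k.succ, fun k ↦ h.right_mem k.succ, fun k ↦ h.omits k.succ⟩⟩
  mpr := fun ⟨hi, ⟨ha, hb, hab⟩, h⟩ ↦ ⟨Fin.cons_injective_iff.2 ⟨hi, h.injective⟩,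
    Fin.cases ha h.left_mem, Fin.cases hb h.right_mem, Fin.cases hab h.omits⟩

variable [DecidableEq V]

/-- The sets `T i` with the vertex `d i` omitted. When the `T i` are triples with `d i ∈ T i`, these
are the pairs of consecutive vertices of a potential Euler tour. -/
def pairs (T : ι → Finset V) (d : ι → V) (i : ι) : Finset V :=
  (T i).erase (d i)

lemma mem_pairs {v : V} : v ∈ pairs T d i ↔ v ≠ d i ∧ v ∈ T i :=
  mem_erase

lemma card_pairs (hT : #(T i) = 3) (hd : d i ∈ T i) : #(pairs T d i) = 2 := by
  rw [pairs, card_erase_of_mem hd, hT]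

/-- Swap `u k` and `w k` in the omitted vertex of the set with index `e k`, for every `k`. If that
vertex is one of the two, the pair loses one of `u k`, `w k` and gains the other. -/
noncomputable def flip {κ : Type*} (d : ι → V) (e : κ → ι) (u w : κ → V) : ι → V :=
  Function.extend e (fun k ↦ Equiv.swap (u k) (w k) (d (e k))) d

variable {κ : Type*} {e : κ → ι} {u w : κ → V}

lemma IsFlippable.flip_apply (h : IsFlippable T d e u w) (k : κ) :
    flip d e u w (e k) = Equiv.swap (u k) (w k) (d (e k)) :=
  h.injective.extend_apply _ _ k

lemma flip_of_notMem_range (hi : ¬∃ k, e k = i) : flip d e u w i = d i :=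
  Function.extend_apply' _ _ i hi

lemma IsFlippable.flip_mem (h : IsFlippable T d e u w) (hd : ∀ i, d i ∈ T i) (i : ι) :
    flip d e u w i ∈ T i := by
  by_cases hi : ∃ k, e k = i
  · obtain ⟨k, rfl⟩ := hi
    rw [h.flip_apply]
    obtain hk | hk := h.omits k <;> simp [hk, h.left_mem k, h.right_mem k]
  · rw [flip_of_notMem_range hi]
    exact hd i

variable [Fintype ι]

/-- The degree of `v` modulo 2 in the multigraph with edges `pairs T d i`. -/
def degParity (T : ι → Finset V) (d : ι → V) (v : V) : ZMod 2 :=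
  #{i | v ∈ pairs T d i}

lemma degParity_eq_add_sum {d' : ι → V} (hd : ∀ i, d i ∈ T i) (hd' : ∀ i, d' i ∈ T i) :
    degParity T d' = degParity T d + ∑ i, (Pi.single (d i) 1 + Pi.single (d' i) 1) := by
  ext v
  simp only [degParity, natCast_card_filter, Pi.add_apply, Finset.sum_apply, ← sum_add_distrib]
  refine sum_congr rfl fun i _ ↦ ?_
  have hi : v ∈ pairs T d i ↔ v ≠ d i ∧ v ∈ T i := mem_pairs
  have hi' : v ∈ pairs T d' i ↔ v ≠ d' i ∧ v ∈ T i := mem_pairs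
  grind [ZModModule.add_self (1 : ZMod 2)]

lemma IsFlippable.degParity_flip [Fintype κ] (h : IsFlippable T d e u w) (hd : ∀ i, d i ∈ T i) :
    degParity T (flip d e u w) =
      degParity T d + ∑ k, (Pi.single (u k) 1 + Pi.single (w k) 1) := by
  rw [degParity_eq_add_sum hd (h.flip_mem hd)]
  congr 1
  refine (Fintype.sum_of_injective e h.injective _ _ (fun i hi ↦ ?_) fun k ↦ ?_).symm
  · rw [flip_of_notMem_range hi, ZModModule.add_self]
  · rw [h.flip_apply]
    obtain hk | hk := h.omits k <;> simp [hk, add_comm]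

lemma sum_degParity [Fintype V] (hT : ∀ i, #(T i) = 3) (hd : ∀ i, d i ∈ T i) :
    ∑ v, degParity T d v = 0 := by
  simp only [degParity, natCast_card_filter]
  rw [sum_comm]
  refine sum_eq_zero fun i _ ↦ ?_
  rw [← natCast_card_filter, filter_univ_mem, card_pairs (hT i) (hd i)]
  rfl

/-- A choice of one omitted vertex in every `T i` such that the remaining pairs form a multigraph
in which every vertex has even degree. -/
structure IsEvenSelection (T : ι → Finset V) (d : ι → V) : Prop where
  mem : ∀ i, d i ∈ T i
  degParity_eq_zero : degParity T d = 0

lemma IsEvenSelection.even_card (h : IsEvenSelection T d) (v : V) : Even #{i | v ∈ pairs T d i} :=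
  (ZMod.natCast_eq_zero_iff_even).1 (congrFun h.degParity_eq_zero v)

lemma IsFlippable.isEvenSelection_flip [Fintype κ] (h : IsFlippable T d e u w)
    (hd : ∀ i, d i ∈ T i)
    (hsum : degParity T d = ∑ k, (Pi.single (u k) 1 + Pi.single (w k) 1)) :
    IsEvenSelection T (flip d e u w) where
  mem := h.flip_mem hd
  degParity_eq_zero := by rw [h.degParity_flip hd, hsum, ZModModule.add_self]

/-- Flipping along a closed walk: every vertex is left as often as it is entered. -/
lemma IsEvenSelection.exists_flip [Finite κ] (hd : IsEvenSelection T d) (h : IsFlippable T d e u w)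
    (σ : Equiv.Perm κ) (hσ : ∀ k, w k = u (σ k)) :
    ∃ d', IsEvenSelection T d' ∧ (∀ k, d' (e k) = Equiv.swap (u k) (w k) (d (e k))) ∧
      ∀ i, (∀ k, i ≠ e k) → d' i = d i := by
  have := Fintype.ofFinite κ
  have hsum := Equiv.sum_comp σ fun k ↦ Pi.single (M := fun _ ↦ ZMod 2) (u k) 1
  refine ⟨_, h.isEvenSelection_flip hd.mem ?_, h.flip_apply, fun i hi ↦ ?_⟩
  · simp only [hd.degParity_eq_zero, sum_add_distrib, hσ, hsum, ZModModule.add_self]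
  · exact flip_of_notMem_range fun ⟨k, hk⟩ ↦ hi k hk.symm

variable {j k m : ι} {a b x y : V}

lemma IsEvenSelection.exists_flip_two (hd : IsEvenSelection T d)
    (h : IsFlippable T d ![i, j] ![a, b] ![b, a]) :
    ∃ d', IsEvenSelection T d' ∧ d' i = Equiv.swap a b (d i) ∧ d' j = Equiv.swap b a (d j) ∧
      ∀ e, e ≠ i → e ≠ j → d' e = d e := by
  obtain ⟨d', hd', hswap, hrest⟩ :=
    hd.exists_flip h (finRotate 2) (by intro n; fin_cases n <;> rfl)
  exact ⟨d', hd', hswap 0, hswap 1, by simpa [Fin.forall_fin_succ] using hrest⟩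

lemma IsEvenSelection.exists_flip_three (hd : IsEvenSelection T d)
    (h : IsFlippable T d ![i, j, k] ![a, b, x] ![b, x, a]) :
    ∃ d', IsEvenSelection T d' ∧ d' i = Equiv.swap a b (d i) ∧ d' j = Equiv.swap b x (d j) ∧
      d' k = Equiv.swap x a (d k) ∧ ∀ e, e ≠ i → e ≠ j → e ≠ k → d' e = d e := by
  obtain ⟨d', hd', hswap, hrest⟩ :=
    hd.exists_flip h (finRotate 3) (by intro n; fin_cases n <;> rfl)
  exact ⟨d', hd', hswap 0, hswap 1, hswap 2, by simpa [Fin.forall_fin_succ] using hrest⟩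

lemma IsEvenSelection.exists_flip_four (hd : IsEvenSelection T d)
    (h : IsFlippable T d ![i, j, k, m] ![a, b, x, y] ![b, x, y, a]) :
    ∃ d', IsEvenSelection T d' ∧ d' i = Equiv.swap a b (d i) ∧ d' j = Equiv.swap b x (d j) ∧
      d' k = Equiv.swap x y (d k) ∧ d' m = Equiv.swap y a (d m) ∧
        ∀ e, e ≠ i → e ≠ j → e ≠ k → e ≠ m → d' e = d e := by
  obtain ⟨d', hd', hswap, hrest⟩ :=
    hd.exists_flip h (finRotate 4) (by intro n; fin_cases n <;> rfl)
  exact ⟨d', hd', hswap 0, hswap 1, hswap 2, hswap 3,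
    by simpa [Fin.forall_fin_succ] using hrest⟩

end Selection

section ExistsEvenSelection

lemma exists_injective_of_two_le_card {α β : Type*} [Fintype α] [DecidableEq β] (f : α → Finset β)
    (hf : ∀ a, 2 ≤ #(f a)) (hf' : ∀ b, #{a | b ∈ f a} ≤ 2) :
    ∃ φ : α → β, Function.Injective φ ∧ ∀ a, φ a ∈ f a := by
  refine (all_card_le_biUnion_card_iff_exists_injective f).1 fun s ↦ ?_
  suffices #s * 2 ≤ #(s.biUnion f) * 2 by lia
  refine card_mul_le_card_mul (fun a b ↦ b ∈ f a) (fun a ha ↦ ?_) fun b _ ↦ ?_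
  · refine (hf a).trans (card_le_card fun b hb ↦ ?_)
    exact mem_bipartiteAbove _ |>.2 ⟨mem_biUnion.2 ⟨a, ha, hb⟩, hb⟩
  · exact (card_le_card (filter_subset_filter _ (subset_univ s))).trans (hf' b)

variable {T : ι → Finset V}

lemma exists_injective_mem_of_two_le_card (hT : ∀ i, #(T i) = 3) {W : Finset V} {f : W → Finset ι}
    (hf : ∀ v, 2 ≤ #(f v)) (hmem : ∀ v, ∀ i ∈ f v, v.1 ∈ T i ∧ ¬T i ⊆ W) :
    ∃ φ : W → ι, Function.Injective φ ∧ ∀ v, φ v ∈ f v := by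
  classical
  refine exists_injective_of_two_le_card f hf fun i ↦ ?_
  by_cases hi : T i ⊆ W
  · simp [fun v ↦ mt (hmem v i) (by simp [hi])]
  · have hlt : #(T i ∩ W) < #(T i) := card_lt_card (by grind)
    have hle : #{v | i ∈ f v} ≤ #(T i ∩ W) :=
      card_le_card_of_injOn Subtype.val (fun v hv ↦ by simp_all) Subtype.val_injective.injOn
    grind

/-- The members of `T` form a Steiner triple system. -/
structure IsSteiner (T : ι → Finset V) : Prop where
  card_eq_three : ∀ i, #(T i) = 3
  existsUnique : ∀ u v, u ≠ v → ∃! i, u ∈ T i ∧ v ∈ T i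

lemma IsSteiner.eq_of_mem (hT : IsSteiner T) {i j : ι} {u v : V} (hne : u ≠ v) (hui : u ∈ T i)
    (hvi : v ∈ T i) (huj : u ∈ T j) (hvj : v ∈ T j) : i = j :=
  (hT.existsUnique u v hne).unique ⟨hui, hvi⟩ ⟨huj, hvj⟩

variable [DecidableEq V]

lemma eq_zero_or_eq_single_add_single {p : V → ZMod 2} {r s t : V} (hrs : r ≠ s) (hrt : r ≠ t)
    (hst : s ≠ t) (hp : ∀ v, v ≠ r → v ≠ s → v ≠ t → p v = 0) (hsum : p r + p s + p t = 0) :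
    p = 0 ∨ p = Pi.single r 1 + Pi.single t 1 ∨ p = Pi.single s 1 + Pi.single t 1 ∨
      p = Pi.single r 1 + Pi.single s 1 := by
  have hval : ∀ x : ZMod 2, x = 0 ∨ x = 1 := by decide
  have hform : p = Pi.single r (p r) + Pi.single s (p s) + Pi.single t (p t) := by
    ext v
    simp only [Pi.add_apply]
    grind
  obtain hr | hr := hval (p r) <;> obtain hs | hs := hval (p s) <;> obtain ht | ht := hval (p t) <;>
    rw [hr, hs, ht] at hsum hform <;> first | exact absurd hsum (by decide) | simp [hform]

variable [Fintype ι] {d : ι → V}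

/-- Each `v ∈ W` of odd degree is corrected by flipping the set `φ v` along `v` and `hub v`. Since
the hubs lie outside `W`, these corrections do not interfere. -/
lemma exists_degParity_eq_zero_on (hd : ∀ i, d i ∈ T i) {W : Finset V} {φ : W → ι}
    (hφ : Function.Injective φ) {hub : W → V} (hhub : ∀ v, hub v ∉ W)
    (hmem : ∀ v, v.1 ∈ T (φ v) ∧ hub v ∈ T (φ v)) (homit : ∀ v, d (φ v) = hub v) :
    ∃ d' : ι → V, (∀ i, d' i ∈ T i) ∧ (∀ v ∈ W, degParity T d' v = 0) ∧
      (∀ v, d' (φ v) = v ∨ d' (φ v) = hub v) ∧ ∀ i, (¬∃ v, φ v = i) → d' i = d i := by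
  let odd : Type _ := {v : W // degParity T d v ≠ 0}
  have h : IsFlippable T d (fun v : odd ↦ φ v.1) (fun v ↦ v.1.1) (fun v ↦ hub v.1) :=
    ⟨hφ.comp Subtype.val_injective, fun v ↦ (hmem v.1).1, fun v ↦ (hmem v.1).2,
      fun v ↦ .inr (homit v.1)⟩
  refine ⟨_, h.flip_mem hd, fun v hv ↦ ?_, fun v ↦ ?_, fun i hi ↦ ?_⟩
  · have hne : ∀ w : odd, v ≠ hub w.1 := fun w hw ↦ hhub w.1 (hw ▸ hv)
    rw [h.degParity_flip hd]
    simp only [Pi.add_apply, Finset.sum_apply, Pi.single_apply, hne, if_false, add_zero]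
    by_cases hzero : degParity T d v = 0
    · rw [hzero, zero_add]
      refine sum_eq_zero fun w _ ↦ if_neg ?_
      rintro rfl
      exact w.2 hzero
    · have hone : degParity T d v = 1 := Fin.eq_one_of_ne_zero _ hzero
      rw [Fintype.sum_eq_single ⟨⟨v, hv⟩, hzero⟩ (by grind), if_pos rfl, hone, ZModModule.add_self]
  · by_cases hv : degParity T d v = 0
    · rw [flip_of_notMem_range]
      · exact .inr (homit v)
      · rintro ⟨w, hw⟩
        exact w.2 (hφ hw ▸ hv)
    · have := h.flip_apply ⟨v, hv⟩
      exact .inl (by simpa [homit v] using this)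
  · exact flip_of_notMem_range fun ⟨v, hv⟩ ↦ hi ⟨v.1, hv⟩

variable [Finite V]

theorem exists_isEvenSelection_of_two_le [Nonempty V] (hT : ∀ i, #(T i) = 3)
    (hpair : ∀ u v, u ≠ v → 2 ≤ #{i | u ∈ T i ∧ v ∈ T i}) : ∃ d, IsEvenSelection T d := by
  classical
  have := Fintype.ofFinite V
  let r : V := Classical.arbitrary V
  let W : Finset V := univ.erase r
  have hne : ∀ v : W, r ≠ v := fun v ↦ (ne_of_mem_erase v.2).symm
  obtain ⟨φ, hφ, hφmem⟩ := exists_injective_mem_of_two_le_card hT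
    (f := fun v : W ↦ ({i | r ∈ T i ∧ v.1 ∈ T i} : Finset ι)) (fun v ↦ hpair r v (hne v))
    (fun v i ↦ by grind)
  simp only [mem_filter_univ] at hφmem
  choose a ha using fun i ↦ card_pos.1 (by simp [hT i] : 0 < #(T i))
  obtain ⟨d, hd, hW, -⟩ := exists_degParity_eq_zero_on (T := T)
    (d := fun i ↦ if r ∈ T i then r else a i) (by grind) hφ (hub := fun _ ↦ r) (by simp [W])
    (fun v ↦ (hφmem v).symm) (fun v ↦ if_pos (hφmem v).1)
  refine ⟨d, hd, funext fun v ↦ ?_⟩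
  by_cases hv : v = r
  · have hsum := sum_degParity hT hd
    rwa [Fintype.sum_eq_single v fun w hw ↦ hW w (by simp [W, ← hv, hw])] at hsum
  · exact hW v (by simp [W, hv])

/-- Outside the block `T i₀ = {r, s, t}` every degree can be made even by flips at the blocks
through `r` or `s`, so that `t` remains omitted wherever possible. -/
lemma IsSteiner.exists_degParity_eq_zero_off_block (hT : IsSteiner T) {i₀ : ι} {r s t : V}
    (hi₀ : T i₀ = {r, s, t}) (hrs : r ≠ s) (hrt : r ≠ t) (hst : s ≠ t) :
    ∃ d : ι → V, (∀ i, d i ∈ T i) ∧ (∀ v ∉ T i₀, degParity T d v = 0) ∧ (∀ i, t ∈ T i → d i = t) ∧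
      ∀ v ∉ T i₀, ∃ i h, (h = r ∨ h = s) ∧ v ∈ T i ∧ h ∈ T i ∧ (d i = v ∨ d i = h) := by
  classical
  have := Fintype.ofFinite V
  let W : Finset V := univ \ T i₀
  have hW : ∀ {v}, v ∈ W ↔ v ∉ T i₀ := by simp [W]
  have htwo : ∀ v : W, 2 ≤ #{i | v.1 ∈ T i ∧ (r ∈ T i ∨ s ∈ T i)} := by
    intro v
    have hv := hW.1 v.2
    obtain ⟨j, hj, -⟩ := hT.existsUnique v r (by grind)
    obtain ⟨k, hk, -⟩ := hT.existsUnique v s (by grind)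
    have hjk : j ≠ k := by
      rintro rfl
      obtain rfl := hT.eq_of_mem hrs hj.2 hk.2 (by grind) (by grind : s ∈ T i₀)
      exact hv hj.1
    exact one_lt_card.2 ⟨j, by grind, k, by grind, hjk⟩
  obtain ⟨φ, hφ, hφmem⟩ := exists_injective_mem_of_two_le_card hT.card_eq_three htwo
    (fun v i ↦ by grind)
  simp only [mem_filter_univ] at hφmem
  have htφ : ∀ v, t ∉ T (φ v) := by
    intro v ht
    have : φ v = i₀ := by
      obtain hr | hs := (hφmem v).2
      · exact hT.eq_of_mem hrt hr ht (by grind) (by grind)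
      · exact hT.eq_of_mem hst hs ht (by grind) (by grind)
    exact hW.1 v.2 (this ▸ (hφmem v).1)
  choose a ha using fun i ↦ card_pos.1 (by simp [hT.card_eq_three i] : 0 < #(T i))
  obtain ⟨d, hd, hzero, homit, hfix⟩ := exists_degParity_eq_zero_on (T := T)
    (d := fun i ↦ if t ∈ T i then t else if r ∈ T i then r else if s ∈ T i then s else a i)
    (by grind) hφ (hub := fun v ↦ if r ∈ T (φ v) then r else s) (by grind) (by grind) (by grind)
  refine ⟨d, hd, fun v hv ↦ hzero v (hW.2 hv), fun i hi ↦ ?_, fun v hv ↦ ?_⟩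
  · rw [hfix i (by rintro ⟨v, rfl⟩; exact htφ v hi), if_pos hi]
  · exact ⟨φ ⟨v, hW.2 hv⟩, _, by grind, (hφmem _).1, by grind, homit ⟨v, hW.2 hv⟩⟩

theorem IsSteiner.exists_isEvenSelection (hT : IsSteiner T) (hcard : 3 < Nat.card V) :
    ∃ d, IsEvenSelection T d := by
  classical
  have := Fintype.ofFinite V
  have : Nontrivial V := Finite.one_lt_card_iff_nontrivial.1 (by lia)
  obtain ⟨a, b, hab⟩ := exists_pair_ne V
  obtain ⟨i₀, -⟩ := hT.existsUnique a b hab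
  obtain ⟨r, s, t, hrs, hrt, hst, hi₀⟩ := Finset.card_eq_three.1 (hT.card_eq_three i₀)
  obtain ⟨v, hv⟩ : ∃ v, v ∉ T i₀ := by
    by_contra! hall
    have hle := card_le_card fun v (_ : v ∈ univ) ↦ hall v
    rw [hT.card_eq_three, card_univ, ← Nat.card_eq_fintype_card] at hle
    lia
  obtain ⟨d, hd, hzero, ht, hhub⟩ := hT.exists_degParity_eq_zero_off_block hi₀ hrs hrt hst
  obtain ⟨j, ⟨hvj, htj⟩, -⟩ := hT.existsUnique v t (by grind)
  have hsum : degParity T d r + degParity T d s + degParity T d t = 0 := by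
    rw [← sum_degParity hT.card_eq_three hd,
      ← sum_subset (subset_univ (T i₀)) (fun v _ hv ↦ hzero v hv), hi₀]
    simp [hrs, hrt, hst, add_assoc]
  obtain h | h | h | h := eq_zero_or_eq_single_add_single hrs hrt hst
    (fun v hr hs ht ↦ hzero v (by grind)) hsum
  · exact ⟨d, hd, h⟩
  · have hflip : IsFlippable T d (fun _ : Unit ↦ i₀) (fun _ ↦ r) (fun _ ↦ t) :=
      ⟨fun _ _ _ ↦ rfl, by grind, by grind, fun _ ↦ .inr (ht i₀ (by grind))⟩
    exact ⟨_, hflip.isEvenSelection_flip hd (by simpa using h)⟩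
  · have hflip : IsFlippable T d (fun _ : Unit ↦ i₀) (fun _ ↦ s) (fun _ ↦ t) :=
      ⟨fun _ _ _ ↦ rfl, by grind, by grind, fun _ ↦ .inr (ht i₀ (by grind))⟩
    exact ⟨_, hflip.isEvenSelection_flip hd (by simpa using h)⟩
  · obtain ⟨k, h₁, hh₁, hvk, hk, homit⟩ := hhub v hv
    obtain ⟨h₂, hh₂⟩ : ∃ h₂, h₁ = r ∧ h₂ = s ∨ h₁ = s ∧ h₂ = r := by grind
    have hkj : k ≠ j := by
      rintro rfl
      exact hv (hT.eq_of_mem (by grind) hk htj (by grind : h₁ ∈ T i₀) (by grind) ▸ hvk)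
    have hflip : IsFlippable T d ![k, j, i₀] ![h₁, v, t] ![v, t, h₂] := by
      simp only [isFlippable_vecCons, isFlippable_fin_zero, Matrix.range_cons, Matrix.range_empty]
      grind
    refine ⟨_, hflip.isEvenSelection_flip hd ?_⟩
    have hends : degParity T d = Pi.single h₁ 1 + Pi.single h₂ 1 := by
      obtain ⟨rfl, rfl⟩ | ⟨rfl, rfl⟩ := hh₂
      exacts [h, h.trans (add_comm _ _)]
    have htwo := fun x : V → ZMod 2 ↦ ZModModule.add_self x
    simp only [hends, Fin.sum_univ_three, Matrix.cons_val]
    linear_combination -htwo (Pi.single v 1) - htwo (Pi.single t 1)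

end ExistsEvenSelection

section MaximalComponent

lemma exists_connected_induce_diff_singleton [Finite V] {G : SimpleGraph V} {X K : Set V}
    (hX : (G.induce X).Connected) (hK : (G.induce K).Connected) (hKX : K ⊂ X) :
    ∃ x ∈ X, x ∉ K ∧ (G.induce (X \ {x})).Connected := by
  obtain ⟨S, hKS, hS⟩ := (Set.toFinite {S | S ⊂ X ∧ (G.induce S).Connected}).exists_le_maximal
    ⟨hKX, hK⟩
  obtain ⟨⟨hSX, hSconn⟩, hmax⟩ := hS
  obtain ⟨⟨a, ha⟩⟩ := hSconn.nonempty
  obtain ⟨z, hzX, hzS⟩ := Set.exists_of_ssubset hSX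
  obtain ⟨walk⟩ := hX.preconnected ⟨a, hSX.subset ha⟩ ⟨z, hzX⟩
  obtain ⟨edge, -, hfst, hsnd⟩ := walk.exists_boundary_dart {u | u.1 ∈ S} ha hzS
  let x : V := edge.snd
  have hx : x ∉ S := hsnd
  have hadj : G.Adj edge.fst.1 x := edge.adj
  have hconn : (G.induce (S ∪ {x})).Connected :=
    SimpleGraph.connected_induce_union hSconn.preconnected .of_subsingleton hfst rfl hadj
  have hX' : S ∪ {x} = X := by
    by_contra hne
    have hsub : S ∪ {x} ⊆ X := Set.union_subset hSX.subset (by simp [x])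
    exact hx (hmax ⟨hsub.ssubset_of_ne hne, hconn⟩ Set.subset_union_left (.inr rfl))
  refine ⟨x, edge.snd.2, fun hxK ↦ hx (hKS hxK), ?_⟩
  rwa [← hX', Set.union_sdiff_right, Set.sdiff_singleton_eq_self hx]

lemma connected_induce_of_forall_adj {G : SimpleGraph V} {K : Set V} {c : V} (hc : c ∈ K)
    (hadj : ∀ p ∈ K, p ≠ c → G.Adj c p) : (G.induce K).Connected := by
  refine (SimpleGraph.connected_iff_exists_forall_reachable _).2 ⟨⟨c, hc⟩, fun ⟨p, hp⟩ ↦ ?_⟩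
  obtain rfl | hpc := eq_or_ne p c
  · rfl
  · exact SimpleGraph.Adj.reachable (hadj p hp hpc)

lemma reachable_of_preconnected_induce {G G' : SimpleGraph V} {S : Set V}
    (hS : (G.induce S).Preconnected)
    (hG' : ∀ a ∈ S, ∀ b ∈ S, G.Adj a b → G'.Reachable a b) {a b : V} (ha : a ∈ S) (hb : b ∈ S) :
    G'.Reachable a b := by
  refine mem_of_reachable (Z := {c : S | G'.Reachable a c}) (fun c c' hadj hc ↦ ?_)
    (hS ⟨a, ha⟩ ⟨b, hb⟩) (.refl a)
  exact hc.trans (hG' c c.2 c' c'.2 hadj)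

variable [DecidableEq V] {T : ι → Finset V} {d d' : ι → V} {v x y w : V} {i j k : ι}

/-- The connected component of `v` in the multigraph with edges `pairs T d i`. -/
def component (T : ι → Finset V) (d : ι → V) (v : V) : Set V :=
  {u | (twoSection (pairs T d)).Reachable v u}

/-- The indices of the edges of the connected component of `v`. -/
def componentEdges (T : ι → Finset V) (d : ι → V) (v : V) : Set ι :=
  {i | ∃ u ∈ component T d v, u ∈ pairs T d i}

lemma reachable_of_mem_pairs (hx : x ∈ pairs T d i) (hy : y ∈ pairs T d i) :
    (twoSection (pairs T d)).Reachable x y := by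
  obtain rfl | hne := eq_or_ne x y
  · rfl
  · exact SimpleGraph.Adj.reachable ⟨hne, i, hx, hy⟩

lemma mem_component_of_mem_pairs (hx : x ∈ component T d v) (hxi : x ∈ pairs T d i)
    (hyi : y ∈ pairs T d i) : y ∈ component T d v :=
  hx.trans (reachable_of_mem_pairs hxi hyi)

lemma connected_induce_component :
    ((twoSection (pairs T d)).induce (component T d v)).Connected := by
  have hsupp : component T d v = ((twoSection (pairs T d)).connectedComponentMk v).supp := by
    ext u
    simp [component, SimpleGraph.reachable_comm]
  rw [hsupp]
  exact SimpleGraph.ConnectedComponent.connected_toSimpleGraph _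

lemma mem_component_of_mem_componentEdges (hi : i ∈ componentEdges T d v) (hx : x ∈ pairs T d i) :
    x ∈ component T d v := by
  obtain ⟨u, hu, hui⟩ := hi
  exact mem_component_of_mem_pairs hu hui hx

lemma omits_of_mem_componentEdges (hi : i ∈ componentEdges T d v) (hy : y ∉ component T d v)
    (hyi : y ∈ T i) : d i = y := by
  by_contra hne
  exact hy (mem_component_of_mem_componentEdges hi (mem_pairs.2 ⟨Ne.symm hne, hyi⟩))

lemma omits_of_mem_of_notMem (hx : x ∈ component T d v) (hy : y ∉ component T d v) (hxi : x ∈ T i)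
    (hyi : y ∈ T i) : d i = x ∨ d i = y := by
  by_contra! hne
  exact hy (mem_component_of_mem_pairs hx (mem_pairs.2 ⟨hne.1.symm, hxi⟩)
    (mem_pairs.2 ⟨hne.2.symm, hyi⟩))

lemma mem_pairs_of_swap (hi : i ∈ componentEdges T d v) (hy : y ∉ component T d v) (hyi : y ∈ T i)
    (hswap : d' i = Equiv.swap x y (d i)) (hw : w ∈ pairs T d i) (hwx : w ≠ x) :
    w ∈ pairs T d' i := by
  rw [omits_of_mem_componentEdges hi hy hyi, Equiv.swap_apply_right] at hswap
  exact mem_pairs.2 ⟨hswap ▸ hwx, (mem_pairs.1 hw).2⟩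

variable [Fintype ι]

/-- The component of `v` for the even selection `d` cannot absorb a further edge by passing to
another even selection. -/
structure IsMaximalComponent (T : ι → Finset V) (d : ι → V) (v : V) : Prop where
  isEvenSelection : IsEvenSelection T d
  maximal : ∀ d' v', IsEvenSelection T d' → componentEdges T d v ⊆ componentEdges T d' v' →
    componentEdges T d' v' ⊆ componentEdges T d v

lemma IsEvenSelection.exists_isMaximalComponent [Nonempty V] (hd : IsEvenSelection T d) :
    ∃ d v, IsMaximalComponent T d v := by
  obtain ⟨⟨d, v⟩, heven, hmax⟩ := exists_maximalFor_of_wellFoundedGT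
    (fun p : (ι → V) × V ↦ IsEvenSelection T p.1) (fun p ↦ componentEdges T p.1 p.2)
    ⟨(d, Classical.arbitrary V), hd⟩
  exact ⟨d, v, heven, fun d' v' hd' ↦ @hmax (d', v') hd'⟩

lemma IsEvenSelection.exists_ne_mem_pairs (hd : IsEvenSelection T d) (hx : x ∈ pairs T d i) :
    ∃ j ≠ i, x ∈ pairs T d j := by
  obtain ⟨m, hm⟩ := hd.even_card x
  have hpos : 0 < #{i | x ∈ pairs T d i} := card_pos.2 ⟨i, by simpa using hx⟩
  obtain ⟨j, hj, hne⟩ := exists_mem_ne (by lia : 1 < #{i | x ∈ pairs T d i}) i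
  exact ⟨j, hne, by simpa using hj⟩

lemma IsEvenSelection.exists_ne_of_mem_pairs (hd : IsEvenSelection T d) (hT : ∀ i, #(T i) = 3)
    (x : V) (i : ι) : ∃ u ∈ pairs T d i, u ≠ x :=
  exists_mem_ne (by simp [card_pairs (hT i) (hd.mem i)]) x

namespace IsMaximalComponent

lemma exists_mem_pairs (h : IsMaximalComponent T d v) (hT : ∀ i, #(T i) = 3) [Nonempty ι]
    (hx : x ∈ component T d v) : ∃ i, x ∈ pairs T d i := by
  have hne : ∀ i, ∃ u, u ∈ pairs T d i := fun i ↦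
    card_pos.1 (by simp [card_pairs (hT i) (h.isEvenSelection.mem i)])
  obtain ⟨i, u, hu, hui⟩ : (componentEdges T d v).Nonempty := by
    by_contra! hempty
    obtain ⟨u, hu⟩ := hne (Classical.arbitrary ι)
    have := h.maximal d u h.isEvenSelection (by simp [hempty]) ⟨u, .refl u, hu⟩
    simp [hempty] at this
  exact mem_of_reachable (G := twoSection (pairs T d)) (Z := {a | ∃ i, a ∈ pairs T d i})
    (fun a b ⟨_, j, _, hb⟩ _ ↦ ⟨j, hb⟩) (hu.symm.trans hx) ⟨i, hui⟩

lemma exists_connected_induce_diff_singleton [Finite V] [Nonempty ι] (h : IsMaximalComponent T d v)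
    (hT : ∀ i, #(T i) = 3) : ∃ x ∈ component T d v,
      ((twoSection (pairs T d)).induce (component T d v \ {x})).Connected := by
  obtain ⟨i, hvi⟩ := h.exists_mem_pairs hT (.refl v : v ∈ component T d v)
  obtain ⟨u, hui, hne⟩ := h.isEvenSelection.exists_ne_of_mem_pairs hT v i
  have hv : {v} ⊂ component T d v := by
    refine Set.ssubset_iff_exists.2 ⟨Set.singleton_subset_iff.2 (.refl v), u, ?_, hne⟩
    exact mem_component_of_mem_pairs (.refl v) hvi hui
  obtain ⟨x, hx, -, hconn⟩ := TripleSystem.exists_connected_induce_diff_singleton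
    connected_induce_component ⟨.of_subsingleton⟩ hv
  exact ⟨x, hx, hconn⟩

lemma mem_componentEdges (h : IsMaximalComponent T d v) (hd' : IsEvenSelection T d') {S : Set V}
    {s u : V} (hS : ((twoSection (pairs T d)).induce S).Connected)
    (hadj : ∀ i, ∀ a ∈ S, ∀ b ∈ S, a ∈ pairs T d i → b ∈ pairs T d i →
      (twoSection (pairs T d')).Reachable a b)
    (hmeet : ∀ i ∈ componentEdges T d v, ∃ a ∈ S, a ∈ pairs T d' i)
    (hs : s ∈ S) (hu : u ∈ component T d' s) (huj : u ∈ pairs T d' j) :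
    j ∈ componentEdges T d v := by
  refine h.maximal d' s hd' (fun i hi ↦ ?_) ⟨u, hu, huj⟩
  obtain ⟨a, ha, hai⟩ := hmeet i hi
  exact ⟨a, reachable_of_preconnected_induce hS.preconnected
    (fun a ha b hb ⟨_, i, hai, hbi⟩ ↦ hadj i a ha b hb hai hbi) hs ha, hai⟩

lemma mem_componentEdges_of_reroute (h : IsMaximalComponent T d v) (hd' : IsEvenSelection T d')
    (hkeep : ∀ e ∈ componentEdges T d v, e ≠ i → d' e = d e) (hx : x ∈ component T d v)
    (hxi : x ∈ pairs T d' i)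
    (hreach : ∀ p ∈ pairs T d i, (twoSection (pairs T d')).Reachable x p)
    (hxj : x ∈ pairs T d' j) : j ∈ componentEdges T d v := by
  have hstay : ∀ e p, p ∈ component T d v → p ∈ pairs T d e → e ≠ i → p ∈ pairs T d' e := by
    intro e p hp hpe hei
    rwa [mem_pairs, hkeep e ⟨p, hp, hpe⟩ hei, ← mem_pairs]
  refine h.mem_componentEdges hd' connected_induce_component (fun e p hp q hq hpe hqe ↦ ?_)
    (fun e he ↦ ?_) hx (.refl x) hxj <;> obtain rfl | hei := eq_or_ne e i
  · exact (hreach p hpe).symm.trans (hreach q hqe)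
  · exact reachable_of_mem_pairs (hstay e p hp hpe hei) (hstay e q hq hqe hei)
  · exact ⟨x, hx, hxi⟩
  · obtain ⟨p, hp, hpe⟩ := he
    exact ⟨p, hp, hstay e p hp hpe hei⟩

/-- If only the vertex `x`, which is not a cut vertex, loses edges of a maximal component, then the
component is still connected and therefore cannot have gained an edge. -/
lemma mem_componentEdges_of_diff_singleton (h : IsMaximalComponent T d v) (hT : ∀ i, #(T i) = 3)
    (hd' : IsEvenSelection T d')
    (hS : ((twoSection (pairs T d)).induce (component T d v \ {x})).Connected)
    (hstay : ∀ i ∈ componentEdges T d v, ∀ a ∈ pairs T d i, a ≠ x → a ∈ pairs T d' i)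
    (hi : i ∈ componentEdges T d v) (hwi : w ∈ pairs T d' i) (hwj : w ∈ pairs T d' j) :
    j ∈ componentEdges T d v := by
  have hmeet : ∀ i ∈ componentEdges T d v, ∃ a ∈ component T d v \ {x}, a ∈ pairs T d' i := by
    intro i hi
    obtain ⟨a, ha, hax⟩ := h.isEvenSelection.exists_ne_of_mem_pairs hT x i
    exact ⟨a, ⟨mem_component_of_mem_componentEdges hi ha, hax⟩, hstay i hi a ha hax⟩
  obtain ⟨a, ha, hai⟩ := hmeet i hi
  refine h.mem_componentEdges hd' hS (fun e a ha b hb hae hbe ↦ ?_) hmeet ha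
    (reachable_of_mem_pairs hai hwi) hwj
  have he : e ∈ componentEdges T d v := ⟨a, ha.1, hae⟩
  exact reachable_of_mem_pairs (hstay e he a hae ha.2) (hstay e he b hbe hb.2)

lemma mem_componentEdges_of_detour (h : IsMaximalComponent T d v) (hT : ∀ i, #(T i) = 3)
    (hd' : IsEvenSelection T d')
    (hS : ((twoSection (pairs T d)).induce (component T d v \ {x})).Connected) (hxi : x ∉ T i)
    (hstay : ∀ e ∈ componentEdges T d v, ∀ a ∈ pairs T d e, a ≠ x → (e = i → a ≠ w) →
      a ∈ pairs T d' e)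
    (hlink : (twoSection (pairs T d')).Reachable w y)
    (hyi : i ∈ componentEdges T d v → y ∈ pairs T d' i)
    (hw : w ∈ component T d v) (hwx : w ≠ x) (hwj : w ∈ pairs T d' j) :
    j ∈ componentEdges T d v := by
  have hreach : ∀ a ∈ component T d v, a ∈ pairs T d i →
      (twoSection (pairs T d')).Reachable y a := by
    intro a ha hai
    have hi : i ∈ componentEdges T d v := ⟨a, ha, hai⟩
    obtain rfl | haw := eq_or_ne a w
    · exact hlink.symm
    · have hax : a ≠ x := fun hax ↦ hxi (hax ▸ (mem_pairs.1 hai).2)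
      exact reachable_of_mem_pairs (hyi hi) (hstay i hi a hai hax fun _ ↦ haw)
  refine h.mem_componentEdges hd' hS (fun e a ha b hb hae hbe ↦ ?_) (fun e he ↦ ?_) ⟨hw, hwx⟩
    (.refl w) hwj <;> obtain rfl | hei := eq_or_ne e i
  · exact (hreach a ha.1 hae).symm.trans (hreach b hb.1 hbe)
  · have he : e ∈ componentEdges T d v := ⟨a, ha.1, hae⟩
    exact reachable_of_mem_pairs (hstay e he a hae ha.2 (absurd · hei))
      (hstay e he b hbe hb.2 (absurd · hei))
  · obtain ⟨a, hae, haw⟩ := h.isEvenSelection.exists_ne_of_mem_pairs hT w e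
    have hax : a ≠ x := fun hax ↦ hxi (hax ▸ (mem_pairs.1 hae).2)
    exact ⟨a, ⟨mem_component_of_mem_componentEdges he hae, hax⟩,
      hstay e he a hae hax fun _ ↦ haw⟩
  · obtain ⟨a, hae, hax⟩ := h.isEvenSelection.exists_ne_of_mem_pairs hT x e
    exact ⟨a, ⟨mem_component_of_mem_componentEdges he hae, hax⟩,
      hstay e he a hae hax (absurd · hei)⟩

lemma false_of_swap (h : IsMaximalComponent T d v) (hT : ∀ i, #(T i) = 3)
    (hd' : IsEvenSelection T d') (hx : x ∈ component T d v)
    (hS : ((twoSection (pairs T d)).induce (component T d v \ {x})).Connected)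
    (hy : y ∉ component T d v) (hw : w ∉ component T d v)
    (hxi : x ∈ T i) (hyi : y ∈ T i) (hxk : x ∈ T k) (hwk : w ∈ T k)
    (hi : d' i = Equiv.swap x y (d i)) (hk : d' k = Equiv.swap w x (d k))
    (hrest : ∀ e ∈ componentEdges T d v, e ≠ i → e ≠ k → d' e = d e)
    (hnew : d i = y → d k = w → ∃ j ∉ componentEdges T d v, y ∈ pairs T d' j ∨ w ∈ pairs T d' j) :
    False := by
  have : Nonempty ι := ⟨i⟩
  have hstay : ∀ e ∈ componentEdges T d v, ∀ a ∈ pairs T d e, a ≠ x → a ∈ pairs T d' e := by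
    intro e he a ha hax
    obtain rfl | hei := eq_or_ne e i
    · exact mem_pairs_of_swap he hy hyi hi ha hax
    obtain rfl | hek := eq_or_ne e k
    · exact mem_pairs_of_swap he hw hwk (Equiv.swap_comm w x ▸ hk) ha hax
    rwa [mem_pairs, hrest e he hei hek, ← mem_pairs]
  have hclosed : ∀ {e j u}, e ∈ componentEdges T d v → u ∈ pairs T d' e → u ∈ pairs T d' j →
      j ∈ componentEdges T d v :=
    h.mem_componentEdges_of_diff_singleton hT hd' hS hstay
  have hgain : ∀ e, e = i ∨ e = k → d e ≠ x := by
    intro e he hex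
    obtain ⟨e₁, he₁⟩ := h.exists_mem_pairs hT hx
    obtain ⟨e₂, hne, he₂⟩ := h.isEvenSelection.exists_ne_mem_pairs he₁
    obtain ⟨f, hf, hfi, hfk⟩ : ∃ f, x ∈ pairs T d f ∧ f ≠ i ∧ f ≠ k := by grind [mem_pairs]
    have hfmem : f ∈ componentEdges T d v := ⟨x, hx, hf⟩
    have hxf : x ∈ pairs T d' f := by grind [mem_pairs]
    have hxe : x ∈ pairs T d' e := by
      grind [mem_pairs, Equiv.swap_apply_left, Equiv.swap_apply_right]
    grind [omits_of_mem_componentEdges]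
  have hdi : d i = y := (omits_of_mem_of_notMem hx hy hxi hyi).resolve_left (hgain i (.inl rfl))
  have hdk : d k = w := (omits_of_mem_of_notMem hx hw hxk hwk).resolve_left (hgain k (.inr rfl))
  obtain ⟨j, hj, hjy | hjw⟩ := hnew hdi hdk
  · exact hj (hclosed (e := i) ⟨x, hx, by grind [mem_pairs]⟩ (by grind [mem_pairs]) hjy)
  · exact hj (hclosed (e := k) ⟨x, hx, by grind [mem_pairs]⟩ (by grind [mem_pairs]) hjw)

end IsMaximalComponent

end MaximalComponent

section AbsorbsAllEdges

variable [DecidableEq V] [Fintype ι] {T : ι → Finset V} {d : ι → V} {v : V}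

namespace IsMaximalComponent

theorem componentEdges_eq_univ_of_two_le [Finite V] (h : IsMaximalComponent T d v)
    (hT : ∀ i, #(T i) = 3) (hpair : ∀ u v, u ≠ v → 2 ≤ #{i | u ∈ T i ∧ v ∈ T i}) :
    componentEdges T d v = Set.univ := by
  refine Set.eq_univ_iff_forall.2 fun j ↦ by_contra fun hj ↦ ?_
  have : Nonempty ι := ⟨j⟩
  obtain ⟨x, hx, hS⟩ := h.exists_connected_induce_diff_singleton hT
  obtain ⟨y, hyj, hyx⟩ := h.isEvenSelection.exists_ne_of_mem_pairs hT x j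
  have hy : y ∉ component T d v := fun hy ↦ hj ⟨y, hy, hyj⟩
  obtain ⟨i, hi, k, hk, hik⟩ := one_lt_card.1 (hpair x y hyx.symm)
  rw [mem_filter_univ] at hi hk
  have hflip : IsFlippable T d ![i, k] ![x, y] ![y, x] := by
    have hi_omits := omits_of_mem_of_notMem hx hy hi.1 hi.2
    have hk_omits := omits_of_mem_of_notMem hx hy hk.1 hk.2
    simp only [isFlippable_vecCons, isFlippable_fin_zero, Matrix.range_cons, Matrix.range_empty]
    grind
  obtain ⟨d', hd', hi', hk', hrest⟩ := h.isEvenSelection.exists_flip_two hflip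
  refine h.false_of_swap hT hd' hx hS hy hy hi.1 hi.2 hk.1 hk.2 hi' hk' (fun e _ ↦ hrest e)
    fun hdi hdk ↦ ?_
  have hji : j ≠ i := fun hji ↦ (mem_pairs.1 hyj).1 (hji ▸ hdi.symm)
  have hjk : j ≠ k := fun hjk ↦ (mem_pairs.1 hyj).1 (hjk ▸ hdk.symm)
  exact ⟨j, hj, .inl (by rwa [mem_pairs, hrest j hji hjk, ← mem_pairs])⟩

lemma omits_ne_of_notMem [Finite V] (h : IsMaximalComponent T d v) (hT : IsSteiner T) {m : ι}
    {y w : V} (hy : y ∉ component T d v) (hw : w ∉ component T d v) (hyw : y ≠ w) (hym : y ∈ T m)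
    (hwm : w ∈ T m) : d m ≠ y := by
  intro hdm
  have : Nonempty ι := ⟨m⟩
  obtain ⟨x, hx, hS⟩ := h.exists_connected_induce_diff_singleton hT.card_eq_three
  have hm : m ∉ componentEdges T d v := by grind [omits_of_mem_componentEdges]
  have hxm : x ∉ T m := by
    intro hxm
    have := omits_of_mem_of_notMem hx hw hxm hwm
    grind
  obtain ⟨i, ⟨hxi, hyi⟩, -⟩ := hT.existsUnique x y (by grind)
  obtain ⟨k, ⟨hxk, hwk⟩, -⟩ := hT.existsUnique x w (by grind)
  have hik : i ≠ k := by
    rintro rfl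
    exact hxm (hT.eq_of_mem hyw hyi hwk hym hwm ▸ hxi)
  have hflip : IsFlippable T d ![i, m, k] ![x, y, w] ![y, w, x] := by
    have hi_omits := omits_of_mem_of_notMem hx hy hxi hyi
    have hk_omits := omits_of_mem_of_notMem hx hw hxk hwk
    simp only [isFlippable_vecCons, isFlippable_fin_zero, Matrix.range_cons, Matrix.range_empty]
    grind
  obtain ⟨d', hd', hi', hm', hk', hrest⟩ := h.isEvenSelection.exists_flip_three hflip
  rw [hdm, Equiv.swap_apply_left] at hm'
  refine h.false_of_swap hT.card_eq_three hd' hx hS hy hw hxi hyi hxk hwk hi' hk'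
    (fun e he hei hek ↦ hrest e hei (fun hem ↦ hm (hem ▸ he)) hek) fun _ _ ↦ ?_
  exact ⟨m, hm, .inl (by grind [mem_pairs])⟩

lemma omits_mem_component [Finite V] (h : IsMaximalComponent T d v) (hT : IsSteiner T) {m : ι}
    {y w : V} (hy : y ∉ component T d v) (hw : w ∉ component T d v) (hyw : y ≠ w) (hym : y ∈ T m)
    (hwm : w ∈ T m) : d m ∈ component T d v := by
  by_contra hdm
  have hne : d m ≠ y := h.omits_ne_of_notMem hT hy hw hyw hym hwm
  exact h.omits_ne_of_notMem hT hdm hy hne (h.isEvenSelection.mem m) hym rfl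

lemma notMem_componentEdges [Finite V] (h : IsMaximalComponent T d v) (hT : IsSteiner T) {m : ι}
    {y w : V} (hy : y ∉ component T d v) (hw : w ∉ component T d v) (hyw : y ≠ w) (hym : y ∈ T m)
    (hwm : w ∈ T m) : m ∉ componentEdges T d v := fun hm ↦
  h.omits_ne_of_notMem hT hy hw hyw hym hwm (omits_of_mem_componentEdges hm hy hym)

lemma eq_insert_omits [Finite V] (h : IsMaximalComponent T d v) (hT : IsSteiner T) {m : ι}
    {y w : V} (hy : y ∉ component T d v) (hw : w ∉ component T d v) (hyw : y ≠ w) (hym : y ∈ T m)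
    (hwm : w ∈ T m) : T m = {y, w, d m} := by
  have hne_y : d m ≠ y := h.omits_ne_of_notMem hT hy hw hyw hym hwm
  have hne_w : d m ≠ w := h.omits_ne_of_notMem hT hw hy hyw.symm hwm hym
  have hsub : {y, w, d m} ⊆ T m := by grind [h.isEvenSelection.mem m]
  refine (eq_of_subset_of_card_le hsub ?_).symm
  rw [hT.card_eq_three, card_eq_three.2 ⟨y, w, d m, hyw, hne_y.symm, hne_w.symm, rfl⟩]

end IsMaximalComponent

end AbsorbsAllEdges

section OuterTriangle

variable [DecidableEq V] {T : ι → Finset V} {d : ι → V} {v : V}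

/-- Three distinct vertices `x`, `y`, `z` outside the component of `v`, together with the indices
`a`, `b`, `c` of members of `T` through the sides opposite to them. -/
structure IsOuterTriangle (T : ι → Finset V) (d : ι → V) (v x y z : V) (a b c : ι) : Prop where
  notMem_x : x ∉ component T d v
  notMem_y : y ∉ component T d v
  notMem_z : z ∉ component T d v
  ne_xy : x ≠ y
  ne_yz : y ≠ z
  ne_zx : z ≠ x
  mem_a : y ∈ T a ∧ z ∈ T a
  mem_b : z ∈ T b ∧ x ∈ T b
  mem_c : x ∈ T c ∧ y ∈ T c

namespace IsOuterTriangle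

variable {x y z : V} {a b c m : ι}

lemma rotate (t : IsOuterTriangle T d v x y z a b c) : IsOuterTriangle T d v y z x b c a :=
  ⟨t.notMem_y, t.notMem_z, t.notMem_x, t.ne_yz, t.ne_zx, t.ne_xy, t.mem_b, t.mem_c, t.mem_a⟩

lemma swap (t : IsOuterTriangle T d v x y z a b c) : IsOuterTriangle T d v x z y a c b :=
  ⟨t.notMem_x, t.notMem_z, t.notMem_y, t.ne_zx.symm, t.ne_yz.symm, t.ne_xy.symm, t.mem_a.symm,
    t.mem_c.symm, t.mem_b.symm⟩

variable [Fintype ι] [Finite V]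

lemma omits_mem_component (t : IsOuterTriangle T d v x y z a b c)
    (h : IsMaximalComponent T d v) (hT : IsSteiner T) : d c ∈ component T d v :=
  h.omits_mem_component hT t.notMem_x t.notMem_y t.ne_xy t.mem_c.1 t.mem_c.2

lemma notMem_componentEdges (t : IsOuterTriangle T d v x y z a b c)
    (h : IsMaximalComponent T d v) (hT : IsSteiner T) : c ∉ componentEdges T d v :=
  h.notMem_componentEdges hT t.notMem_x t.notMem_y t.ne_xy t.mem_c.1 t.mem_c.2

lemma mem_iff (t : IsOuterTriangle T d v x y z a b c)
    (h : IsMaximalComponent T d v) (hT : IsSteiner T) {u : V} :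
    u ∈ T c ↔ u = x ∨ u = y ∨ u = d c := by
  simp [h.eq_insert_omits hT t.notMem_x t.notMem_y t.ne_xy t.mem_c.1 t.mem_c.2]

lemma omits_ne_omits (t : IsOuterTriangle T d v x y z a b c)
    (h : IsMaximalComponent T d v) (hT : IsSteiner T) : d b ≠ d c := by
  intro heq
  have hx : x ≠ d c := fun hx ↦ t.notMem_x (hx ▸ t.omits_mem_component h hT)
  have hbc : b = c := hT.eq_of_mem hx t.mem_b.2 (heq ▸ h.isEvenSelection.mem b) t.mem_c.1
    (h.isEvenSelection.mem c)
  have hz : z ∈ T c := hbc ▸ t.mem_b.1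
  grind [t.mem_iff h hT, t.ne_yz, t.ne_zx, t.notMem_z, t.omits_mem_component h hT]

lemma omits_notMem (t : IsOuterTriangle T d v x y z a b c) (h : IsMaximalComponent T d v)
    (hT : IsSteiner T) : d b ∉ T c := by
  have hb : d b ∈ component T d v := t.swap.omits_mem_component h hT
  grind [t.mem_iff h hT, t.notMem_x, t.notMem_y, t.omits_ne_omits h hT]

lemma reachable_side (t : IsOuterTriangle T d v x y z a b c) (h : IsMaximalComponent T d v)
    (hT : IsSteiner T) {d' : ι → V} (ha : d' a = d a) :
    (twoSection (pairs T d')).Reachable y z := by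
  have hda : d a ∈ component T d v := t.rotate.omits_mem_component h hT
  refine reachable_of_mem_pairs (mem_pairs.2 ⟨?_, t.mem_a.1⟩) (mem_pairs.2 ⟨?_, t.mem_a.2⟩)
  · exact fun hy ↦ t.notMem_y (hy ▸ ha ▸ hda)
  · exact fun hz ↦ t.notMem_z (hz ▸ ha ▸ hda)

lemma reachable_omits (t : IsOuterTriangle T d v x y z a b c) (h : IsMaximalComponent T d v)
    (hT : IsSteiner T) {d' : ι → V} (hc : d' c = x) :
    (twoSection (pairs T d')).Reachable (d c) y := by
  refine reachable_of_mem_pairs (mem_pairs.2 ⟨?_, h.isEvenSelection.mem c⟩)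
    (mem_pairs.2 ⟨hc ▸ t.ne_xy.symm, t.mem_c.2⟩)
  exact fun hx ↦ t.notMem_x (hc ▸ hx ▸ t.omits_mem_component h hT)

/-- If the block through `d b` and `d c` omitted `d b`, then flipping along the triangle `d b`,
`d c`, `x` would connect `d b` and `d c` by the path `d b`, `z`, `y`, `d c` instead. -/
lemma omits_ne (t : IsOuterTriangle T d v x y z a b c) (h : IsMaximalComponent T d v)
    (hT : IsSteiner T) (hbm : d b ∈ T m) (hcm : d c ∈ T m) : d m ≠ d b := by
  intro hdm
  have hb : d b ∈ component T d v := t.swap.omits_mem_component h hT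
  have hbT : d b ∉ T c := t.omits_notMem h hT
  have hcT : d c ∉ T b := t.swap.omits_notMem h hT
  have hbR : b ∉ componentEdges T d v := t.swap.notMem_componentEdges h hT
  have hcR : c ∉ componentEdges T d v := t.notMem_componentEdges h hT
  have hflip : IsFlippable T d ![m, c, b] ![d b, d c, x] ![d c, x, d b] := by
    simp only [isFlippable_vecCons, isFlippable_fin_zero, Matrix.range_cons, Matrix.range_empty]
    grind [h.isEvenSelection.mem b, h.isEvenSelection.mem c, t.mem_b, t.mem_c]
  obtain ⟨d', hd', hm', hc', hb', hrest⟩ := h.isEvenSelection.exists_flip_three hflip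
  rw [hdm, Equiv.swap_apply_left] at hm'
  rw [Equiv.swap_apply_left] at hc'
  rw [Equiv.swap_apply_right] at hb'
  have ha' : d' a = d a := by
    refine hrest a ?_ ?_ ?_ <;> rintro rfl
    · exact t.rotate.omits_notMem h hT hcm
    · exact t.rotate.omits_notMem h hT (h.isEvenSelection.mem _)
    · exact t.swap.rotate.omits_notMem h hT (h.isEvenSelection.mem _)
  have hlink : (twoSection (pairs T d')).Reachable (d b) (d c) :=
    ((t.swap.reachable_omits h hT hb').trans (t.reachable_side h hT ha').symm).trans
      (t.reachable_omits h hT hc').symm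
  have hbm' : d b ∈ pairs T d' m := by grind [mem_pairs, h.isEvenSelection.mem c]
  have hreach : ∀ p ∈ pairs T d m, (twoSection (pairs T d')).Reachable (d b) p := by
    intro p hp
    obtain rfl | hpc := eq_or_ne p (d c)
    · exact hlink
    · exact reachable_of_mem_pairs hbm' (by grind [mem_pairs])
  refine hbR (h.mem_componentEdges_of_reroute hd' (fun e he hem ↦ ?_) hb hbm' hreach ?_)
  · exact hrest e hem (ne_of_mem_of_not_mem he hcR) (ne_of_mem_of_not_mem he hbR)
  · grind [mem_pairs, t.notMem_x, h.isEvenSelection.mem b]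

lemma adj_omits (t : IsOuterTriangle T d v x y z a b c) (h : IsMaximalComponent T d v)
    (hT : IsSteiner T) : (twoSection (pairs T d)).Adj (d b) (d c) := by
  have hne : d b ≠ d c := t.omits_ne_omits h hT
  obtain ⟨m, ⟨hbm, hcm⟩, -⟩ := hT.existsUnique (d b) (d c) hne
  exact ⟨hne, m, mem_pairs.2 ⟨(t.omits_ne h hT hbm hcm).symm, hbm⟩,
    mem_pairs.2 ⟨(t.swap.omits_ne h hT hcm hbm).symm, hcm⟩⟩

lemma exists_ne_of_omits_notMem (t : IsOuterTriangle T d v x y z a b c)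
    (h : IsMaximalComponent T d v) (hT : IsSteiner T) (hdm : d m ∉ component T d v)
    (hx : x ∉ T m) (hy : y ∉ T m) (hz : z ∉ T m) (p q : V) :
    ∃ u ∈ component T d v, u ∉ T m ∧ u ≠ p ∧ u ≠ q := by
  have hm : d m ∈ T m := h.isEvenSelection.mem m
  have hmx : d m ≠ x := ne_of_mem_of_not_mem hm hx
  have hmy : d m ≠ y := ne_of_mem_of_not_mem hm hy
  have hmz : d m ≠ z := ne_of_mem_of_not_mem hm hz
  obtain ⟨i, hi, -⟩ := hT.existsUnique (d m) x hmx
  obtain ⟨j, hj, -⟩ := hT.existsUnique (d m) y hmy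
  obtain ⟨k, hk, -⟩ := hT.existsUnique (d m) z hmz
  have txy : IsOuterTriangle T d v (d m) x y c j i :=
    ⟨hdm, t.notMem_x, t.notMem_y, hmx, t.ne_xy, hmy.symm, t.mem_c, hj.symm, hi⟩
  have tyz : IsOuterTriangle T d v (d m) y z a k j :=
    ⟨hdm, t.notMem_y, t.notMem_z, hmy, t.ne_yz, hmz.symm, t.mem_a, hk.symm, hj⟩
  have tzx : IsOuterTriangle T d v (d m) z x b i k :=
    ⟨hdm, t.notMem_z, t.notMem_x, hmz, t.ne_zx, hmx.symm, t.mem_b, hi.symm, hk⟩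
  have hnotMem : ∀ e w, d m ∈ T e → w ∈ T e → w ∉ T m → d e ∈ component T d v → d e ∉ T m := by
    intro e w hme hwe hwm hde hdem
    have heq : e = m := hT.eq_of_mem (ne_of_mem_of_not_mem hde hdm) (h.isEvenSelection.mem e) hme
      hdem hm
    exact hwm (heq ▸ hwe)
  have hdi : d i ∈ component T d v := txy.omits_mem_component h hT
  have hdj : d j ∈ component T d v := tyz.omits_mem_component h hT
  have hdk : d k ∈ component T d v := tzx.omits_mem_component h hT
  grind [hnotMem i x hi.1 hi.2 hx hdi, hnotMem j y hj.1 hj.2 hy hdj, hnotMem k z hk.1 hk.2 hz hdk,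
    txy.omits_ne_omits h hT, tyz.omits_ne_omits h hT, tzx.omits_ne_omits h hT]

lemma exists_ne_of_mem_of_omits_notMem (t : IsOuterTriangle T d v x y z a b c)
    (h : IsMaximalComponent T d v) (hT : IsSteiner T) (hbm : d b ∈ T m) (hcm : d c ∈ T m)
    (hdm : d m ∉ component T d v) (p q : V) :
    ∃ u ∈ component T d v, u ≠ d b ∧ u ≠ d c ∧ u ≠ p ∧ u ≠ q := by
  have hb : d b ∈ component T d v := t.swap.omits_mem_component h hT
  have hc : d c ∈ component T d v := t.omits_mem_component h hT
  have hbc : d b ∉ T c := t.omits_notMem h hT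
  have hcb : d c ∉ T b := t.swap.omits_notMem h hT
  have hmc : m ≠ c := fun hmc ↦ hbc (hmc ▸ hbm)
  have hmb : m ≠ b := fun hmb ↦ hcb (hmb ▸ hcm)
  have hmeet_c : ∀ w ∈ T c, w ∉ component T d v → w ∉ T m := fun w hwc hw hwm ↦ hmc <|
    hT.eq_of_mem (ne_of_mem_of_not_mem hc hw) hcm hwm (h.isEvenSelection.mem c) hwc
  have hz : z ∉ T m := fun hzm ↦ hmb <|
    hT.eq_of_mem (ne_of_mem_of_not_mem hb t.notMem_z) hbm hzm (h.isEvenSelection.mem b) t.mem_b.1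
  obtain ⟨u, hu, hum, hup, huq⟩ := t.exists_ne_of_omits_notMem h hT hdm
    (hmeet_c x t.mem_c.1 t.notMem_x) (hmeet_c y t.mem_c.2 t.notMem_y) hz p q
  exact ⟨u, hu, (ne_of_mem_of_not_mem hbm hum).symm, (ne_of_mem_of_not_mem hcm hum).symm, hup, huq⟩

lemma notMem_of_omits_mem (t : IsOuterTriangle T d v x y z a b c) (h : IsMaximalComponent T d v)
    (hT : IsSteiner T) (hbm : d b ∈ T m) (hcm : d c ∈ T m) : d a ∉ T m := by
  intro ham
  have hbc : d b ≠ d c := t.omits_ne_omits h hT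
  have hca : d c ≠ d a := t.rotate.omits_ne_omits h hT
  have hab : d a ≠ d b := t.rotate.rotate.omits_ne_omits h hT
  have hsub : {d a, d b, d c} ⊆ T m := by grind
  have heq : {d a, d b, d c} = T m := eq_of_subset_of_card_le hsub <| by
    rw [hT.card_eq_three, card_eq_three.2 ⟨d a, d b, d c, hab, hca.symm, hbc, rfl⟩]
  have hdm : d m ∈ ({d a, d b, d c} : Finset V) := heq ▸ h.isEvenSelection.mem m
  simp only [mem_insert, mem_singleton] at hdm
  obtain hdm | hdm | hdm := hdm
  · exact t.rotate.rotate.omits_ne h hT ham hbm hdm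
  · exact t.omits_ne h hT hbm hcm hdm
  · exact t.swap.omits_ne h hT hcm hbm hdm

lemma exists_ne_omits (t : IsOuterTriangle T d v x y z a b c) (h : IsMaximalComponent T d v)
    (hT : IsSteiner T) (q : V) :
    ∃ u ∈ component T d v, u ≠ d a ∧ u ≠ d b ∧ u ≠ d c ∧ u ≠ q := by
  obtain ⟨m, ⟨hbm, hcm⟩, -⟩ := hT.existsUnique (d b) (d c) (t.omits_ne_omits h hT)
  obtain ⟨n, ⟨hcn, han⟩, -⟩ := hT.existsUnique (d c) (d a) (t.rotate.omits_ne_omits h hT)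
  by_cases hdm : d m ∉ component T d v
  · obtain ⟨u, hu, hub, huc, hua, huq⟩ :=
      t.exists_ne_of_mem_of_omits_notMem h hT hbm hcm hdm (d a) q
    exact ⟨u, hu, hua, hub, huc, huq⟩
  by_cases hdn : d n ∉ component T d v
  · obtain ⟨u, hu, huc, hua, hub, huq⟩ :=
      t.rotate.exists_ne_of_mem_of_omits_notMem h hT hcn han hdn (d b) q
    exact ⟨u, hu, hua, hub, huc, huq⟩
  have ham : d a ∉ T m := t.notMem_of_omits_mem h hT hbm hcm
  have hbn : d b ∉ T n := t.rotate.notMem_of_omits_mem h hT hcn han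
  have hmb : d m ≠ d b := t.omits_ne h hT hbm hcm
  have hmc : d m ≠ d c := t.swap.omits_ne h hT hcm hbm
  have hnc : d n ≠ d c := t.rotate.omits_ne h hT hcn han
  have hna : d n ≠ d a := t.rotate.swap.omits_ne h hT han hcn
  have hmem_m : d m ∈ T m := h.isEvenSelection.mem m
  have hmem_n : d n ∈ T n := h.isEvenSelection.mem n
  have hmn : d m ≠ d n := by
    intro heq
    have hmn : m = n := hT.eq_of_mem hmc hmem_m hcm (heq ▸ hmem_n) hcn
    exact hbn (hmn ▸ hbm)
  grind

lemma exists_connected_induce_diff_singleton {k : ι} (t : IsOuterTriangle T d v x y z a b c)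
    (h : IsMaximalComponent T d v) (hT : IsSteiner T) (hck : d c ∈ T k) (hzk : z ∈ T k) :
    ∃ u ∈ component T d v, u ≠ d a ∧ u ≠ d b ∧ u ∉ T k ∧
      ((twoSection (pairs T d)).induce (component T d v \ {u})).Connected := by
  have hc : d c ∈ component T d v := t.omits_mem_component h hT
  let K : Set V := {p | p ∈ component T d v ∧ (p = d a ∨ p = d b ∨ p ∈ T k)}
  have hK : ((twoSection (pairs T d)).induce K).Connected := by
    refine connected_induce_of_forall_adj (c := d c) ⟨hc, .inr (.inr hck)⟩ fun p hp hpc ↦ ?_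
    obtain ⟨hp, rfl | rfl | hpk⟩ := hp
    · exact t.rotate.adj_omits h hT
    · exact t.swap.adj_omits h hT
    · have hk_omits : d k = z := by
        have := omits_of_mem_of_notMem hc t.notMem_z hck hzk
        have := omits_of_mem_of_notMem hp t.notMem_z hpk hzk
        grind
      exact ⟨hpc.symm, k, by grind [mem_pairs, t.notMem_z], by grind [mem_pairs, t.notMem_z]⟩
  have hKX : K ⊂ component T d v := by
    have hcz : d c ≠ z := ne_of_mem_of_not_mem hc t.notMem_z
    obtain ⟨q, hq⟩ : ∃ q, T k \ {d c, z} = {q} := by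
      refine card_eq_one.1 ?_
      rw [card_sdiff_of_subset (by grind), hT.card_eq_three, card_pair hcz]
    obtain ⟨u, hu, hua, hub, huc, huq⟩ := t.exists_ne_omits h hT q
    refine Set.ssubset_iff_exists.2 ⟨fun p hp ↦ hp.1, u, hu, ?_⟩
    have huz : u ≠ z := ne_of_mem_of_not_mem hu t.notMem_z
    have huk : u ∉ T k := fun huk ↦ huq <| mem_singleton.1 <| hq ▸ mem_sdiff.2 ⟨huk, by grind⟩
    grind
  obtain ⟨u, hu, huK, hconn⟩ := TripleSystem.exists_connected_induce_diff_singleton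
    connected_induce_component hK hKX
  exact ⟨u, hu, by grind, by grind, by grind, hconn⟩

lemma isFlippable_detour {i j k : ι} {w : V} (t : IsOuterTriangle T d v x y z a b c)
    (h : IsMaximalComponent T d v) (hT : IsSteiner T) (hw : w ∈ component T d v)
    (hwb : w ≠ d b) (hwk : w ∉ T k) (hck : d c ∈ T k) (hzk : z ∈ T k) (hwi : w ∈ T i)
    (hxi : x ∈ T i) (hzj : z ∈ T j) (hwj : w ∈ T j) :
    IsFlippable T d ![i, c, k, j] ![w, x, d c, z] ![x, d c, z, w] := by
  have hc : d c ∈ component T d v := t.omits_mem_component h hT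
  have hwTb : w ∉ T b := by grind [t.swap.mem_iff h hT, t.notMem_x, t.notMem_z]
  have hwTc : w ∉ T c := by grind [t.mem_iff h hT, t.notMem_x, t.notMem_y]
  have hzTc : z ∉ T c := by grind [t.mem_iff h hT, t.ne_yz, t.ne_zx, t.notMem_z]
  have hij : i ≠ j := fun hij ↦ hwTb <|
    hT.eq_of_mem t.ne_zx hzj (hij ▸ hxi) t.mem_b.1 t.mem_b.2 ▸ hwj
  have hi_omits := omits_of_mem_of_notMem hw t.notMem_x hwi hxi
  have hk_omits := omits_of_mem_of_notMem hc t.notMem_z hck hzk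
  have hj_omits := omits_of_mem_of_notMem hw t.notMem_z hwj hzj
  simp only [isFlippable_vecCons, isFlippable_fin_zero, Matrix.range_cons, Matrix.range_empty]
  grind [h.isEvenSelection.mem c, t.mem_c]

/-- Flipping along the 4-cycle `w`, `x`, `d c`, `z` costs the component only the non-cut vertex `w`
and the block through `d c` and `z`, whose pair is replaced by the detour `d c`, `y`, `z`. The edge
`d c`, `y` of this detour is new. -/
theorem not_isMaximalComponent (t : IsOuterTriangle T d v x y z a b c) (hT : IsSteiner T) :
    ¬IsMaximalComponent T d v := by
  intro h
  have hc : d c ∈ component T d v := t.omits_mem_component h hT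
  have hcR : c ∉ componentEdges T d v := t.notMem_componentEdges h hT
  obtain ⟨k, ⟨hck, hzk⟩, -⟩ := hT.existsUnique (d c) z (ne_of_mem_of_not_mem hc t.notMem_z)
  obtain ⟨w, hw, hwa, hwb, hwk, hconn⟩ := t.exists_connected_induce_diff_singleton h hT hck hzk
  obtain ⟨i, ⟨hwi, hxi⟩, -⟩ := hT.existsUnique w x (ne_of_mem_of_not_mem hw t.notMem_x)
  obtain ⟨j, ⟨hzj, hwj⟩, -⟩ := hT.existsUnique z w (ne_of_mem_of_not_mem hw t.notMem_z).symm
  obtain ⟨d', hd', hi', hc', hk', hj', hrest⟩ := h.isEvenSelection.exists_flip_four <|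
    t.isFlippable_detour h hT hw hwb hwk hck hzk hwi hxi hzj hwj
  rw [Equiv.swap_apply_right] at hc'
  have hstay : ∀ e ∈ componentEdges T d v, ∀ p ∈ pairs T d e, p ≠ w → (e = k → p ≠ d c) →
      p ∈ pairs T d' e := by
    intro e he p hp hpw hpc
    obtain rfl | hei := eq_or_ne e i
    · exact mem_pairs_of_swap he t.notMem_x hxi hi' hp hpw
    obtain rfl | hej := eq_or_ne e j
    · exact mem_pairs_of_swap he t.notMem_z hzj (Equiv.swap_comm z w ▸ hj') hp hpw
    obtain rfl | hek := eq_or_ne e k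
    · exact mem_pairs_of_swap he t.notMem_z hzk hk' hp (hpc rfl)
    rwa [mem_pairs, hrest e hei (ne_of_mem_of_not_mem he hcR) hek hej, ← mem_pairs]
  have hwTa : w ∉ T a := by grind [t.rotate.mem_iff h hT, t.notMem_y, t.notMem_z]
  have ha' : d' a = d a := by
    refine hrest a ?_ ?_ ?_ ?_ <;> rintro rfl
    · exact hwTa hwi
    · exact t.rotate.omits_notMem h hT (h.isEvenSelection.mem _)
    · exact t.rotate.omits_notMem h hT hck
    · exact hwTa hwj
  have hlink : (twoSection (pairs T d')).Reachable (d c) z :=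
    (t.reachable_omits h hT hc').trans (t.reachable_side h hT ha')
  have hz : k ∈ componentEdges T d v → z ∈ pairs T d' k := by
    intro hk
    rw [omits_of_mem_componentEdges hk t.notMem_z hzk, Equiv.swap_apply_right] at hk'
    exact mem_pairs.2 ⟨hk' ▸ (ne_of_mem_of_not_mem hc t.notMem_z).symm, hzk⟩
  exact hcR <| h.mem_componentEdges_of_detour hT.card_eq_three hd' hconn hwk hstay hlink hz hc
    (ne_of_mem_of_not_mem hck hwk) <|
    mem_pairs.2 ⟨hc' ▸ ne_of_mem_of_not_mem hc t.notMem_x, h.isEvenSelection.mem c⟩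

end IsOuterTriangle

end OuterTriangle

section EulerTour

variable [DecidableEq V] [Fintype ι] {T : ι → Finset V} {d : ι → V} {v : V}

theorem IsMaximalComponent.componentEdges_eq_univ [Finite V] (h : IsMaximalComponent T d v)
    (hT : IsSteiner T) : componentEdges T d v = Set.univ := by
  refine Set.eq_univ_iff_forall.2 fun a ↦ by_contra fun ha ↦ ?_
  have hout : ∀ u ∈ pairs T d a, u ∉ component T d v := fun u hua hu ↦ ha ⟨u, hu, hua⟩
  obtain ⟨y, z, hyz, hpair⟩ := card_eq_two.1 <|
    card_pairs (hT.card_eq_three a) (h.isEvenSelection.mem a)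
  have hya : y ∈ pairs T d a := by simp [hpair]
  have hza : z ∈ pairs T d a := by simp [hpair]
  obtain ⟨c, hca, hyc⟩ := h.isEvenSelection.exists_ne_mem_pairs hya
  obtain ⟨x, hxc, hxy⟩ := h.isEvenSelection.exists_ne_of_mem_pairs hT.card_eq_three y c
  have hx : x ∉ component T d v := fun hx ↦ hout y hya (mem_component_of_mem_pairs hx hxc hyc)
  have hTa : y ∈ T a ∧ z ∈ T a := ⟨(mem_pairs.1 hya).2, (mem_pairs.1 hza).2⟩
  have hTc : x ∈ T c ∧ y ∈ T c := ⟨(mem_pairs.1 hxc).2, (mem_pairs.1 hyc).2⟩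
  have hzx : z ≠ x := fun hzx ↦ hca (hT.eq_of_mem hxy hTc.1 hTc.2 (hzx ▸ hTa.2) hTa.1)
  obtain ⟨b, hTb, -⟩ := hT.existsUnique z x hzx
  have t : IsOuterTriangle T d v x y z a b c :=
    ⟨hx, hout y hya, hout z hza, hxy, hyz, hzx, hTa, hTb, hTc⟩
  exact t.not_isMaximalComponent hT h

theorem IsMaximalComponent.exists_trail [Nonempty V] (h : IsMaximalComponent T d v)
    (hT : ∀ i, #(T i) = 3) (huniv : componentEdges T d v = Set.univ) :
    ∃ x l, IsTrail T x l x ∧ l.Nodup ∧ ∀ i, i ∈ l := by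
  have hmem : ∀ i, ∀ u ∈ pairs T d i, u ∈ component T d v := fun i u hu ↦
    mem_component_of_mem_componentEdges (huniv ▸ Set.mem_univ i) hu
  obtain ⟨x, l, hl, hnodup, hall⟩ := exists_euler_trail
    (fun i ↦ card_pairs (hT i) (h.isEvenSelection.mem i)) h.isEvenSelection.even_card
    fun i j u hu w hw ↦ (hmem i u hu).symm.trans (hmem j w hw)
  exact ⟨x, l, hl.mono fun i ↦ erase_subset _ _, hnodup, hall⟩

theorem exists_trail_of_two_le [Finite V] [Nonempty V] (hT : ∀ i, #(T i) = 3)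
    (hpair : ∀ u v, u ≠ v → 2 ≤ #{i | u ∈ T i ∧ v ∈ T i}) :
    ∃ x l, IsTrail T x l x ∧ l.Nodup ∧ ∀ i, i ∈ l := by
  obtain ⟨d₀, hd₀⟩ := exists_isEvenSelection_of_two_le hT hpair
  obtain ⟨d, v, h⟩ := hd₀.exists_isMaximalComponent
  exact h.exists_trail hT (h.componentEdges_eq_univ_of_two_le hT hpair)

end EulerTour

theorem IsSteiner.exists_trail [Finite V] [Finite ι] {T : ι → Finset V} (hT : IsSteiner T)
    (hcard : 3 < Nat.card V) :
    ∃ x l, IsTrail T x l x ∧ l.Nodup ∧ ∀ i, i ∈ l := by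
  classical
  have := Fintype.ofFinite ι
  have : Nonempty V := (Nat.card_pos_iff.1 (by lia)).1
  obtain ⟨d₀, hd₀⟩ := hT.exists_isEvenSelection hcard
  obtain ⟨d, v, h⟩ := hd₀.exists_isMaximalComponent
  exact h.exists_trail hT.card_eq_three (h.componentEdges_eq_univ hT)

section EdgeMultiset

variable {W : Type} {E : Multiset (Finset W)}

lemma isEulerian_of_isTrail [DecidableEq W] {x : W} {l : List E.ToType}
    (hl : IsTrail (fun i : E.ToType ↦ i.1) x l x) (hnodup : l.Nodup) (hall : ∀ i, i ∈ l) :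
    IsEulerian E := by
  obtain ⟨v, hfirst, hlast, hv⟩ := hl.exists_walk
  refine ⟨l.length, v, fun k ↦ (l.get k).1, ⟨hfirst.trans hlast.symm, hv⟩, ?_⟩
  have huniv : (l : Multiset E.ToType) = univ.val :=
    (Multiset.Nodup.ext (Multiset.coe_nodup.2 hnodup) univ.nodup).2 fun i ↦ by simp [hall i]
  calc walkEdges (fun k ↦ (l.get k).1)
      = (l : Multiset E.ToType).map (fun i ↦ i.1) :=
        congrArg Multiset.ofList (List.ofFn_getElem_eq_map l fun i ↦ i.1)
    _ = E := by rw [huniv]; exact Multiset.map_univ_coe E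

lemma card_filter_toType [DecidableEq W] (u w : W) :
    #{i : E.ToType | u ∈ i.1 ∧ w ∈ i.1} = (E.filter fun f ↦ u ∈ f ∧ w ∈ f).card := by
  conv_rhs => rw [← Multiset.map_univ_coe E, Multiset.filter_map, Multiset.card_map]
  rfl

lemma not_isEulerian_of_card_eq_three [Fintype W] [DecidableEq W] (hW : Fintype.card W = 3)
    (hE : IsTripleSystem E 1) : ¬IsEulerian E := by
  obtain ⟨-, hcard, hpair⟩ := hE
  have huniv : ∀ f ∈ E, f = univ := fun f hf ↦ eq_univ_of_card f (by rw [hcard f hf, hW])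
  obtain ⟨u, w, huw⟩ := Fintype.exists_pair_of_one_lt_card (by lia : 1 < Fintype.card W)
  have hone : E.card = 1 := by
    rw [← hpair u w huw, Multiset.filter_eq_self.2 fun f hf ↦ by simp [huniv f hf]]
  rintro ⟨k, v, e, ⟨hclosed, hwalk⟩, rfl⟩
  obtain rfl : k = 1 := by simpa [walkEdges] using hone
  exact (hwalk 0).1 hclosed

lemma isEulerian_of_two_le [Finite W] [Nonempty W] [DecidableEq W] {lam : ℕ} (hlam : 2 ≤ lam)
    (hE : IsTripleSystem E lam) : IsEulerian E := by
  obtain ⟨-, hcard, hpair⟩ := hE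
  obtain ⟨x, l, hl, hnodup, hall⟩ := exists_trail_of_two_le
    (T := fun i : E.ToType ↦ i.1) (fun i ↦ hcard i.1 Multiset.coe_mem)
    fun u w huw ↦ by rwa [card_filter_toType, hpair u w huw]
  exact isEulerian_of_isTrail hl hnodup hall

lemma isEulerian_of_three_lt_card [Finite W] [DecidableEq W] (hW : 3 < Nat.card W)
    (hE : IsTripleSystem E 1) : IsEulerian E := by
  obtain ⟨-, hcard, hpair⟩ := hE
  have hT : IsSteiner (fun i : E.ToType ↦ i.1) :=
    ⟨fun i ↦ hcard i.1 Multiset.coe_mem, fun u w huw ↦ by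
      rw [Fintype.existsUnique_iff_card_one, card_filter_toType, hpair u w huw]⟩
  obtain ⟨x, l, hl, hnodup, hall⟩ := hT.exists_trail hW
  exact isEulerian_of_isTrail hl hnodup hall

end EdgeMultiset

end TripleSystem

/-- Let `H` be a triple system `TS(n, λ)` with `n ≥ 3` and `λ ≥ 1`.  Then `H` is
eulerian if and only if `(n, λ) ≠ (3, 1)`, i.e. iff `H` is not a `TS(3, 1)`. -/
theorem tripleSystem_eulerian_iff_not_TS31 {V : Type} [Fintype V] [DecidableEq V]
    (n lam : ℕ) (hn : Fintype.card V = n) (hn3 : 3 ≤ n) (hlam : 1 ≤ lam)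
    (E : Multiset (Finset V)) (hH : IsTripleSystem E lam) :
    IsEulerian E ↔ ¬(n = 3 ∧ lam = 1) := by
  constructor
  · rintro hE ⟨rfl, rfl⟩
    exact TripleSystem.not_isEulerian_of_card_eq_three hn hH hE
  · intro hne
    obtain hlam' | rfl := hlam.lt_or_eq
    · have : Nonempty V := Fintype.card_pos_iff.1 (by lia)
      exact TripleSystem.isEulerian_of_two_le hlam' hH
    · exact TripleSystem.isEulerian_of_three_lt_card (by rw [Nat.card_eq_fintype_card]; lia) hH
end

section
/- Let H be a 3-uniform hypergraph of order at least 3 in which every pair of distinct vertices lies together in at least two edges (counted with multiplicity). Then H is eulerian. -/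
/-!
Deleting one vertex from every triple leaves a multigraph, and an Euler tour of that multigraph is
one of the hypergraph. By Euler's theorem it suffices to make all degrees even and all remaining
edges mutually reachable.

*Parity.* Fix a vertex `z`. By Hall's theorem every other vertex `v` has a private edge through `z`
and `v`; choosing which of the two to delete there corrects the parity at `v`, and the handshake
lemma settles `z`.

*Connectivity.* Among all even deletions take one with a largest component `C`, and suppose that an
edge remains at some `w ∉ C`. Let `u` be a non-cut vertex of `C`. Two edges contain `u` and `w`, and
each of them has lost `u` or `w`, as otherwise `w` would lie in `C`. Interchanging `u` and `w` as
the deleted vertices of both edges preserves all parities and produces a larger component.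
-/

open Finset Function

theorem mem_iff_eq_or_eq_of_card_eq_two {α : Type*} {s : Finset α} {a b x : α} (hs : #s = 2)
    (ha : a ∈ s) (hb : b ∈ s) (hne : a ≠ b) : x ∈ s ↔ x = a ∨ x = b := by
  classical
  obtain ⟨c, d, -, rfl⟩ := card_eq_two.1 hs
  grind

theorem exists_mem_supp_preconnected_induce_diff_singleton {V : Type*} [Finite V]
    {G : SimpleGraph V} (C : G.ConnectedComponent) :
    ∃ u ∈ C.supp, (G.induce (C.supp \ {u})).Preconnected := by
  obtain ⟨u, hu⟩ :=
    SimpleGraph.Connected.exists_preconnected_induce_compl_singleton_of_finite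
      C.connected_toSimpleGraph
  refine ⟨u, u.2, hu.map (H := G.induce (C.supp \ {↑u}))
    ⟨fun x ↦ ⟨x.1.1, x.1.2, fun h ↦ x.2 (Subtype.ext h)⟩, id⟩ ?_⟩
  rintro ⟨x, hx, hxu⟩
  exact ⟨⟨⟨x, hx⟩, fun h ↦ hxu (congrArg Subtype.val h)⟩, rfl⟩

/-- A hypergraph on `V` with edges indexed by `ι`; parallel edges are distinct indices with the
same value. -/
abbrev EdgeFamily (ι V : Type*) := ι → Finset V

namespace EdgeFamily

variable {ι V : Type*} {p q t : EdgeFamily ι V} {a b c u v w z : V} {i e e₁ e₂ : ι} {l m : List ι}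
  {f : ι → V}

/-- `p.IsWalk a b l`: some walk from `a` to `b` traverses the edges listed in `l`, in order. The
walk is a strict trail precisely when `l` has no duplicates. -/
inductive IsWalk (p : EdgeFamily ι V) : V → V → List ι → Prop
  | nil (a : V) : p.IsWalk a a []
  | cons {a b c : V} {i : ι} {l : List ι} (hne : a ≠ b) (ha : a ∈ p i) (hb : b ∈ p i)
      (h : p.IsWalk b c l) : p.IsWalk a c (i :: l)

/-- An Euler tour of an edge family: a closed walk based at `a` that traverses every index exactly
once. -/
structure IsEulerTour (p : EdgeFamily ι V) (a : V) (l : List ι) : Prop where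
  isWalk : p.IsWalk a a l
  nodup : l.Nodup
  mem : ∀ i, i ∈ l

theorem IsWalk.append (h : p.IsWalk a b l) (h' : p.IsWalk b c m) : p.IsWalk a c (l ++ m) := by
  induction h with
  | nil => exact h'
  | cons hne ha hb _ ih => exact .cons hne ha hb (ih h')

theorem IsWalk.exists_of_append (h : p.IsWalk a c (l ++ m)) :
    ∃ b, p.IsWalk a b l ∧ p.IsWalk b c m := by
  induction l generalizing a with
  | nil => exact ⟨a, .nil a, h⟩
  | cons i l ih =>
    cases h with
    | cons hne ha hb h =>
      obtain ⟨b, hl, hm⟩ := ih h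
      exact ⟨b, .cons hne ha hb hl, hm⟩

theorem IsWalk.mono (hpq : ∀ i, p i ⊆ q i) (h : p.IsWalk a b l) : q.IsWalk a b l := by
  induction h with
  | nil a => exact .nil a
  | cons hne ha hb _ ih => exact .cons hne (hpq _ ha) (hpq _ hb) ih

theorem IsEulerTour.mono (hpq : ∀ i, p i ⊆ q i) (h : p.IsEulerTour a l) : q.IsEulerTour a l :=
  ⟨h.isWalk.mono hpq, h.nodup, h.mem⟩

theorem IsWalk.exists_vertices (h : p.IsWalk a b l) :
    ∃ x : Fin (l.length + 1) → V, x 0 = a ∧ x (Fin.last _) = b ∧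
      ∀ i : Fin l.length, x i.castSucc ≠ x i.succ ∧ x i.castSucc ∈ p (l.get i) ∧
        x i.succ ∈ p (l.get i) := by
  induction h with
  | nil a => exact ⟨fun _ ↦ a, rfl, rfl, fun i ↦ i.elim0⟩
  | @cons a b c i l hne ha hb _ ih =>
    obtain ⟨x, rfl, hlast, hstep⟩ := ih
    exact ⟨Fin.cons a x, rfl, hlast, Fin.cases ⟨hne, ha, hb⟩ hstep⟩

theorem IsEulerTour.isEulerian {V : Type} {p : EdgeFamily ι V} {a : V} [Fintype ι]
    (h : p.IsEulerTour a l) : IsEulerian (univ.val.map p) := by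
  obtain ⟨x, hfirst, hlast, hstep⟩ := h.isWalk.exists_vertices
  refine ⟨l.length, x, p ∘ l.get, ⟨hfirst.trans hlast.symm, hstep⟩, ?_⟩
  have huniv : (l : Multiset ι) = univ.val :=
    (Multiset.Nodup.ext (Multiset.coe_nodup.2 h.nodup) univ.nodup).2 fun i ↦ by simp [h.mem i]
  rw [walkEdges, ← huniv, Multiset.map_coe, ← List.map_ofFn, List.ofFn_get]

/-- The 2-section of a hypergraph: two distinct vertices are adjacent if some edge contains both. -/
def twoSection (p : EdgeFamily ι V) : SimpleGraph V where
  Adj a b := a ≠ b ∧ ∃ i, a ∈ p i ∧ b ∈ p i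
  symm := ⟨fun _ _ ⟨hne, i, ha, hb⟩ ↦ ⟨hne.symm, i, hb, ha⟩⟩
  loopless := ⟨fun _ h ↦ h.1 rfl⟩

theorem reachable_twoSection (ha : a ∈ p i) (hb : b ∈ p i) : p.twoSection.Reachable a b := by
  by_cases hne : a = b
  · rw [hne]
  · exact SimpleGraph.Adj.reachable ⟨hne, i, ha, hb⟩

theorem mem_supp_of_mem_of_mem (C : p.twoSection.ConnectedComponent) (ha : a ∈ p i) (hb : b ∈ p i)
    (haC : a ∈ C.supp) : b ∈ C.supp :=
  (SimpleGraph.ConnectedComponent.sound (reachable_twoSection hb ha)).trans haC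

theorem IsWalk.exists_perm_isWalk_of_mem (hp : ∀ i, #(p i) = 2) (h : p.IsWalk a a l) (hi : i ∈ l)
    (hc : c ∈ p i) : ∃ l', l'.Perm l ∧ p.IsWalk c c l' := by
  obtain ⟨l₁, l₂, rfl⟩ := List.append_of_mem hi
  obtain ⟨x, h₁, h₂⟩ := h.exists_of_append
  cases h₂ with
  | cons hne hx hy h₂ =>
    rcases (mem_iff_eq_or_eq_of_card_eq_two (hp i) hx hy hne).1 hc with rfl | rfl
    · exact ⟨i :: l₂ ++ l₁, List.perm_append_comm, (h₂.cons hne hx hy).append h₁⟩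
    · refine ⟨l₂ ++ (l₁ ++ [i]), ?_, h₂.append (h₁.append (.cons hne hx hy (.nil _)))⟩
      exact List.perm_append_comm.trans (by simp)

theorem reachable_twoSection_of_preconnected_induce (hp : ∀ i, #(p i) = 2) {B : Set V}
    (hB : (p.twoSection.induce B).Preconnected) (hpq : ∀ i, (p i : Set V) ⊆ B → p i ⊆ q i)
    (ha : a ∈ B) (hb : b ∈ B) : q.twoSection.Reachable a b := by
  have hle : p.twoSection.induce B ≤ q.twoSection.induce B := by
    rintro ⟨x, hx⟩ ⟨y, hy⟩ ⟨hne, i, hxi, hyi⟩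
    have hsub : (p i : Set V) ⊆ B := fun v hv ↦ by
      rcases (mem_iff_eq_or_eq_of_card_eq_two (hp i) hxi hyi hne).1 hv with rfl | rfl <;> assumption
    exact ⟨hne, i, hpq i hsub hxi, hpq i hsub hyi⟩
  exact (hB.mono hle ⟨a, ha⟩ ⟨b, hb⟩).map (SimpleGraph.Embedding.induce B).toHom

/-- A strict trail of maximum length among all strict trails, with any endpoints. -/
structure IsLongestTrail (p : EdgeFamily ι V) (a b : V) (l : List ι) : Prop where
  isWalk : p.IsWalk a b l
  nodup : l.Nodup
  length_le : ∀ ⦃c d m⦄, p.IsWalk c d m → m.Nodup → m.length ≤ l.length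

theorem exists_isLongestTrail [Finite ι] [Nonempty V] (p : EdgeFamily ι V) :
    ∃ a b l, p.IsLongestTrail a b l := by
  classical
  have := Fintype.ofFinite ι
  have hnodup : {l : List ι | l.Nodup}.Finite :=
    Set.finite_coe_iff.1 (inferInstanceAs (Finite {l : List ι // l.Nodup}))
  have hfin : {l : List ι | l.Nodup ∧ ∃ a b, p.IsWalk a b l}.Finite :=
    hnodup.subset fun l hl ↦ hl.1
  obtain ⟨l, ⟨hl, a, b, h⟩, hmax⟩ := hfin.exists_maximalFor List.length _
    ⟨[], List.nodup_nil, Classical.arbitrary V, _, .nil _⟩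
  refine ⟨a, b, l, h, hl, fun c d m hm hnd ↦ ?_⟩
  by_contra! hlt
  exact hlt.not_ge (hmax ⟨hnd, c, d, hm⟩ hlt.le)

theorem IsLongestTrail.mem_of_mem (h : p.IsLongestTrail a b l) (hi : 1 < #(p i)) (ha : a ∈ p i) :
    i ∈ l := by
  by_contra hil
  obtain ⟨c, hc, hca⟩ := exists_mem_ne hi a
  have := h.length_le (h.isWalk.cons hca hc ha) (h.nodup.cons hil)
  grind

theorem IsLongestTrail.mem_of_mem_of_mem (h : p.IsLongestTrail a a l) (hp : ∀ i, #(p i) = 2)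
    {j : ι} (hj : j ∈ l) (hcj : c ∈ p j) (hci : c ∈ p i) : i ∈ l := by
  obtain ⟨l', hperm, hl'⟩ := h.isWalk.exists_perm_isWalk_of_mem hp hj hcj
  have hlongest : p.IsLongestTrail c c l' :=
    ⟨hl', hperm.nodup_iff.2 h.nodup, hperm.length_eq ▸ h.length_le⟩
  exact hperm.mem_iff.1 (hlongest.mem_of_mem (by simp [hp]) hci)

theorem IsLongestTrail.mem_of_reachable (h : p.IsLongestTrail a a l) (hp : ∀ i, #(p i) = 2)
    {j : ι} (hj : j ∈ l) (hbj : b ∈ p j) (hbc : p.twoSection.Reachable b c) (hci : c ∈ p i) :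
    i ∈ l := by
  obtain ⟨walk⟩ := hbc
  induction walk generalizing j with
  | nil => exact h.mem_of_mem_of_mem hp hj hbj hci
  | cons hadj _ ih =>
    obtain ⟨-, k, hbk, hck⟩ := hadj
    exact ih (h.mem_of_mem_of_mem hp hj hbj hbk) hck hci

variable [DecidableEq V]

/-- The number of edges, counted with multiplicity, that contain `v`. -/
def degree [Fintype ι] (p : EdgeFamily ι V) (v : V) : ℕ := #{i | v ∈ p i}

theorem IsWalk.even_countP_iff (hp : ∀ i, #(p i) = 2) (h : p.IsWalk a b l) (v : V) :
    Even (l.countP (v ∈ p ·)) ↔ (v = a ↔ v = b) := by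
  induction h with
  | nil => simp
  | cons hne ha hb _ ih =>
    have hmem := mem_iff_eq_or_eq_of_card_eq_two (x := v) (hp _) ha hb hne
    rw [List.countP_cons, Nat.even_add, ih]
    grind

theorem degree_eq_countP [Fintype ι] (hl : l.Nodup) (hmem : ∀ i, v ∈ p i → i ∈ l) :
    p.degree v = l.countP (v ∈ p ·) := by
  classical
  rw [List.countP_eq_length_filter, ← List.toFinset_card_of_nodup (hl.filter _), degree]
  congr 1
  ext i
  simpa using hmem i

theorem IsLongestTrail.eq_of_even_degree [Fintype ι] (h : p.IsLongestTrail a b l)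
    (hp : ∀ i, #(p i) = 2) (heven : Even (p.degree a)) : a = b := by
  rw [degree_eq_countP h.nodup fun i ha ↦ h.mem_of_mem (by simp [hp]) ha,
    h.isWalk.even_countP_iff hp] at heven
  exact heven.1 rfl

theorem exists_isEulerTour_of_even_degree [Fintype ι] [Nonempty V] (hp : ∀ i, #(p i) = 2)
    (heven : ∀ v, Even (p.degree v))
    (hconn : ∀ i j, ∀ a ∈ p i, ∀ b ∈ p j, p.twoSection.Reachable a b) :
    ∃ a l, p.IsEulerTour a l := by
  obtain ⟨a, b, l, h⟩ := p.exists_isLongestTrail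
  obtain rfl := h.eq_of_even_degree hp (heven a)
  refine ⟨a, l, h.isWalk, h.nodup, fun i ↦ ?_⟩
  obtain ⟨c, hc⟩ : (p i).Nonempty := card_pos.1 (by simp [hp])
  obtain ⟨d, hd, hdc⟩ := exists_mem_ne (by simp [hp] : 1 < #(p i)) c
  obtain ⟨j, hj⟩ : ∃ j, j ∈ l := by
    have := h.length_le (.cons hdc hd hc (.nil c)) (List.nodup_singleton i)
    exact List.exists_mem_of_length_pos this
  obtain ⟨b, hb⟩ : (p j).Nonempty := card_pos.1 (by simp [hp])
  exact h.mem_of_reachable hp hj hb (hconn j i b hb c hc) hc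

/-- The family obtained by deleting the vertex `f i` from each edge `t i`. -/
def shrink (t : EdgeFamily ι V) (f : ι → V) : EdgeFamily ι V := fun i ↦ (t i).erase (f i)

theorem mem_shrink : v ∈ t.shrink f i ↔ v ≠ f i ∧ v ∈ t i := mem_erase

theorem shrink_subset (t : EdgeFamily ι V) (f : ι → V) (i : ι) : t.shrink f i ⊆ t i :=
  erase_subset _ _

theorem card_shrink {n : ℕ} (ht : #(t i) = n + 1) (hf : f i ∈ t i) : #(t.shrink f i) = n := by
  rw [shrink, card_erase_of_mem hf, ht, Nat.add_sub_cancel]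

section Swap

variable [DecidableEq ι]

/-- Interchanges the roles of `u` and `w` as the vertices deleted from the edges `e₁` and `e₂`. -/
def swapAt (f : ι → V) (e₁ e₂ : ι) (u w : V) : ι → V :=
  update (update f e₁ (Equiv.swap u w (f e₁))) e₂ (Equiv.swap u w (f e₂))

theorem swapAt_left (he : e₁ ≠ e₂) : swapAt f e₁ e₂ u w e₁ = Equiv.swap u w (f e₁) := by
  rw [swapAt, update_of_ne he, update_self]

theorem shrink_swapAt_of_ne (h₁ : i ≠ e₁) (h₂ : i ≠ e₂) :
    t.shrink (swapAt f e₁ e₂ u w) i = t.shrink f i := by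
  rw [shrink, swapAt, update_of_ne h₂, update_of_ne h₁, shrink]

theorem reachable_shrink_swapAt (ht : ∀ i, #(t i) = 3) (hf : ∀ i, f i ∈ t i) {B : Set V}
    (hB : ((t.shrink f).twoSection.induce B).Preconnected)
    (h₁ : ¬ (t.shrink f e₁ : Set V) ⊆ B) (h₂ : ¬ (t.shrink f e₂ : Set V) ⊆ B)
    (ha : a ∈ B) (hb : b ∈ B) :
    (t.shrink (swapAt f e₁ e₂ u w)).twoSection.Reachable a b := by
  refine reachable_twoSection_of_preconnected_induce
    (fun i ↦ card_shrink (ht i) (hf i)) hB (fun i hi ↦ ?_) ha hb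
  have hi₁ : i ≠ e₁ := fun h ↦ h₁ (h ▸ hi)
  have hi₂ : i ≠ e₂ := fun h ↦ h₂ (h ▸ hi)
  rw [shrink_swapAt_of_ne hi₁ hi₂]

end Swap

section Parity

variable [Fintype ι]

theorem even_degree_of_forall_ne [Finite V] (hp : ∀ i, Even #(p i))
    (hne : ∀ v ≠ z, Even (p.degree v)) (v : V) : Even (p.degree v) := by
  have := Fintype.ofFinite V
  have hsum : ∑ v, p.degree v = ∑ i, #(p i) := by
    simpa [bipartiteAbove, bipartiteBelow, degree] using
      sum_card_bipartiteAbove_eq_sum_card_bipartiteBelow (s := univ) (t := univ) fun v i ↦ v ∈ p i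
  have htotal : Even (p.degree z + ∑ v ∈ univ.erase z, p.degree v) := by
    rw [add_sum_erase _ _ (mem_univ z), hsum]
    exact even_sum _ fun i _ ↦ hp i
  obtain rfl | hvz := eq_or_ne v z
  · exact (Nat.even_add.1 htotal).2 (even_sum _ fun v hv ↦ hne v (ne_of_mem_erase hv))
  · exact hne v hvz

theorem even_degree_shrink_update [DecidableEq ι] (hfe : f e ∈ t e) (hv : v ∈ t e) (hne : v ≠ f e)
    (w : V) : Even ((t.shrink (update f e v)).degree w) ↔
      (Even ((t.shrink f).degree w) ↔ w ≠ f e ∧ w ≠ v) := by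
  have hsplit (q : EdgeFamily ι V) :
      q.degree w = (if w ∈ q e then 1 else 0) + #{i ∈ univ.erase e | w ∈ q i} := by
    rw [degree, card_filter, card_filter,
      add_sum_erase univ (if w ∈ q · then 1 else 0) (mem_univ e)]
  have hrest : {i ∈ univ.erase e | w ∈ t.shrink (update f e v) i} =
      {i ∈ univ.erase e | w ∈ t.shrink f i} :=
    filter_congr fun i hi ↦ by rw [shrink, update_of_ne (ne_of_mem_erase hi), shrink]
  rw [hsplit, hsplit (t.shrink f), hrest]
  simp only [mem_shrink, update_self, Nat.even_add]
  grind

/-- A choice of one vertex of each edge whose deletion makes all degrees even. -/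
structure IsEvenDeletion (t : EdgeFamily ι V) (f : ι → V) : Prop where
  mem : ∀ i, f i ∈ t i
  even_degree : ∀ v, Even ((t.shrink f).degree v)

/-- The indices of the edges that contain both `u` and `w`. -/
def pairEdges (t : EdgeFamily ι V) (u w : V) : Finset ι := {i | u ∈ t i ∧ w ∈ t i}

theorem mem_pairEdges : e ∈ t.pairEdges u w ↔ u ∈ t e ∧ w ∈ t e := by simp [pairEdges]

-- Each vertex sees two such edges and each edge sees two vertices, so Hall's condition holds.
theorem exists_injective_mem_pairEdges (ht : ∀ i, #(t i) ≤ 3)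
    (hpair : ∀ v ≠ z, 2 ≤ #(t.pairEdges z v)) :
    ∃ g : {v // v ≠ z} → ι, Injective g ∧ ∀ v : {v // v ≠ z}, g v ∈ t.pairEdges z v := by
  classical
  refine (all_card_le_biUnion_card_iff_exists_injective
    fun v : {v // v ≠ z} ↦ t.pairEdges z v).1 fun S ↦ ?_
  let incident (v : {v // v ≠ z}) (i : ι) : Prop := i ∈ t.pairEdges z v
  have habove (v) (hv : v ∈ S) :
      2 ≤ #(bipartiteAbove incident (S.biUnion fun v ↦ t.pairEdges z v) v) := by
    refine (hpair v v.2).trans (card_le_card fun i hi ↦ ?_)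
    exact (mem_bipartiteAbove _).2 ⟨mem_biUnion.2 ⟨v, hv, hi⟩, hi⟩
  have hbelow (i) (hi : i ∈ S.biUnion fun v ↦ t.pairEdges z v) :
      #(bipartiteBelow incident S i) ≤ 2 := by
    obtain ⟨_, -, hzi⟩ := mem_biUnion.1 hi
    have hcard : #((t i).erase z) ≤ 2 := by
      rw [card_erase_of_mem (mem_pairEdges.1 hzi).1]
      exact Nat.sub_le_of_le_add (ht i)
    refine le_trans ?_ hcard
    refine card_le_card_of_injOn Subtype.val (fun v hv ↦ ?_) Subtype.val_injective.injOn
    exact mem_erase.2 ⟨v.2, (mem_pairEdges.1 ((mem_bipartiteBelow _).1 hv).2).2⟩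
  exact Nat.le_of_mul_le_mul_right (card_mul_le_card_mul incident habove hbelow) two_pos

-- Start with `z` deleted from every edge through `z`. Moving the deleted vertex of the private edge
-- `g v` from `z` to `v` changes the parity at `v` and `z` only.
theorem exists_even_degree_shrink_of_injective [Finite V] (ht : ∀ i, (t i).Nonempty)
    {g : {v // v ≠ z} → ι} (hg : Injective g) (hmem : ∀ v : {v // v ≠ z}, g v ∈ t.pairEdges z v) :
    ∃ f : ι → V, (∀ i, f i ∈ t i) ∧ ∀ v ≠ z, Even ((t.shrink f).degree v) := by
  classical
  have := Fintype.ofFinite V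
  suffices ∀ S : Finset {v // v ≠ z}, ∃ f : ι → V, (∀ i, f i ∈ t i) ∧ (∀ v ∉ S, f (g v) = z) ∧
      ∀ v ∈ S, Even ((t.shrink f).degree v) by
    obtain ⟨f, hf, -, heven⟩ := this univ
    exact ⟨f, hf, fun v hv ↦ heven ⟨v, hv⟩ (mem_univ _)⟩
  intro S
  induction S using Finset.induction_on with
  | empty =>
    choose f hf using ht
    refine ⟨fun i ↦ if z ∈ t i then z else f i, fun i ↦ ?_, fun v _ ↦ ?_, by simp⟩
    · grind
    · exact if_pos (mem_pairEdges.1 (hmem v)).1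
  | insert v S hv ih =>
    obtain ⟨f, hf, hz, heven⟩ := ih
    by_cases hdeg : Even ((t.shrink f).degree v)
    · exact ⟨f, hf, by grind, by grind⟩
    have hflip := even_degree_shrink_update (hf (g v)) (mem_pairEdges.1 (hmem v)).2
      (by simpa [hz v hv] using v.2)
    rw [hz v hv] at hflip
    refine ⟨update f (g v) v, fun i ↦ ?_, fun x hx ↦ ?_, fun x hx ↦ ?_⟩
    · obtain rfl | hi := eq_or_ne i (g v)
      · simpa using (mem_pairEdges.1 (hmem v)).2
      · simpa [hi] using hf i
    · rw [update_of_ne (hg.ne (by grind)), hz x (by grind)]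
    · have := x.2
      grind

theorem exists_isEvenDeletion [Finite V] (ht : ∀ i, #(t i) = 3)
    (hpair : ∀ v ≠ z, 2 ≤ #(t.pairEdges z v)) : ∃ f, t.IsEvenDeletion f := by
  obtain ⟨g, hg, hmem⟩ := exists_injective_mem_pairEdges (fun i ↦ (ht i).le) hpair
  obtain ⟨f, hf, heven⟩ :=
    exists_even_degree_shrink_of_injective (fun i ↦ card_pos.1 (by simp [ht])) hg hmem
  exact ⟨f, hf, even_degree_of_forall_ne (fun i ↦ by simp [card_shrink (ht i) (hf i)]) heven⟩

theorem IsEvenDeletion.isEvenDeletion_swapAt [DecidableEq ι] (hf : t.IsEvenDeletion f) (huw : u ≠ w)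
    (he : e₁ ≠ e₂) (he₁ : e₁ ∈ t.pairEdges u w) (he₂ : e₂ ∈ t.pairEdges u w)
    (h₁ : f e₁ = u ∨ f e₁ = w) (h₂ : f e₂ = u ∨ f e₂ = w) :
    t.IsEvenDeletion (swapAt f e₁ e₂ u w) := by
  rw [mem_pairEdges] at he₁ he₂
  have hmem₁ : Equiv.swap u w (f e₁) ∈ t e₁ := by grind
  have hmem₂ : Equiv.swap u w (f e₂) ∈ t e₂ := by grind
  refine ⟨fun i ↦ ?_, fun v ↦ ?_⟩
  · rw [swapAt, update_apply, update_apply]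
    split_ifs with hi₂ hi₁
    · exact hi₂ ▸ hmem₂
    · exact hi₁ ▸ hmem₁
    · exact hf.mem i
  · have hflip₁ := even_degree_shrink_update (hf.mem e₁) hmem₁ (by grind) v
    have hflip₂ := even_degree_shrink_update (f := update f e₁ (Equiv.swap u w (f e₁)))
      (by simpa [he.symm] using hf.mem e₂) hmem₂ (by grind) v
    have := hf.even_degree v
    rw [swapAt, hflip₂, hflip₁, update_of_ne he.symm]
    grind

theorem IsEvenDeletion.exists_ne_mem_shrink (hf : t.IsEvenDeletion f)
    (hdeg : 0 < (t.shrink f).degree v) (e : ι) : ∃ j, v ∈ t.shrink f j ∧ j ≠ e := by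
  have hone : 1 < (t.shrink f).degree v := by
    obtain ⟨k, hk⟩ := hf.even_degree v
    lia
  obtain ⟨j, hj, hje⟩ := exists_mem_ne hone e
  exact ⟨j, (mem_filter.1 hj).2, hje⟩

theorem eq_or_eq_of_not_reachable (he : e ∈ t.pairEdges u w)
    (hnr : ¬ (t.shrink f).twoSection.Reachable u w) : f e = u ∨ f e = w := by
  rw [mem_pairEdges] at he
  by_contra! h
  exact hnr (reachable_twoSection (mem_shrink.2 ⟨h.1.symm, he.1⟩) (mem_shrink.2 ⟨h.2.symm, he.2⟩))

theorem not_shrink_subset_of_notMem (huw : u ≠ w) (he : e ∈ t.pairEdges u w)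
    (hfe : f e = u ∨ f e = w) {B : Set V} (hu : u ∉ B) (hw : w ∉ B) :
    ¬ (t.shrink f e : Set V) ⊆ B := by
  rw [mem_pairEdges] at he
  intro hsub
  rcases hfe with hfe | hfe
  · exact hw (hsub (mem_shrink.2 ⟨hfe ▸ huw.symm, he.2⟩))
  · exact hu (hsub (mem_shrink.2 ⟨hfe ▸ huw, he.1⟩))

end Parity

section Connectivity

variable [Fintype ι] [Finite V] {C : (t.shrink f).twoSection.ConnectedComponent}

theorem IsEvenDeletion.exists_larger_component_of_deleted_mem_supp (hf : t.IsEvenDeletion f)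
    (ht : ∀ i, #(t i) = 3) (hu : u ∈ C.supp) (hw : w ∉ C.supp) (he : e₁ ≠ e₂)
    (he₁ : e₁ ∈ t.pairEdges u w) (he₂ : e₂ ∈ t.pairEdges u w) (h₁ : f e₁ = u) (h₂ : f e₂ = u) :
    ∃ f', t.IsEvenDeletion f' ∧
      ∃ C' : (t.shrink f').twoSection.ConnectedComponent, C.supp.ncard < C'.supp.ncard := by
  classical
  have huw : u ≠ w := ne_of_mem_of_not_mem hu hw
  have hw₁ : w ∈ t.shrink f e₁ := mem_shrink.2 ⟨h₁ ▸ huw.symm, (mem_pairEdges.1 he₁).2⟩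
  have hw₂ : w ∈ t.shrink f e₂ := mem_shrink.2 ⟨h₂ ▸ huw.symm, (mem_pairEdges.1 he₂).2⟩
  obtain ⟨x, hx, hxw⟩ :=
    exists_mem_ne (by simp [card_shrink (ht e₁) (hf.mem e₁)] : 1 < #(t.shrink f e₁)) w
  have hxC : x ∉ C.supp := fun h ↦ hw (mem_supp_of_mem_of_mem C hx hw₁ h)
  let f' := swapAt f e₁ e₂ u w
  have hf'₁ : f' e₁ = w := (swapAt_left he).trans (by rw [h₁, Equiv.swap_apply_left])
  have hxu : (t.shrink f').twoSection.Reachable x u := reachable_twoSection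
    (mem_shrink.2 ⟨hf'₁ ▸ hxw, (mem_shrink.1 hx).2⟩)
    (mem_shrink.2 ⟨hf'₁ ▸ huw, (mem_pairEdges.1 he₁).1⟩)
  let C' := (t.shrink f').twoSection.connectedComponentMk u
  have hsub : insert x C.supp ⊆ C'.supp := by
    refine Set.insert_subset (SimpleGraph.ConnectedComponent.sound hxu) fun a ha ↦
      SimpleGraph.ConnectedComponent.sound ?_
    exact reachable_shrink_swapAt ht hf.mem C.connected_toSimpleGraph.preconnected
      (fun h ↦ hw (h hw₁)) (fun h ↦ hw (h hw₂)) ha hu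
  refine ⟨f', hf.isEvenDeletion_swapAt huw he he₁ he₂ (.inl h₁) (.inl h₂), C', ?_⟩
  calc C.supp.ncard < (insert x C.supp).ncard := by simp [Set.ncard_insert_of_notMem hxC]
    _ ≤ C'.supp.ncard := Set.ncard_le_ncard hsub

theorem IsEvenDeletion.exists_larger_component_of_deleted_notMem_supp (hf : t.IsEvenDeletion f)
    (ht : ∀ i, #(t i) = 3) (hu : u ∈ C.supp)
    (hcut : ((t.shrink f).twoSection.induce (C.supp \ {u})).Preconnected) (hw : w ∉ C.supp)
    (hdeg : 0 < (t.shrink f).degree w) (he : e₁ ≠ e₂) (he₁ : e₁ ∈ t.pairEdges u w)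
    (he₂ : e₂ ∈ t.pairEdges u w) (h₁ : f e₁ = w) (h₂ : f e₂ = u ∨ f e₂ = w) :
    ∃ f', t.IsEvenDeletion f' ∧
      ∃ C' : (t.shrink f').twoSection.ConnectedComponent, C.supp.ncard < C'.supp.ncard := by
  classical
  have hp i : 1 < #(t.shrink f i) := by simp [card_shrink (ht i) (hf.mem i)]
  have huw : u ≠ w := ne_of_mem_of_not_mem hu hw
  have hu₁ : u ∈ t.shrink f e₁ := mem_shrink.2 ⟨h₁ ▸ huw, (mem_pairEdges.1 he₁).1⟩
  obtain ⟨x, hx, hxu⟩ := exists_mem_ne (hp e₁) u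
  have hxC : x ∈ C.supp := mem_supp_of_mem_of_mem C hu₁ hx hu
  obtain ⟨j, hj, hje₂⟩ := hf.exists_ne_mem_shrink hdeg e₂
  have hje₁ : j ≠ e₁ := fun h ↦ (mem_shrink.1 (h ▸ hj)).1 h₁.symm
  obtain ⟨y, hy, hyw⟩ := exists_mem_ne (hp j) w
  have hyC : y ∉ C.supp := fun h ↦ hw (mem_supp_of_mem_of_mem C hy hj h)
  let f' := swapAt f e₁ e₂ u w
  let C' := (t.shrink f').twoSection.connectedComponentMk w
  have hxC' : x ∈ C'.supp := by
    have hf'₁ : f' e₁ = u := (swapAt_left he).trans (by rw [h₁, Equiv.swap_apply_right])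
    exact SimpleGraph.ConnectedComponent.sound <| reachable_twoSection
      (mem_shrink.2 ⟨hf'₁ ▸ hxu, (mem_shrink.1 hx).2⟩)
      (mem_shrink.2 ⟨hf'₁ ▸ huw.symm, (mem_pairEdges.1 he₁).2⟩)
  have hyC' : y ∈ C'.supp := by
    have hj' : t.shrink f' j = t.shrink f j := shrink_swapAt_of_ne hje₁ hje₂
    exact SimpleGraph.ConnectedComponent.sound (reachable_twoSection (hj' ▸ hy) (hj' ▸ hj))
  have hsub : insert y (insert w (C.supp \ {u})) ⊆ C'.supp := by
    refine Set.insert_subset hyC' (Set.insert_subset rfl fun a ha ↦ ?_)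
    refine (SimpleGraph.ConnectedComponent.sound ?_).trans hxC'
    exact reachable_shrink_swapAt ht hf.mem hcut (fun h ↦ (h hu₁).2 rfl)
      (not_shrink_subset_of_notMem huw he₂ h₂ (fun h ↦ h.2 rfl) fun h ↦ hw h.1) ha ⟨hxC, hxu⟩
  refine ⟨f', hf.isEvenDeletion_swapAt huw he he₁ he₂ (.inr h₁) h₂, C', ?_⟩
  calc C.supp.ncard < (insert y (insert w (C.supp \ {u}))).ncard := by
        rw [Set.ncard_insert_of_notMem (by simp [hyw, hyC]),
          Set.ncard_insert_of_notMem (fun h ↦ hw h.1), Set.ncard_sdiff_singleton_add_one hu]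
        exact Nat.lt_succ_self _
    _ ≤ C'.supp.ncard := Set.ncard_le_ncard hsub

theorem IsEvenDeletion.exists_larger_component (hf : t.IsEvenDeletion f)
    (ht : ∀ i, #(t i) = 3) (hpair : ∀ u w, u ≠ w → 2 ≤ #(t.pairEdges u w)) (hw : w ∉ C.supp)
    (hdeg : 0 < (t.shrink f).degree w) :
    ∃ f', t.IsEvenDeletion f' ∧
      ∃ C' : (t.shrink f').twoSection.ConnectedComponent, C.supp.ncard < C'.supp.ncard := by
  obtain ⟨u, hu, hcut⟩ := exists_mem_supp_preconnected_induce_diff_singleton C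
  obtain ⟨e₁, he₁, e₂, he₂, he⟩ := one_lt_card.1 (hpair u w (ne_of_mem_of_not_mem hu hw))
  have hnr : ¬ (t.shrink f).twoSection.Reachable u w := fun h ↦
    hw ((SimpleGraph.ConnectedComponent.sound h.symm).trans hu)
  have h₁ := eq_or_eq_of_not_reachable he₁ hnr
  have h₂ := eq_or_eq_of_not_reachable he₂ hnr
  by_cases hw₁ : f e₁ = w
  · exact hf.exists_larger_component_of_deleted_notMem_supp ht hu hcut hw hdeg he he₁ he₂ hw₁ h₂
  by_cases hw₂ : f e₂ = w
  · exact hf.exists_larger_component_of_deleted_notMem_supp ht hu hcut hw hdeg he.symm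
      he₂ he₁ hw₂ h₁
  exact hf.exists_larger_component_of_deleted_mem_supp ht hu hw he he₁ he₂
    (h₁.resolve_right hw₁) (h₂.resolve_right hw₂)

theorem exists_isEvenDeletion_forall_reachable [Nonempty V] (ht : ∀ i, #(t i) = 3)
    (hpair : ∀ u w, u ≠ w → 2 ≤ #(t.pairEdges u w)) :
    ∃ f, t.IsEvenDeletion f ∧ ∀ i j, ∀ a ∈ t.shrink f i, ∀ b ∈ t.shrink f j,
      (t.shrink f).twoSection.Reachable a b := by
  let componentSize (fv : (ι → V) × V) : ℕ :=
    ((t.shrink fv.1).twoSection.connectedComponentMk fv.2).supp.ncard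
  obtain ⟨z⟩ := ‹Nonempty V›
  obtain ⟨f₀, hf₀⟩ := exists_isEvenDeletion ht fun v hv ↦ hpair z v hv.symm
  obtain ⟨⟨f, v⟩, hf, hmax⟩ :=
    (Set.toFinite {fv : (ι → V) × V | t.IsEvenDeletion fv.1}).exists_maximalFor componentSize _
      ⟨(f₀, z), hf₀⟩
  have hreach {i a} (ha : a ∈ t.shrink f i) : (t.shrink f).twoSection.Reachable a v := by
    by_contra hav
    obtain ⟨f', hf', C', hlt⟩ := hf.exists_larger_component ht hpair
      (C := (t.shrink f).twoSection.connectedComponentMk v)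
      (fun h ↦ hav (SimpleGraph.ConnectedComponent.exact h))
      (card_pos.2 ⟨i, mem_filter.2 ⟨mem_univ i, ha⟩⟩)
    induction C' using SimpleGraph.ConnectedComponent.ind with
    | h v' => exact hlt.not_ge (hmax (j := (f', v')) hf' hlt.le)
  exact ⟨f, hf, fun i j a ha b hb ↦ (hreach ha).trans (hreach hb).symm⟩

theorem exists_isEulerTour_of_two_le_card_pairEdges [Nonempty V] (ht : ∀ i, #(t i) = 3)
    (hpair : ∀ u w, u ≠ w → 2 ≤ #(t.pairEdges u w)) : ∃ a l, t.IsEulerTour a l := by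
  obtain ⟨f, hf, hreach⟩ := exists_isEvenDeletion_forall_reachable ht hpair
  obtain ⟨a, l, hl⟩ := exists_isEulerTour_of_even_degree
    (fun i ↦ card_shrink (ht i) (hf.mem i)) hf.even_degree hreach
  exact ⟨a, l, hl.mono (shrink_subset t f)⟩

end Connectivity

end EdgeFamily

/-- Let `H` be a 3-uniform hypergraph of order at least 3 in which every pair of
distinct vertices lies together in at least two edges (counted with multiplicity).
Then `H` is eulerian. -/
theorem threeUniform_pairsTwice_eulerian {V : Type} [Fintype V] [DecidableEq V]
    (hord : 3 ≤ Fintype.card V) (E : Multiset (Finset V))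
    (hunif : ∀ f ∈ E, f.card = 3)
    (hpair : ∀ u w : V, u ≠ w →
      2 ≤ Multiset.card (E.filter fun f => u ∈ f ∧ w ∈ f)) :
    IsEulerian E := by
  have : Nonempty V := Fintype.card_pos_iff.1 (by lia)
  let t : EdgeFamily E V := fun i ↦ i.1
  have hE : univ.val.map t = E := Multiset.map_univ_coe E
  have hcard (i) : #(t i) = 3 := hunif _ Multiset.coe_mem
  have hpairEdges (u w) (huw : u ≠ w) : 2 ≤ #(t.pairEdges u w) := by
    have h := hpair u w huw
    rw [← hE, Multiset.filter_map, Multiset.card_map] at h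
    exact h
  obtain ⟨a, l, htour⟩ := EdgeFamily.exists_isEulerTour_of_two_le_card_pairEdges hcard hpairEdges
  exact hE ▸ htour.isEulerian
end

section
/- Every Steiner triple system of order n ≥ 13 is eulerian. -/
/-!
Omit one point `f b` from every block `b` of a Steiner triple system. The remaining pairs form a
graph, and an Euler circuit of that graph is an Euler tour of the triple system. So it suffices to
choose the omitted points in such a way that all degrees are even and all edges lie in one
connected component.

Connectivity comes from two points `y` and `w`. Let `z` be the third point of their block. Hall's
theorem assigns to every point `v` off this block one of the blocks through `v` and `y` or through
`v` and `w`, injectively, and omitting the third point there joins `v` to `y` or `w`. If `y` and `w`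
then have odd degree, both are repaired by rerouting two edges.

All blocks through `z` omit `z` at first. A block `{z, v, v'}` in which at most one of `v` and `v'`
has odd degree can omit that point instead, and `z` itself is then even by the handshake lemma. To
reach a state where no block through `z` has both `v` and `v'` odd, exchange the omitted point of a
block avoiding `{y, w, z}` with another of its points, which flips two parities. If no one or two
such exchanges decrease the number of bad blocks, counting parities leaves at most nine points.
-/

/-! ### Euler circuits -/

section EulerianCircuits

variable {V : Type*} {G : SimpleGraph V}

theorem mem_edges_of_forall_isTrail_length_le {u v x : V} {p : G.Walk u v} (hp : p.IsTrail)
    (hmax : ∀ {w} (q : G.Walk w v), q.IsTrail → q.length ≤ p.length) (hx : G.Adj u x) :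
    s(u, x) ∈ p.edges := by
  by_contra hnot
  have hcons : (SimpleGraph.Walk.cons hx.symm p).IsTrail :=
    (SimpleGraph.Walk.isTrail_cons hx.symm p).2 ⟨hp, by rwa [Sym2.eq_swap]⟩
  have hlen := hmax _ hcons
  rw [SimpleGraph.Walk.length_cons] at hlen
  omega

theorem countP_mem_edges_eq_degree [Fintype V] [DecidableEq V] [DecidableRel G.Adj] {u v w : V}
    {p : G.Walk u v} (hp : p.IsTrail) (hw : ∀ x, G.Adj w x → s(w, x) ∈ p.edges) :
    p.edges.countP (fun e => w ∈ e) = G.degree w := by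
  rw [List.countP_eq_length_filter, ← SimpleGraph.card_incidenceFinset_eq_degree,
    ← List.toFinset_card_of_nodup (hp.edges_nodup.filter _)]
  congr 1
  ext e
  simp only [List.mem_toFinset, List.mem_filter, decide_eq_true_eq,
    SimpleGraph.mem_incidenceFinset, SimpleGraph.incidenceSet, Set.mem_sep_iff]
  refine and_congr_left fun hwe => ⟨fun he => p.edges_subset_edgeSet he, fun he => ?_⟩
  obtain ⟨x, rfl⟩ := Sym2.mem_iff_exists.1 hwe
  exact hw x he

theorem mem_support_of_reachable {u v x y : V} {p : G.Walk u v}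
    (hp : ∀ a b, a ∈ p.support → G.Adj a b → s(a, b) ∈ p.edges) (hxy : G.Reachable x y)
    (hx : x ∈ p.support) : y ∈ p.support := by
  obtain ⟨q⟩ := hxy
  induction q with
  | nil => exact hx
  | cons hadj _ ih => exact ih (p.snd_mem_support_of_mem_edges (hp _ _ hx hadj))

theorem exists_closed_isEulerian [Fintype V] [DecidableEq V] [Nonempty V] [DecidableRel G.Adj]
    (heven : ∀ v, Even (G.degree v))
    (hconn : ∀ a ∈ G.support, ∀ b ∈ G.support, G.Reachable a b) :
    ∃ (u : V) (p : G.Walk u u), p.IsEulerian := by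
  obtain ⟨u, v, p, hp, hmax⟩ :=
    SimpleGraph.Walk.exists_isTrail_forall_isTrail_length_le_length G
  obtain rfl : u = v := by
    by_contra huv
    have hcount := countP_mem_edges_eq_degree hp fun _ =>
      mem_edges_of_forall_isTrail_length_le hp fun q hq => hmax _ _ q hq
    exact ((hp.even_countP_edges_iff u).1 (hcount ▸ heven u) huv).1 rfl
  have hsaturated : ∀ a b, a ∈ p.support → G.Adj a b → s(a, b) ∈ p.edges := by
    intro a b ha hab
    refine (p.rotate_edges a ha).mem_iff.1 ?_
    refine mem_edges_of_forall_isTrail_length_le (hp.rotate ha) (fun q hq => ?_) hab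
    rw [SimpleGraph.Walk.length_rotate]
    exact hmax _ _ q hq
  refine ⟨u, p, hp.isEulerian_of_forall_mem fun e => Sym2.ind (fun a b hab => ?_) e⟩
  have hu : u ∈ G.support := by
    cases p with
    | nil =>
      have htrail : (SimpleGraph.Walk.cons (G.mem_edgeSet.1 hab) .nil).IsTrail := by simp
      simpa using hmax _ _ _ htrail
    | cons hadj _ => exact ⟨_, hadj⟩
  exact hsaturated a b (mem_support_of_reachable hsaturated (hconn u hu a ⟨b, hab⟩)
    p.start_mem_support) hab

theorem even_degree_of_forall_ne [Fintype V] [DecidableRel G.Adj] {z : V}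
    (heven : ∀ v, v ≠ z → Even (G.degree v)) (v : V) : Even (G.degree v) := by
  by_contra hodd
  obtain rfl : v = z := by
    by_contra hv
    exact hodd (heven v hv)
  obtain ⟨w, hw, hwodd⟩ :=
    G.exists_ne_odd_degree_of_exists_odd_degree v (Nat.not_even_iff_odd.1 hodd)
  exact Nat.not_even_iff_odd.2 hwodd (heven w hw)

end EulerianCircuits

theorem isEulerian_map_edges {V : Type} {G : SimpleGraph V} {u : V} (p : G.Walk u u)
    (φ : Sym2 V → Finset V) (hφ : ∀ e ∈ G.edgeSet, ∀ v ∈ e, v ∈ φ e) :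
    IsEulerian (Multiset.ofList (p.edges.map φ)) := by
  refine ⟨p.length, fun i => p.getVert i, fun i => φ s(p.getVert i, p.getVert (i + 1)),
    ⟨by simp, fun i => ?_⟩, ?_⟩
  · have hadj := p.adj_getVert_succ i.2
    simp only [Fin.val_castSucc, Fin.val_succ]
    exact ⟨hadj.ne, hφ _ hadj _ (Sym2.mem_mk_left _ _), hφ _ hadj _ (Sym2.mem_mk_right _ _)⟩
  · refine congrArg Multiset.ofList (List.ext_getElem (by simp) fun i _ _ => ?_)
    simp [SimpleGraph.Walk.getElem_edges]

/-! ### Steiner triple systems -/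

/-- A Steiner triple system, presented by its finite set of blocks. -/
structure SteinerTripleSystem (V : Type*) where
  blocks : Finset (Finset V)
  card_eq_three : ∀ b ∈ blocks, b.card = 3
  existsUnique_block : Pairwise fun u v => ∃! b, b ∈ blocks ∧ u ∈ b ∧ v ∈ b

theorem IsTripleSystem.nodup {V : Type} [DecidableEq V] {E : Multiset (Finset V)}
    (hE : IsTripleSystem E 1) : E.Nodup := by
  obtain ⟨-, hcard, hpair⟩ := hE
  rw [Multiset.nodup_iff_count_le_one]
  intro b
  by_cases hb : b ∈ E
  · obtain ⟨x, y, z, hxy, -, -, rfl⟩ := Finset.card_eq_three.1 (hcard b hb)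
    rw [← hpair x y hxy, ← Multiset.count_filter_of_pos (p := fun f => x ∈ f ∧ y ∈ f) (by simp)]
    exact Multiset.count_le_card _ _
  · simp [hb]

theorem IsTripleSystem.exists_steinerTripleSystem {V : Type} [DecidableEq V]
    {E : Multiset (Finset V)} (hE : IsTripleSystem E 1) :
    ∃ S : SteinerTripleSystem V, S.blocks.val = E := by
  refine ⟨⟨⟨E, hE.nodup⟩, hE.2.1, fun u v huv => ?_⟩, rfl⟩
  obtain ⟨b, hb⟩ := Multiset.card_eq_one.1 (hE.2.2 u v huv)
  have hmem (c : Finset V) : c = b ↔ c ∈ E ∧ u ∈ c ∧ v ∈ c := by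
    rw [← Multiset.mem_singleton, ← hb, Multiset.mem_filter]
  exact ⟨b, (hmem b).1 rfl, fun c hc => (hmem c).2 hc⟩

namespace SteinerTripleSystem

theorem eq_of_mem_of_mem {V : Type*} {S : SteinerTripleSystem V} {u v : V} {b c : Finset V}
    (hb : b ∈ S.blocks) (hc : c ∈ S.blocks) (huv : u ≠ v)
    (hub : u ∈ b) (hvb : v ∈ b) (huc : u ∈ c) (hvc : v ∈ c) : b = c :=
  (S.existsUnique_block huv).unique ⟨hb, hub, hvb⟩ ⟨hc, huc, hvc⟩

variable {V : Type*} [DecidableEq V] (S : SteinerTripleSystem V)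

theorem exists_third (u v : V) :
    ∃ w, (u = v → w = u) ∧ (u ≠ v → w ≠ u ∧ w ≠ v ∧ ({u, v, w} : Finset V) ∈ S.blocks) := by
  by_cases huv : u = v
  · exact ⟨u, fun _ => rfl, fun h => (h huv).elim⟩
  obtain ⟨b, ⟨hb, hu, hv⟩, -⟩ := S.existsUnique_block huv
  have hsub : ({u, v} : Finset V) ⊆ b := Finset.insert_subset hu (Finset.singleton_subset_iff.2 hv)
  obtain ⟨w, hw, rfl⟩ := (Finset.exists_eq_insert_iff (t := b)).2
    ⟨hsub, by rw [Finset.card_pair huv, S.card_eq_three b hb]⟩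
  simp only [Finset.mem_insert, Finset.mem_singleton, not_or] at hw
  refine ⟨w, fun h => (huv h).elim, fun _ => ⟨hw.1, hw.2, ?_⟩⟩
  rwa [Finset.insert_comm w, Finset.pair_comm w] at hb

/-- The operation of the Steiner quasigroup: the third point of the block through `u ≠ v`,
completed by `third u u = u` so that `third u` is an involution of `V`. -/
noncomputable def third (u v : V) : V := (S.exists_third u v).choose

/-- The block through two distinct points (the junk value for `u = v` is `{u}`). -/
noncomputable def block (u v : V) : Finset V := {u, v, S.third u v}

@[simp]
theorem third_self (u : V) : S.third u u = u := (S.exists_third u u).choose_spec.1 rfl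

section
variable {S} {u v x : V} {b : Finset V}

theorem third_ne_left (huv : u ≠ v) : S.third u v ≠ u :=
  ((S.exists_third u v).choose_spec.2 huv).1

theorem third_ne_right (huv : u ≠ v) : S.third u v ≠ v :=
  ((S.exists_third u v).choose_spec.2 huv).2.1

theorem block_mem (huv : u ≠ v) : S.block u v ∈ S.blocks :=
  ((S.exists_third u v).choose_spec.2 huv).2.2

theorem mem_block : x ∈ S.block u v ↔ x = u ∨ x = v ∨ x = S.third u v := by simp [block]

variable (S u v) in
@[simp]
theorem left_mem_block : u ∈ S.block u v := by simp [block]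

variable (S u v) in
@[simp]
theorem right_mem_block : v ∈ S.block u v := by simp [block]

variable (S u v) in
@[simp]
theorem third_mem_block : S.third u v ∈ S.block u v := by simp [block]

theorem eq_block (hb : b ∈ S.blocks) (huv : u ≠ v) (hu : u ∈ b) (hv : v ∈ b) :
    b = S.block u v :=
  eq_of_mem_of_mem hb (block_mem huv) huv hu hv (S.left_mem_block u v) (S.right_mem_block u v)

theorem third_eq (hb : b ∈ S.blocks) (hu : u ∈ b) (hv : v ∈ b) (hx : x ∈ b) (huv : u ≠ v)
    (hxu : x ≠ u) (hxv : x ≠ v) : S.third u v = x := by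
  rw [eq_block hb huv hu hv, mem_block] at hx
  exact ((hx.resolve_left hxu).resolve_left hxv).symm

variable (S u v) in
theorem third_comm : S.third u v = S.third v u := by
  obtain rfl | huv := eq_or_ne u v
  · rfl
  · exact third_eq (block_mem huv.symm) (S.right_mem_block v u) (S.left_mem_block v u)
      (S.third_mem_block v u) huv (third_ne_right huv.symm) (third_ne_left huv.symm)

variable (S u v) in
@[simp]
theorem third_third : S.third u (S.third u v) = v := by
  obtain rfl | huv := eq_or_ne u v
  · simp
  · exact third_eq (block_mem huv) (S.left_mem_block u v) (S.third_mem_block u v)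
      (S.right_mem_block u v) (third_ne_left huv).symm huv.symm (third_ne_right huv).symm

variable (S u) in
theorem third_involutive : Function.Involutive (S.third u) := S.third_third u

variable (S v) in
theorem third_left_injective : Function.Injective (S.third · v) := fun x y hxy =>
  (S.third_involutive v).injective (by simpa only [S.third_comm v] using hxy)

variable (S u v) in
theorem block_comm : S.block u v = S.block v u := by
  rw [block, block, S.third_comm u, Finset.insert_comm]

variable (S u v) in
@[simp]
theorem block_third : S.block u (S.third u v) = S.block u v := by
  rw [block, block, third_third, Finset.pair_comm]

theorem third_eq_iff : S.third u v = x ↔ v = S.third u x := by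
  constructor <;> rintro rfl <;> simp

theorem eq_of_mem_block_of_mem (hb : b ∈ S.blocks) (hu : u ∈ b) (hv : v ∉ b)
    (hx : x ∈ S.block u v) (hxb : x ∈ b) : x = u := by
  by_contra hxu
  have huv : u ≠ v := fun h => hv (h ▸ hu)
  have hblock : S.block u v = b :=
    eq_of_mem_of_mem (block_mem huv) hb hxu hx (S.left_mem_block u v) hxb hu
  exact hv (hblock ▸ S.right_mem_block u v)

theorem third_notMem (hb : b ∈ S.blocks) (hu : u ∈ b) (hv : v ∉ b) : S.third u v ∉ b :=
  fun h => third_ne_left (fun huv : u = v => hv (huv ▸ hu))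
    (eq_of_mem_block_of_mem hb hu hv (S.third_mem_block u v) h)

end

/-- The number of blocks through `v`. -/
def replication (v : V) : ℕ := (S.blocks.filter (v ∈ ·)).card

theorem two_mul_replication_add_one [Fintype V] (v : V) :
    2 * S.replication v + 1 = Fintype.card V := by
  have hcount := Finset.card_mul_eq_card_mul (s := Finset.univ.erase v)
    (t := S.blocks.filter (v ∈ ·)) (fun x b => x ∈ b) (m := 1) (n := 2) ?_ ?_
  · rw [Finset.card_erase_of_mem (Finset.mem_univ v), Finset.card_univ] at hcount
    have := Fintype.card_pos_iff.2 ⟨v⟩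
    rw [replication]
    omega
  · intro x hx
    have hvx : v ≠ x := (Finset.ne_of_mem_erase hx).symm
    refine Finset.card_eq_one.2 ⟨S.block v x, Finset.ext fun b => ?_⟩
    simp only [Finset.bipartiteAbove, Finset.mem_filter, Finset.mem_singleton]
    constructor
    · exact fun h => eq_block h.1.1 hvx h.1.2 h.2
    · rintro rfl
      exact ⟨⟨block_mem hvx, S.left_mem_block v x⟩, S.right_mem_block v x⟩
  · intro b hb
    obtain ⟨hb, hv⟩ := Finset.mem_filter.1 hb
    have hbelow : (Finset.univ.erase v).bipartiteBelow (fun x b => x ∈ b) b = b.erase v := by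
      ext x
      simp [Finset.bipartiteBelow]
    rw [hbelow, Finset.card_erase_of_mem hv, S.card_eq_three b hb]

/-! ### Selectors -/

/-- A choice, for each block `b`, of a point `f b` to be omitted from it (only the values of `f` on
blocks matter). -/
def IsSelector (f : Finset V → V) : Prop := ∀ b ∈ S.blocks, f b ∈ b

/-- The graph whose edges are the pairs `b \ {f b}` left over by a selector `f`. -/
def omitGraph (f : Finset V → V) : SimpleGraph V where
  Adj u v := u ≠ v ∧ f (S.block u v) = S.third u v
  symm := ⟨fun u v h => ⟨h.1.symm, by rw [S.block_comm, h.2, S.third_comm]⟩⟩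
  loopless := ⟨fun _ h => h.1 rfl⟩

section
variable {S} {f g : Finset V → V} {u v : V}

noncomputable instance : DecidableRel (S.omitGraph f).Adj := fun u v =>
  inferInstanceAs (Decidable (u ≠ v ∧ f (S.block u v) = S.third u v))

theorem adj_third_of_mem {b : Finset V} (hb : b ∈ S.blocks) (hv : v ∈ b) (hfb : f b ∈ b)
    (hne : f b ≠ v) :
    S.block v (S.third v (f b)) = b ∧ (S.omitGraph f).Adj v (S.third v (f b)) := by
  have hblock : S.block v (S.third v (f b)) = b := by
    rw [block_third, ← eq_block hb hne.symm hv hfb]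
  exact ⟨hblock, (third_ne_left hne.symm).symm, by rw [hblock, third_third]⟩

theorem adj_third_of_apply_block_eq_left (huv : u ≠ v) (h : f (S.block u v) = u) :
    (S.omitGraph f).Adj v (S.third u v) := by
  have hadj := (adj_third_of_mem (f := f) (block_mem huv) (S.right_mem_block u v)
    (by simp [h]) (by rwa [h])).2
  rwa [h, third_comm] at hadj

theorem eq_of_adj_of_block_eq {x : V} (hv : (S.omitGraph f).Adj u v)
    (hx : (S.omitGraph f).Adj u x) (h : S.block u v = S.block u x) : v = x := by
  rw [← S.third_third u v, ← hv.2, h, hx.2, third_third]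

theorem not_adj_third_of_adj (h : (S.omitGraph f).Adj u v) : ¬(S.omitGraph f).Adj u (S.third u v) :=
  fun h' => third_ne_right h.1 (eq_of_adj_of_block_eq h' h (S.block_third u v))

theorem degree_omitGraph_add_card [Fintype V] (hf : S.IsSelector f) (v : V) :
    (S.omitGraph f).degree v + (S.blocks.filter (f · = v)).card = S.replication v := by
  have hdegree : (S.omitGraph f).degree v =
      ((S.blocks.filter (v ∈ ·)).filter (f · ≠ v)).card := by
    refine Finset.card_bij (fun x _ => S.block v x) (fun x hx => ?_) (fun x hx y hy hxy => ?_)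
      fun b hb => ?_
    · obtain ⟨hvx, hfx⟩ := (SimpleGraph.mem_neighborFinset _ _ _).1 hx
      simp only [Finset.mem_filter]
      exact ⟨⟨block_mem hvx, S.left_mem_block v x⟩, hfx ▸ third_ne_left hvx⟩
    · rw [SimpleGraph.mem_neighborFinset] at hx hy
      exact eq_of_adj_of_block_eq hx hy hxy
    · simp only [Finset.mem_filter] at hb
      obtain ⟨⟨hb, hv⟩, hne⟩ := hb
      obtain ⟨hblock, hadj⟩ := adj_third_of_mem hb hv (hf b hb) hne
      exact ⟨_, (SimpleGraph.mem_neighborFinset _ _ _).2 hadj, hblock⟩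
  have homitted : S.blocks.filter (f · = v) = (S.blocks.filter (v ∈ ·)).filter (f · = v) := by
    rw [Finset.filter_filter]
    refine Finset.filter_congr fun b hb => ⟨fun h => ⟨h ▸ hf b hb, h⟩, And.right⟩
  rw [hdegree, homitted, add_comm, Finset.card_filter_add_card_filter_not, replication]

theorem degree_omitGraph_congr [Fintype V] (hf : S.IsSelector f) (hg : S.IsSelector g)
    (hfg : ∀ b ∈ S.blocks, v ∈ b → f b = g b) :
    (S.omitGraph f).degree v = (S.omitGraph g).degree v := by
  have homitted : S.blocks.filter (f · = v) = S.blocks.filter (g · = v) :=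
    Finset.filter_congr fun b hb =>
      ⟨fun h => (hfg b hb (h ▸ hf b hb)).symm.trans h,
        fun h => (hfg b hb (h ▸ hg b hb)).trans h⟩
  have hdegf := degree_omitGraph_add_card hf v
  have hdegg := degree_omitGraph_add_card hg v
  rw [homitted] at hdegf
  omega

theorem IsSelector.update (hf : S.IsSelector f) {b : Finset V} {q : V} (hq : q ∈ b) :
    S.IsSelector (Function.update f b q) := by
  intro c hc
  obtain rfl | hcb := eq_or_ne c b
  · rwa [Function.update_self]
  · rw [Function.update_of_ne hcb]
    exact hf c hc

theorem degree_omitGraph_update_add [Fintype V] (hf : S.IsSelector f) {b : Finset V}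
    (hb : b ∈ S.blocks) {q : V} (hq : q ∈ b) (v : V) :
    (S.omitGraph (Function.update f b q)).degree v + (if q = v then 1 else 0) =
      (S.omitGraph f).degree v + (if f b = v then 1 else 0) := by
  have hdeg := degree_omitGraph_add_card hf v
  have hdeg' := degree_omitGraph_add_card (hf.update hq) v
  have hrest : ∑ c ∈ S.blocks.erase b, (if Function.update f b q c = v then 1 else 0) =
      ∑ c ∈ S.blocks.erase b, if f c = v then 1 else 0 :=
    Finset.sum_congr rfl fun c hc => by rw [Function.update_of_ne (Finset.ne_of_mem_erase hc)]
  rw [Finset.card_filter, ← Finset.add_sum_erase _ _ hb] at hdeg hdeg'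
  rw [hrest, Function.update_self] at hdeg'
  omega

end

/-- The map sending a pair `s(u, v)` of points to the block through `u` and `v`. -/
noncomputable def edgeBlock : Sym2 V → Finset V := Sym2.lift ⟨S.block, S.block_comm⟩

@[simp]
theorem edgeBlock_mk (u v : V) : S.edgeBlock s(u, v) = S.block u v := rfl

section
variable {S} {f : Finset V → V}

theorem mem_iff_mem_edgeBlock_and_ne {e : Sym2 V} (he : e ∈ (S.omitGraph f).edgeSet) (x : V) :
    x ∈ e ↔ x ∈ S.edgeBlock e ∧ x ≠ f (S.edgeBlock e) := by
  induction e with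
  | _ u v =>
    obtain ⟨huv, hfuv⟩ := (S.omitGraph f).mem_edgeSet.1 he
    rw [edgeBlock_mk, hfuv, Sym2.mem_iff, mem_block]
    have hu := third_ne_left (S := S) huv
    have hv := third_ne_right (S := S) huv
    grind

theorem bijOn_edgeBlock (hf : S.IsSelector f) :
    Set.BijOn S.edgeBlock (S.omitGraph f).edgeSet S.blocks := by
  refine ⟨fun e he => ?_, fun e he e' he' hee' => ?_, fun b hb => ?_⟩
  · induction e with
    | _ u v => exact block_mem ((S.omitGraph f).mem_edgeSet.1 he).1
  · ext x
    rw [mem_iff_mem_edgeBlock_and_ne he, mem_iff_mem_edgeBlock_and_ne he', hee']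
  · obtain ⟨v, hv, hne⟩ :=
      Finset.exists_mem_ne (by rw [S.card_eq_three b hb]; norm_num) (f b)
    obtain ⟨hblock, hadj⟩ := adj_third_of_mem hb hv (hf b hb) hne.symm
    exact ⟨s(v, S.third v (f b)), hadj, hblock⟩

end

theorem isEulerian_of_even_of_reachable {V : Type} [Fintype V] [DecidableEq V] [Nonempty V]
    {S : SteinerTripleSystem V} {f : Finset V → V} (hf : S.IsSelector f)
    (heven : ∀ v, Even ((S.omitGraph f).degree v))
    (hconn : ∀ a ∈ (S.omitGraph f).support, ∀ b ∈ (S.omitGraph f).support,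
      (S.omitGraph f).Reachable a b) :
    IsEulerian S.blocks.val := by
  obtain ⟨u, p, hp⟩ := exists_closed_isEulerian heven hconn
  have hbij := bijOn_edgeBlock hf
  have hedges : Multiset.ofList (p.edges.map S.edgeBlock) = S.blocks.val := by
    have hnodup : (p.edges.map S.edgeBlock).Nodup :=
      hp.isTrail.edges_nodup.map_on fun e he e' he' =>
        hbij.injOn (hp.mem_edges_iff.1 he) (hp.mem_edges_iff.1 he')
    refine (Multiset.Nodup.ext (Multiset.coe_nodup.2 hnodup) S.blocks.nodup).2 fun b => ?_
    rw [Multiset.mem_coe, List.mem_map, Finset.mem_val, ← Finset.mem_coe, ← hbij.image_eq]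
    simp only [hp.mem_edges_iff, Set.mem_image]
  rw [← hedges]
  exact isEulerian_map_edges p S.edgeBlock fun e he v hv =>
    ((mem_iff_mem_edgeBlock_and_ne he v).1 hv).1

/-! ### Toggling -/

/-- The selector obtained from `f` by exchanging the roles of `a` and `x` in the block through them.
If one of the two is omitted there, this flips the parity of the degrees of exactly `a` and `x`. -/
noncomputable def toggle (f : Finset V → V) (a x : V) : Finset V → V :=
  Function.update f (S.block a x) (Equiv.swap a x (f (S.block a x)))

section
variable {S} {f : Finset V → V} {a x : V}

theorem toggle_of_ne {b : Finset V} (hb : b ≠ S.block a x) : S.toggle f a x b = f b :=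
  Function.update_of_ne hb _ _

theorem toggle_apply_block :
    S.toggle f a x (S.block a x) = Equiv.swap a x (f (S.block a x)) :=
  Function.update_self _ _ _

theorem swap_mem_block {q : V} (hq : q ∈ S.block a x) : Equiv.swap a x q ∈ S.block a x := by
  rw [mem_block] at hq ⊢
  grind

theorem IsSelector.toggle (hf : S.IsSelector f) (hax : a ≠ x) :
    S.IsSelector (S.toggle f a x) :=
  hf.update (swap_mem_block (hf _ (block_mem hax)))

theorem even_degree_toggle_iff [Fintype V] (hf : S.IsSelector f) (hax : a ≠ x)
    (homit : f (S.block a x) = a ∨ f (S.block a x) = x) (v : V) :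
    Even ((S.omitGraph (S.toggle f a x)).degree v) ↔
      (Even ((S.omitGraph f).degree v) ↔ v ≠ a ∧ v ≠ x) := by
  have hblock := block_mem (S := S) hax
  have hdeg := degree_omitGraph_update_add hf hblock (swap_mem_block (hf _ hblock)) v
  rw [← toggle] at hdeg
  have hflip : (if Equiv.swap a x (f (S.block a x)) = v then 1 else 0) +
      (if f (S.block a x) = v then 1 else 0) = if v ≠ a ∧ v ≠ x then 0 else 1 := by
    rcases homit with h | h <;> grind [Equiv.swap_apply_left, Equiv.swap_apply_right]
  grind

end

/-- The points `x` that may be toggled with `a` in a block avoiding `L`. -/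
noncomputable def partners [Fintype V] (L : Finset V) (f : Finset V → V) (a : V) : Finset V :=
  {x | x ≠ a ∧ Disjoint (S.block a x) L ∧ (f (S.block a x) = a ∨ f (S.block a x) = x)}

/-- The points `v ≠ z` such that both remaining points `v` and `third z v` of the block through `z`
and `v` have odd degree: the obstruction to restoring even degrees by redefining `f` on the blocks
through `z`. -/
noncomputable def doublyOdd [Fintype V] (z : V) (f : Finset V → V) : Finset V :=
  {v | v ≠ z ∧ ¬Even ((S.omitGraph f).degree v) ∧ ¬Even ((S.omitGraph f).degree (S.third z v))}

section
variable {S} [Fintype V] {L : Finset V} {f : Finset V → V} {a x z : V}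

theorem mem_partners : x ∈ S.partners L f a ↔
    x ≠ a ∧ Disjoint (S.block a x) L ∧ (f (S.block a x) = a ∨ f (S.block a x) = x) := by
  simp [partners]

theorem mem_doublyOdd {v : V} : v ∈ S.doublyOdd z f ↔ v ≠ z ∧
    ¬Even ((S.omitGraph f).degree v) ∧ ¬Even ((S.omitGraph f).degree (S.third z v)) := by
  simp [doublyOdd]

theorem third_mem_doublyOdd (ha : a ∈ S.doublyOdd z f) : S.third z a ∈ S.doublyOdd z f := by
  obtain ⟨haz, hodd, hodd'⟩ := mem_doublyOdd.1 ha
  exact mem_doublyOdd.2 ⟨third_ne_left haz.symm, hodd', by rwa [third_third]⟩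

theorem notMem_of_mem_partners (hx : x ∈ S.partners L f a) : x ∉ L :=
  Finset.disjoint_left.1 (mem_partners.1 hx).2.1 (S.right_mem_block a x)

theorem card_le_of_partners (hf : S.IsSelector f) (ha : a ∉ L) :
    Fintype.card V ≤ 1 + 2 * L.card + 2 * (S.partners L f a).card := by
  set N := S.partners L f a
  have hcover (x : V) : x ∈ {a} ∪ (L ∪ L.image (S.third a)) ∪ (N ∪ N.image (S.third a)) := by
    have himage (T : Finset V) (hT : S.third a x ∈ T) : x ∈ T.image (S.third a) :=
      Finset.mem_image.2 ⟨_, hT, S.third_third a x⟩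
    simp only [Finset.mem_union, Finset.mem_singleton]
    by_cases hxa : x = a
    · exact .inl (.inl hxa)
    by_cases hdisj : Disjoint (S.block a x) L
    · refine .inr ?_
      rcases mem_block.1 (hf _ (block_mem (Ne.symm hxa))) with h | h | h
      · exact .inl (mem_partners.2 ⟨hxa, hdisj, .inl h⟩)
      · exact .inl (mem_partners.2 ⟨hxa, hdisj, .inr h⟩)
      · refine .inr (himage _ (mem_partners.2 ⟨third_ne_left (Ne.symm hxa), ?_⟩))
        rw [block_third]
        exact ⟨hdisj, .inr h⟩
    · obtain ⟨y, hy, hyL⟩ := Finset.not_disjoint_iff.1 hdisj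
      rcases mem_block.1 hy with rfl | rfl | rfl
      · exact (ha hyL).elim
      · exact .inl (.inr (.inl hyL))
      · exact .inl (.inr (.inr (himage _ hyL)))
  calc Fintype.card V ≤ _ := Finset.card_le_card fun x _ => hcover x
    _ ≤ 1 + (L.card + L.card) + (N.card + N.card) := by
      refine (Finset.card_union_le _ _).trans (add_le_add ((Finset.card_union_le _ _).trans
        (add_le_add (Finset.card_singleton a).le ?_)) ?_) <;>
      exact (Finset.card_union_le _ _).trans (add_le_add_right Finset.card_image_le _)
    _ = 1 + 2 * L.card + 2 * N.card := by ring

theorem toggle_eq_of_mem_partners (hx : x ∈ S.partners L f a) (g : Finset V → V) {b : Finset V}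
    (hb : ¬Disjoint b L) : S.toggle g a x b = g b :=
  toggle_of_ne fun h => hb (h ▸ (mem_partners.1 hx).2.1)

theorem doublyOdd_toggle_ssubset (hf : S.IsSelector f) (hz : z ∈ L) (ha : a ∈ S.doublyOdd z f)
    (hx : x ∈ S.partners L f a)
    (hparity : Even ((S.omitGraph f).degree x) → Even ((S.omitGraph f).degree (S.third z x))) :
    S.doublyOdd z (S.toggle f a x) ⊂ S.doublyOdd z f := by
  have hxz : x ≠ z := fun h => notMem_of_mem_partners hx (h ▸ hz)
  obtain ⟨hxa, -, homit⟩ := mem_partners.1 hx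
  have hparity' := even_degree_toggle_iff hf hxa.symm homit
  have hxz' := third_ne_right (S := S) hxz.symm
  rw [Finset.ssubset_iff_of_subset]
  · refine ⟨a, ha, fun ha' => ?_⟩
    rw [mem_doublyOdd] at ha ha'
    grind
  · intro v hv
    have hinv := S.third_third z
    rw [mem_doublyOdd] at ha hv ⊢
    grind

theorem doublyOdd_toggle_toggle_ssubset (hf : S.IsSelector f) (hz : z ∈ L)
    (ha : a ∈ S.doublyOdd z f) (hx : x ∈ S.partners L f a)
    (hx' : x ∈ S.partners L f (S.third z a)) :
    S.doublyOdd z (S.toggle (S.toggle f a x) (S.third z a) x) ⊂ S.doublyOdd z f := by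
  obtain ⟨hxa, hdisj, homit⟩ := mem_partners.1 hx
  obtain ⟨hxa', -, homit'⟩ := mem_partners.1 hx'
  have haz := (mem_doublyOdd.1 ha).1
  have hblock : S.block (S.third z a) x ≠ S.block a x := by
    intro h
    have hmem : S.third z a ∈ S.block a x := h ▸ S.left_mem_block _ _
    have hline := eq_of_mem_of_mem (block_mem hxa.symm) (block_mem haz.symm)
      (third_ne_right haz.symm) hmem (S.left_mem_block a x) (S.third_mem_block z a)
      (S.right_mem_block z a)
    exact Finset.disjoint_left.1 hdisj (hline ▸ S.left_mem_block z a) hz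
  rw [← toggle_of_ne (f := f) hblock] at homit'
  have hparity := even_degree_toggle_iff hf hxa.symm homit
  have hparity' := even_degree_toggle_iff (hf.toggle hxa.symm) hxa'.symm homit'
  rw [Finset.ssubset_iff_of_subset]
  · refine ⟨a, ha, fun ha' => ?_⟩
    rw [mem_doublyOdd] at ha ha'
    grind
  · intro v hv
    rw [mem_doublyOdd] at ha hv ⊢
    grind

theorem two_mul_card_add_five_le {W : Finset V} (hL : L ∈ S.blocks) (hz : z ∈ L)
    (heven : ∀ v ∈ L, v ≠ z → Even ((S.omitGraph f).degree v)) (ha : a ∈ S.doublyOdd z f)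
    (hWL : Disjoint W L) (hW : ∀ x ∈ W, Even ((S.omitGraph f).degree x) ∧
      ¬Even ((S.omitGraph f).degree (S.third z x))) :
    2 * W.card + 5 ≤ Fintype.card V := by
  obtain ⟨haz, hodd, hodd'⟩ := mem_doublyOdd.1 ha
  have hdisjImage : Disjoint (W.image (S.third z)) {a, S.third z a} := by
    simp only [Finset.disjoint_left, Finset.mem_image, Finset.mem_insert, Finset.mem_singleton]
    rintro _ ⟨x, hx, rfl⟩ (h | h)
    · exact hodd' (third_eq_iff.1 h ▸ (hW x hx).1)
    · exact hodd ((S.third_involutive z).injective h ▸ (hW x hx).1)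
  have hoddRight : ∀ v ∈ W.image (S.third z) ∪ {a, S.third z a},
      v ≠ z ∧ ¬Even ((S.omitGraph f).degree v) := by
    simp only [Finset.mem_union, Finset.mem_image, Finset.mem_insert, Finset.mem_singleton]
    rintro v (⟨x, hx, rfl⟩ | rfl | rfl)
    · have hxz : x ≠ z := fun h => Finset.disjoint_left.1 hWL hx (h ▸ hz)
      exact ⟨third_ne_left hxz.symm, (hW x hx).2⟩
    · exact ⟨haz, hodd⟩
    · exact ⟨third_ne_left haz.symm, hodd'⟩
  have hdisj : Disjoint (W ∪ L) (W.image (S.third z) ∪ {a, S.third z a}) := by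
    refine Finset.disjoint_right.2 fun v hv hvleft => ?_
    obtain ⟨hvz, hvodd⟩ := hoddRight v hv
    exact hvodd ((Finset.mem_union.1 hvleft).elim (fun h => (hW v h).1) fun h => heven v h hvz)
  have htotal := Finset.card_le_univ (W ∪ L ∪ (W.image (S.third z) ∪ {a, S.third z a}))
  rw [Finset.card_union_of_disjoint hdisj, Finset.card_union_of_disjoint hWL,
    Finset.card_union_of_disjoint hdisjImage, Finset.card_pair (third_ne_right haz.symm).symm,
    Finset.card_image_of_injective _ (S.third_involutive z).injective,
    S.card_eq_three L hL] at htotal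
  omega

theorem card_le_nine_of_forall_partners (hf : S.IsSelector f) (hL : L ∈ S.blocks) (hz : z ∈ L)
    (heven : ∀ v ∈ L, v ≠ z → Even ((S.omitGraph f).degree v)) (ha : a ∈ S.doublyOdd z f)
    (hpartners : ∀ x ∈ S.partners L f a ∪ S.partners L f (S.third z a),
      Even ((S.omitGraph f).degree x) ∧ ¬Even ((S.omitGraph f).degree (S.third z x)))
    (hdisj : Disjoint (S.partners L f a) (S.partners L f (S.third z a))) :
    Fintype.card V ≤ 9 := by
  have hnotMem {c : V} (hc : c ∈ S.doublyOdd z f) : c ∉ L := fun hcL =>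
    (mem_doublyOdd.1 hc).2.1 (heven c hcL (mem_doublyOdd.1 hc).1)
  have hcardL := S.card_eq_three L hL
  have hcard := card_le_of_partners hf (hnotMem ha)
  have hcard' := card_le_of_partners hf (hnotMem (third_mem_doublyOdd ha))
  have htotal := two_mul_card_add_five_le hL hz heven ha (Finset.disjoint_left.2 fun x hx =>
    (Finset.mem_union.1 hx).elim notMem_of_mem_partners notMem_of_mem_partners) hpartners
  rw [Finset.card_union_of_disjoint hdisj] at htotal
  omega

theorem exists_doublyOdd_ssubset (hcard : 9 < Fintype.card V) (hf : S.IsSelector f)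
    (hL : L ∈ S.blocks) (hz : z ∈ L)
    (heven : ∀ v ∈ L, v ≠ z → Even ((S.omitGraph f).degree v))
    (hne : (S.doublyOdd z f).Nonempty) :
    ∃ g, S.IsSelector g ∧ (∀ b, ¬Disjoint b L → g b = f b) ∧
      S.doublyOdd z g ⊂ S.doublyOdd z f := by
  obtain ⟨a, ha⟩ := hne
  have ha' := third_mem_doublyOdd ha
  by_cases hsingle : ∃ c ∈ S.doublyOdd z f, ∃ x ∈ S.partners L f c,
      Even ((S.omitGraph f).degree x) → Even ((S.omitGraph f).degree (S.third z x))
  · obtain ⟨c, hc, x, hx, hparity⟩ := hsingle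
    exact ⟨S.toggle f c x, hf.toggle (mem_partners.1 hx).1.symm,
      fun b hb => toggle_eq_of_mem_partners hx f hb, doublyOdd_toggle_ssubset hf hz hc hx hparity⟩
  by_cases hdisj : Disjoint (S.partners L f a) (S.partners L f (S.third z a))
  · refine absurd (card_le_nine_of_forall_partners hf hL hz heven ha (fun x hx => ?_) hdisj)
      hcard.not_ge
    rw [← Classical.not_imp]
    exact fun h => hsingle <| (Finset.mem_union.1 hx).elim (fun hx => ⟨a, ha, x, hx, h⟩)
      fun hx => ⟨_, ha', x, hx, h⟩
  · obtain ⟨x, hx, hx'⟩ := Finset.not_disjoint_iff.1 hdisj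
    exact ⟨_, (hf.toggle (mem_partners.1 hx).1.symm).toggle (mem_partners.1 hx').1.symm,
      fun b hb => (toggle_eq_of_mem_partners hx' _ hb).trans (toggle_eq_of_mem_partners hx f hb),
      doublyOdd_toggle_toggle_ssubset hf hz ha hx hx'⟩

theorem exists_doublyOdd_eq_empty (hcard : 9 < Fintype.card V) (hf : S.IsSelector f)
    (hL : L ∈ S.blocks) (hz : z ∈ L)
    (heven : ∀ v ∈ L, v ≠ z → Even ((S.omitGraph f).degree v)) :
    ∃ g, S.IsSelector g ∧ (∀ b, ¬Disjoint b L → g b = f b) ∧ S.doublyOdd z g = ∅ := by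
  induction hD : S.doublyOdd z f using Finset.strongInduction generalizing f with
  | _ D ih =>
    subst hD
    obtain hempty | hne := (S.doublyOdd z f).eq_empty_or_nonempty
    · exact ⟨f, hf, fun _ _ => rfl, hempty⟩
    obtain ⟨g, hg, hgf, hlt⟩ := exists_doublyOdd_ssubset hcard hf hL hz heven hne
    have heveng : ∀ v ∈ L, v ≠ z → Even ((S.omitGraph g).degree v) := by
      intro v hv hvz
      rw [degree_omitGraph_congr hg hf fun b _ hvb =>
        hgf b (Finset.not_disjoint_iff.2 ⟨v, hvb, hv⟩)]
      exact heven v hv hvz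
    obtain ⟨g', hg', hg'g, hempty⟩ := ih _ hlt hg heveng rfl
    exact ⟨g', hg', fun b hb => (hg'g b hb).trans (hgf b hb), hempty⟩

end

/-! ### Connectivity -/

section
variable {S} {f g : Finset V → V} {u v y w z : V}

theorem exists_injective_block (hyw : y ≠ w) :
    ∃ p : {v // v ∉ S.block y w} → V, (∀ v, p v = y ∨ p v = w) ∧
      Function.Injective fun v => S.block (p v) v := by
  let t (v : {v // v ∉ S.block y w}) : Finset (Finset V) := {S.block y v, S.block w v}
  have hmem_t {v : {v // v ∉ S.block y w}} {b : Finset V} :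
      b ∈ t v ↔ b = S.block y v ∨ b = S.block w v := by simp [t]
  suffices hhall : ∀ s : Finset {v // v ∉ S.block y w}, s.card ≤ (s.biUnion t).card by
    obtain ⟨c, hc, hct⟩ := (Finset.all_card_le_biUnion_card_iff_exists_injective t).1 hhall
    have hcenter (v : {v // v ∉ S.block y w}) : ∃ p, (p = y ∨ p = w) ∧ c v = S.block p v :=
      (hmem_t.1 (hct v)).elim (⟨y, .inl rfl, ·⟩) (⟨w, .inr rfl, ·⟩)
    choose p hp hcp using hcenter
    exact ⟨p, hp, by simpa only [← hcp] using hc⟩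
  intro s
  refine Nat.le_of_mul_le_mul_right (Finset.card_mul_le_card_mul (fun v b => b ∈ t v)
    (m := 2) (n := 2) (fun v hv => ?_) fun b hb => ?_) two_pos
  · have hyv : y ≠ v := ne_of_mem_of_not_mem (S.left_mem_block y w) v.2
    have hdistinct : S.block y v ≠ S.block w v := by
      intro h
      have hw : w ∈ S.block y v := h ▸ S.left_mem_block w v
      have hline := eq_block (block_mem hyv) hyw (S.left_mem_block y v) hw
      exact v.2 (hline.subset (S.right_mem_block y v))
    rw [← Finset.card_pair hdistinct]
    exact Finset.card_le_card fun b hb =>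
      Finset.mem_filter.2 ⟨Finset.mem_biUnion.2 ⟨v, hv, hb⟩, hb⟩
  · obtain ⟨v, -, hb⟩ := Finset.mem_biUnion.1 hb
    obtain ⟨p, hp, hpb, hb⟩ : ∃ p ∈ S.block y w, p ∈ b ∧ b ∈ S.blocks := by
      have hblock {p : V} (hp : p ∈ S.block y w) :=
        block_mem (S := S) (ne_of_mem_of_not_mem hp v.2)
      obtain rfl | rfl := hmem_t.1 hb
      · exact ⟨y, by simp, by simp, hblock (by simp)⟩
      · exact ⟨w, by simp, by simp, hblock (by simp)⟩
    have hsub : (s.bipartiteBelow (fun v b => b ∈ t v) b).map (.subtype _) ⊆ b.erase p := by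
      simp only [Finset.subset_iff, Finset.mem_map, Finset.bipartiteBelow, Finset.mem_filter]
      rintro _ ⟨x, ⟨-, hx⟩, rfl⟩
      refine Finset.mem_erase.2 ⟨(ne_of_mem_of_not_mem hp x.2).symm, ?_⟩
      obtain rfl | rfl := hmem_t.1 hx <;> exact S.right_mem_block _ _
    have hcard := Finset.card_le_card hsub
    rwa [Finset.card_map, Finset.card_erase_of_mem hpb, S.card_eq_three b hb] at hcard

theorem exists_isSelector_forall_adj (hyw : y ≠ w) :
    ∃ f, S.IsSelector f ∧ (∀ b ∈ S.blocks, S.third y w ∈ b → f b = S.third y w) ∧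
      (∀ b ∈ S.blocks, f b ≠ y ∧ f b ≠ w) ∧
      ∀ v ∉ S.block y w, (S.omitGraph f).Adj y v ∨ (S.omitGraph f).Adj w v := by
  have hline := block_mem (S := S) hyw
  obtain ⟨p, hpyw, hinj⟩ := exists_injective_block (S := S) hyw
  have hp (v : {v // v ∉ S.block y w}) : p v ∈ S.block y w ∧ S.third y w ≠ p v := by
    obtain h | h := hpyw v <;> rw [h]
    exacts [⟨by simp, third_ne_left hyw⟩, ⟨by simp, third_ne_right hyw⟩]
  have hchoice (b : Finset V) (hb : b ∈ S.blocks) : ∃ q ∈ b,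
      (S.third y w ∈ b → q = S.third y w) ∧ (q ≠ y ∧ q ≠ w) ∧
      ∀ v, S.block (p v) v = b → q = S.third (p v) v := by
    by_cases hcenter : ∃ v, S.block (p v) v = b
    · obtain ⟨v, rfl⟩ := hcenter
      have hq := third_notMem hline (hp v).1 v.2
      refine ⟨S.third (p v) v, by simp, fun hz => ?_, ⟨?_, ?_⟩, fun v' h => ?_⟩
      · exact ((hp v).2 (eq_of_mem_block_of_mem hline (hp v).1 v.2 hz (by simp))).elim
      · exact (ne_of_mem_of_not_mem (S.left_mem_block y w) hq).symm
      · exact (ne_of_mem_of_not_mem (S.right_mem_block y w) hq).symm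
      · rw [hinj h]
    by_cases hz : S.third y w ∈ b
    · exact ⟨_, hz, fun _ => rfl, ⟨third_ne_left hyw, third_ne_right hyw⟩,
        fun v hv => (hcenter ⟨v, hv⟩).elim⟩
    · obtain ⟨q, hqb, hq⟩ : ∃ q ∈ b, q ∉ ({y, w} : Finset V) :=
        Finset.exists_mem_notMem_of_card_lt_card
          (by rw [Finset.card_pair hyw, S.card_eq_three b hb]; norm_num)
      rw [Finset.mem_insert, Finset.mem_singleton, not_or] at hq
      exact ⟨q, hqb, fun h => (hz h).elim, hq, fun v hv => (hcenter ⟨v, hv⟩).elim⟩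
  have : Nonempty V := ⟨y⟩
  choose! f hf hfz hfyw hfp using hchoice
  refine ⟨f, hf, hfz, hfyw, fun v hv => ?_⟩
  have hpv : p ⟨v, hv⟩ ≠ v := ne_of_mem_of_not_mem (hp _).1 hv
  have hadj : (S.omitGraph f).Adj (p ⟨v, hv⟩) v := ⟨hpv, hfp _ (block_mem hpv) ⟨v, hv⟩ rfl⟩
  obtain h | h := hpyw ⟨v, hv⟩ <;> rw [h] at hadj
  exacts [.inl hadj, .inr hadj]

/-- The edges of `omitGraph f` lying in blocks through `y` or `w` join all points other than
`third y w` to `y`; this is expressed as stability under changes of `f` on all other blocks. -/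
def IsBackbone (S : SteinerTripleSystem V) (y w : V) (f : Finset V → V) : Prop :=
  ∀ g : Finset V → V, (∀ b ∈ S.blocks, y ∈ b ∨ w ∈ b → g b = f b) →
    ∀ v, v ≠ S.third y w → (S.omitGraph g).Reachable y v

theorem reachable_of_forall_reachable_or_adj {G : SimpleGraph V} (hyw : G.Adj y w)
    (hG : ∀ v ∉ S.block y w, G.Reachable y v ∨ G.Adj w v) (hv : v ≠ S.third y w) :
    G.Reachable y v := by
  by_cases hmem : v ∈ S.block y w
  · obtain rfl | rfl | h := mem_block.1 hmem
    exacts [.rfl, hyw.reachable, (hv h).elim]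
  · exact (hG v hmem).elim id fun h => hyw.reachable.trans h.reachable

theorem isBackbone_of_forall_adj (hyw : (S.omitGraph f).Adj y w)
    (hadj : ∀ v ∉ S.block y w, (S.omitGraph f).Adj y v ∨ (S.omitGraph f).Adj w v) :
    S.IsBackbone y w f := by
  intro g hgf v hv
  have hgf_y {t : V} (h : (S.omitGraph f).Adj y t) : (S.omitGraph g).Adj y t :=
    ⟨h.1, (hgf _ (block_mem h.1) (.inl (by simp))).trans h.2⟩
  have hgf_w {t : V} (h : (S.omitGraph f).Adj w t) : (S.omitGraph g).Adj w t :=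
    ⟨h.1, (hgf _ (block_mem h.1) (.inr (by simp))).trans h.2⟩
  exact reachable_of_forall_reachable_or_adj (hgf_y hyw)
    (fun t ht => (hadj t ht).imp (fun h => (hgf_y h).reachable) hgf_w) hv

theorem exists_adj_third_adj_third [Fintype V] (hcard : 3 < Fintype.card V) (hyw : y ≠ w)
    (hadj : ∀ v ∉ S.block y w, (S.omitGraph f).Adj y v ∨ (S.omitGraph f).Adj w v) :
    ∃ v v' u, v ∉ S.block y w ∧ v' ∉ S.block y w ∧ S.third y v = v' ∧ S.third w v' = u ∧
      (S.omitGraph f).Adj y v ∧ (S.omitGraph f).Adj w v' ∧ (S.omitGraph f).Adj y u := by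
  have hline := block_mem (S := S) hyw
  have hnotMem_y {v : V} := third_notMem (v := v) hline (S.left_mem_block y w)
  have hnotMem_w {v : V} := third_notMem (v := v) hline (S.right_mem_block y w)
  have hadj_y {v : V} (hv : v ∉ S.block y w) (h : (S.omitGraph f).Adj w v) :
      (S.omitGraph f).Adj y (S.third w v) :=
    (hadj _ (hnotMem_w hv)).resolve_right (not_adj_third_of_adj h)
  have hadj_w {v : V} (hv : v ∉ S.block y w) (h : (S.omitGraph f).Adj y v) :
      (S.omitGraph f).Adj w (S.third y v) :=
    (hadj _ (hnotMem_y hv)).resolve_left (not_adj_third_of_adj h)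
  obtain ⟨v, hv, hyv⟩ : ∃ v ∉ S.block y w, (S.omitGraph f).Adj y v := by
    obtain ⟨x, -, hx⟩ := Finset.exists_mem_notMem_of_card_lt_card
      (s := S.block y w) (t := Finset.univ) (by rwa [S.card_eq_three _ hline])
    exact (hadj x hx).elim (fun h => ⟨x, hx, h⟩) fun h => ⟨_, hnotMem_w hx, hadj_y hx h⟩
  exact ⟨v, _, _, hv, hnotMem_y hv, rfl, rfl, hyv, hadj_w hv hyv,
    hadj_y (hnotMem_y hv) (hadj_w hv hyv)⟩

theorem block_ne_block (hyw : y ≠ w) (hu : u ∉ S.block y w) (v : V) :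
    S.block y u ≠ S.block w v := by
  intro h
  have hw : w ∈ S.block y u := h ▸ S.left_mem_block w v
  exact hyw (eq_of_mem_block_of_mem (block_mem hyw) (by simp) hu hw (by simp)).symm

/-- The edges `s(y, v)` and `s(w, v')` of `omitGraph f` are rerouted to `s(v, v')` and `s(v', u)`,
so that `v` and `v'` stay joined to `y` along the path `v, v', u, y`. -/
theorem isBackbone_of_reroute {v' : V} (hyw : (S.omitGraph f).Adj y w)
    (hadj : ∀ v ∉ S.block y w, (S.omitGraph f).Adj y v ∨ (S.omitGraph f).Adj w v)
    (hv : v ∉ S.block y w) (hv' : v' ∉ S.block y w)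
    (hvv' : S.third y v = v') (hv'u : S.third w v' = u) (hyv : (S.omitGraph f).Adj y v)
    (hwv' : (S.omitGraph f).Adj w v') (hyu : (S.omitGraph f).Adj y u)
    (hgv : g (S.block y v) = y) (hgv' : g (S.block w v') = w)
    (hgf : ∀ b, b ≠ S.block y v → b ≠ S.block w v' → g b = f b) :
    S.IsBackbone y w g := by
  intro h hhg t htz
  have hhf_y {t : V} (hyt : (S.omitGraph f).Adj y t) (htv : t ≠ v)
      (hne : S.block y t ≠ S.block w v') : (S.omitGraph h).Adj y t :=
    ⟨hyt.1, ((hhg _ (block_mem hyt.1) (.inl (by simp))).trans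
      (hgf _ (fun h => htv (eq_of_adj_of_block_eq hyt hyv h)) hne)).trans hyt.2⟩
  have hhf_w {t : V} (hwt : (S.omitGraph f).Adj w t) (htv' : t ≠ v') : (S.omitGraph h).Adj w t :=
    ⟨hwt.1, ((hhg _ (block_mem hwt.1) (.inr (by simp))).trans (hgf _
      (block_ne_block hyw.1 hv t).symm fun h => htv' (eq_of_adj_of_block_eq hwt hwv' h))).trans
      hwt.2⟩
  have hyw' : (S.omitGraph h).Adj y w :=
    hhf_y hyw (ne_of_mem_of_not_mem (S.right_mem_block y w) hv)
      fun h => hv' (h ▸ S.right_mem_block w v')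
  have hyu' : (S.omitGraph h).Adj y u := by
    refine hhf_y hyu (fun huv => hyw.1 (S.third_left_injective v ?_))
      (block_ne_block hyw.1 (hv'u ▸ third_notMem (block_mem hyw.1) (by simp) hv') v')
    exact hvv'.trans (third_eq_iff.1 (hv'u.trans huv))
  have hv'u' : (S.omitGraph h).Adj v' u := hv'u ▸
    adj_third_of_apply_block_eq_left hwv'.1 ((hhg _ (block_mem hwv'.1) (by simp)).trans hgv')
  have hvv'' : (S.omitGraph h).Adj v v' := hvv' ▸
    adj_third_of_apply_block_eq_left hyv.1 ((hhg _ (block_mem hyv.1) (by simp)).trans hgv)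
  have hyv' := hyu'.reachable.trans hv'u'.symm.reachable
  refine reachable_of_forall_reachable_or_adj hyw' (fun t ht => ?_) htz
  obtain rfl | htv := eq_or_ne t v
  · exact .inl (hyv'.trans hvv''.symm.reachable)
  obtain rfl | htv' := eq_or_ne t v'
  · exact .inl hyv'
  · exact (hadj t ht).imp (fun h => (hhf_y h htv (block_ne_block hyw.1 ht v')).reachable)
      fun h => hhf_w h htv'

theorem exists_even_isBackbone_of_odd [Fintype V] (hcard : 3 < Fintype.card V)
    (hf : S.IsSelector f) (hyw : (S.omitGraph f).Adj y w)
    (hadj : ∀ v ∉ S.block y w, (S.omitGraph f).Adj y v ∨ (S.omitGraph f).Adj w v)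
    (hy : ¬Even ((S.omitGraph f).degree y)) (hw : ¬Even ((S.omitGraph f).degree w)) :
    ∃ g, S.IsSelector g ∧ (∀ b, S.third y w ∈ b → g b = f b) ∧
      Even ((S.omitGraph g).degree y) ∧ Even ((S.omitGraph g).degree w) ∧
      S.IsBackbone y w g := by
  obtain ⟨v, v', u, hv, hv', hvv', hv'u, hyv, hwv', hyu⟩ :=
    exists_adj_third_adj_third hcard hyw.1 hadj
  have hline := block_mem (S := S) hyw.1
  have hu : u ∉ S.block y w := hv'u ▸ third_notMem hline (by simp) hv'
  have hyv'_ne : y ≠ v' := ne_of_mem_of_not_mem (by simp) hv'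
  have hwu_ne : w ≠ u := ne_of_mem_of_not_mem (by simp) hu
  have hblock_y : S.block y v = S.block y v' := hvv' ▸ (S.block_third y v).symm
  have hblock_w : S.block w v' = S.block w u := hv'u ▸ (S.block_third w v').symm
  have hfv' : f (S.block y v') = v' := hblock_y ▸ hyv.2.trans hvv'
  have hfu : f (S.block w u) = u := hblock_w ▸ hwv'.2.trans hv'u
  have hne := block_ne_block hyw.1 hv' u
  have htoggle_u : S.toggle f y v' (S.block w u) = u := (toggle_of_ne hne.symm).trans hfu
  have hz {p x : V} (hp : p ∈ S.block y w) (hx : x ∉ S.block y w) (hpz : S.third y w ≠ p) :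
      S.third y w ∉ S.block p x := fun h =>
    hpz (eq_of_mem_block_of_mem hline hp hx h (by simp))
  have hparity := even_degree_toggle_iff hf hyv'_ne (.inr hfv')
  have hparity' := even_degree_toggle_iff (hf.toggle hyv'_ne) hwu_ne (.inr htoggle_u)
  refine ⟨S.toggle (S.toggle f y v') w u, (hf.toggle hyv'_ne).toggle hwu_ne, fun b hzb => ?_,
    ?_, ?_, isBackbone_of_reroute hyw hadj hv hv' hvv' hv'u hyv hwv' hyu ?_ ?_ fun b hb hb' => ?_⟩
  · rw [toggle_of_ne (ne_of_mem_of_not_mem' hzb (hz (by simp) hu (third_ne_right hyw.1))),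
      toggle_of_ne (ne_of_mem_of_not_mem' hzb (hz (by simp) hv' (third_ne_left hyw.1)))]
  · have := ne_of_mem_of_not_mem (S.left_mem_block y w) hu
    grind
  · have := ne_of_mem_of_not_mem (S.right_mem_block y w) hv'
    grind
  · rw [hblock_y, toggle_of_ne hne, toggle_apply_block, hfv', Equiv.swap_apply_right]
  · rw [hblock_w, toggle_apply_block, htoggle_u, Equiv.swap_apply_right]
  · rw [toggle_of_ne (hblock_w ▸ hb'), toggle_of_ne (hblock_y ▸ hb)]

theorem exists_isSelector_even_isBackbone [Fintype V] (hcard : 3 < Fintype.card V) (hyw : y ≠ w) :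
    ∃ f, S.IsSelector f ∧ (∀ b ∈ S.blocks, S.third y w ∈ b → f b = S.third y w) ∧
      Even ((S.omitGraph f).degree y) ∧ Even ((S.omitGraph f).degree w) ∧
      S.IsBackbone y w f := by
  obtain ⟨f, hf, hfz, hfyw, hadj⟩ := exists_isSelector_forall_adj (S := S) hyw
  have hyw_adj : (S.omitGraph f).Adj y w := ⟨hyw, hfz _ (block_mem hyw) (S.third_mem_block y w)⟩
  have hdegree {p : V} (hp : ∀ b ∈ S.blocks, f b ≠ p) :
      2 * (S.omitGraph f).degree p + 1 = Fintype.card V := by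
    rw [← S.two_mul_replication_add_one p, ← degree_omitGraph_add_card hf,
      Finset.filter_eq_empty_iff.2 hp, Finset.card_empty, add_zero]
  have hdegree_eq : (S.omitGraph f).degree w = (S.omitGraph f).degree y := by
    have := hdegree fun b hb => (hfyw b hb).1
    have := hdegree fun b hb => (hfyw b hb).2
    omega
  by_cases heven : Even ((S.omitGraph f).degree y)
  · exact ⟨f, hf, hfz, heven, hdegree_eq ▸ heven, isBackbone_of_forall_adj hyw_adj hadj⟩
  · obtain ⟨g, hg, hgf, hbackbone⟩ :=
      exists_even_isBackbone_of_odd hcard hf hyw_adj hadj heven (hdegree_eq ▸ heven)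
    exact ⟨g, hg, fun b hb hz => (hgf b hz).trans (hfz b hb hz), hbackbone⟩

/-! ### Even degrees -/

theorem exists_mem_forall_eq_iff_odd [Fintype V] {b : Finset V} (hb : b ∈ S.blocks) (hz : z ∈ b)
    (hempty : S.doublyOdd z f = ∅) :
    ∃ q ∈ b, ∀ v ∈ b, v ≠ z → (q = v ↔ ¬Even ((S.omitGraph f).degree v)) := by
  by_cases hodd : ∃ v ∈ b, v ≠ z ∧ ¬Even ((S.omitGraph f).degree v)
  · obtain ⟨v, hv, hvz, hvodd⟩ := hodd
    refine ⟨v, hv, fun x hx hxz => ?_⟩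
    obtain rfl | hxv := eq_or_ne x v
    · exact iff_of_true rfl hvodd
    · obtain rfl := third_eq hb hz hv hx hvz.symm hxz hxv
      refine iff_of_false hxv.symm fun hxodd => ?_
      exact Finset.notMem_empty v (hempty ▸ mem_doublyOdd.2 ⟨hvz, hvodd, hxodd⟩)
  · exact ⟨z, hz, fun v hv hvz => iff_of_false hvz.symm fun h => hodd ⟨v, hv, hvz, h⟩⟩

theorem exists_isSelector_forall_even [Fintype V] (hf : S.IsSelector f)
    (hfz : ∀ b ∈ S.blocks, z ∈ b → f b = z) (hempty : S.doublyOdd z f = ∅) :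
    ∃ g, S.IsSelector g ∧ (∀ v, Even ((S.omitGraph g).degree v)) ∧
      ∀ b ∈ S.blocks, (z ∈ b → ∀ v ∈ b, v ≠ z → Even ((S.omitGraph f).degree v)) →
        g b = f b := by
  have hchoice (b : Finset V) (hb : b ∈ S.blocks) : ∃ q ∈ b, (z ∉ b → q = f b) ∧
      (z ∈ b → ∀ v ∈ b, v ≠ z → (q = v ↔ ¬Even ((S.omitGraph f).degree v))) := by
    by_cases hz : z ∈ b
    · obtain ⟨q, hq, hodd⟩ := exists_mem_forall_eq_iff_odd hb hz hempty
      exact ⟨q, hq, fun h => (h hz).elim, fun _ => hodd⟩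
    · exact ⟨f b, hf b hb, fun _ => rfl, fun h => (hz h).elim⟩
  have : Nonempty V := ⟨z⟩
  choose! g hg hgf hgodd using hchoice
  refine ⟨g, hg, even_degree_of_forall_ne (z := z) fun v hvz => ?_, fun b hb heven => ?_⟩
  · have hblock := block_mem (S := S) hvz.symm
    have hdeg : (S.omitGraph g).degree v =
        (S.omitGraph (Function.update f (S.block z v) (g (S.block z v)))).degree v := by
      refine degree_omitGraph_congr hg (hf.update (hg _ hblock)) fun b hb hvb => ?_
      obtain rfl | hne := eq_or_ne b (S.block z v)
      · rw [Function.update_self]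
      · rw [Function.update_of_ne hne]
        exact hgf b hb fun hzb => hne (eq_block hb hvz.symm hzb hvb)
    have hupdate := degree_omitGraph_update_add hf hblock (hg _ hblock) v
    have hparity := hgodd _ hblock (by simp) v (by simp) hvz
    rw [← hdeg, hfz _ hblock (by simp)] at hupdate
    grind
  · by_cases hz : z ∈ b
    · rw [hfz b hb hz]
      by_contra hgz
      exact (hgodd b hb hz _ (hg b hb) hgz).1 rfl (heven hz _ (hg b hb) hgz)
    · exact hgf b hb hz

end

theorem isEulerian {V : Type} [Fintype V] (S : SteinerTripleSystem V)
    (hcard : 9 < Fintype.card V) : IsEulerian S.blocks.val := by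
  classical
  obtain ⟨y, w, hyw⟩ := Fintype.exists_pair_of_one_lt_card (by omega : 1 < Fintype.card V)
  have : Nonempty V := ⟨y⟩
  obtain ⟨f, hf, hfz, heveny, hevenw, hbackbone⟩ :=
    exists_isSelector_even_isBackbone (S := S) (by omega) hyw
  have hevenf : ∀ v ∈ S.block y w, v ≠ S.third y w → Even ((S.omitGraph f).degree v) := by
    intro v hv hvz
    obtain rfl | rfl | rfl := mem_block.1 hv
    exacts [heveny, hevenw, (hvz rfl).elim]
  obtain ⟨g, hg, hgf, hempty⟩ :=
    exists_doublyOdd_eq_empty hcard hf (block_mem hyw) (S.third_mem_block y w) hevenf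
  have hgf' {v : V} (hv : v ∈ S.block y w) {b : Finset V} (hvb : v ∈ b) : g b = f b :=
    hgf b (Finset.not_disjoint_iff.2 ⟨v, hvb, hv⟩)
  obtain ⟨h, hh, heven, hhg⟩ := exists_isSelector_forall_even hg
    (fun b hb hz => (hgf' (S.third_mem_block y w) hz).trans (hfz b hb hz)) hempty
  have hreach : ∀ v, v ≠ S.third y w → (S.omitGraph h).Reachable y v := by
    refine hbackbone h fun b hb hmem => ?_
    obtain ⟨p, hp, hpz, hpb⟩ : ∃ p ∈ S.block y w, p ≠ S.third y w ∧ p ∈ b := by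
      obtain hyb | hwb := hmem
      · exact ⟨y, by simp, (third_ne_left hyw).symm, hyb⟩
      · exact ⟨w, by simp, (third_ne_right hyw).symm, hwb⟩
    refine (hhg b hb fun hz v hv hvz => ?_).trans (hgf' hp hpb)
    rw [eq_of_mem_of_mem hb (block_mem hyw) hpz hpb hz hp (S.third_mem_block y w)] at hv
    rw [degree_omitGraph_congr hg hf fun c _ hvc => hgf' hv hvc]
    exact hevenf v hv hvz
  have hsupport : ∀ v ∈ (S.omitGraph h).support, (S.omitGraph h).Reachable y v := by
    intro v hv
    obtain ⟨x, hvx⟩ := (S.omitGraph h).mem_support.1 hv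
    by_cases hvz : v = S.third y w
    · exact (hreach x (hvz ▸ hvx.ne.symm)).trans hvx.symm.reachable
    · exact hreach v hvz
  exact isEulerian_of_even_of_reachable hh heven fun a ha b hb =>
    (hsupport a ha).symm.trans (hsupport b hb)

end SteinerTripleSystem

/-- Every Steiner triple system of order `n ≥ 13` is eulerian. -/
theorem steinerTripleSystem_eulerian_of_card_ge_13 {V : Type} [Fintype V] [DecidableEq V]
    (hord : 13 ≤ Fintype.card V) (E : Multiset (Finset V))
    (hH : IsTripleSystem E 1) :
    IsEulerian E := by
  obtain ⟨S, rfl⟩ := hH.exists_steinerTripleSystem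
  exact S.isEulerian (by omega)
end
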